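/- arXiv:1612.08755 — 11 statements merged into one kernel-verified Lean document; each statement's English description precedes it below -/
import Mathlib

section
/- Let F : ℝ × ℝⁿ → ℝⁿ be a lifted flow on the torus (F₀ = id, F_{s+t} = F_s ∘ F_t, F_t(x+m) = F_t(x)+m for all m ∈ ℤⁿ, jointly continuous) such that for some K ≥ 1 every time-t map F_t is K-Lipschitz. Then there exists a vector ρ ∈ ℝⁿ (the rotation vector of the flow) such that (F_t(q) − q)/t converges to ρ uniformly in q ∈ ℝⁿ as t → +∞. -/
open Filter

/-!
For a semiflow whose displacement `F t x - x` differs from `F t 0` by at most `C`, the orbit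
`t ↦ F t 0` is additive up to the error `C`, because
`F (s + t) 0 - F t 0 = F s (F t 0) - F t 0`. By the Hyers–Ulam theorem it stays within `C` of an
additive map, and local boundedness makes that map linear, `t ↦ t • ρ`. Equivariance under a
relatively dense set of translations, together with a Lipschitz bound uniform in `t`, provides the
constant `C`.
-/

open Bornology Set Topology
open scoped NNReal

section QuasiAdditive

variable {G E : Type*} [AddCommMonoid G] [NormedAddCommGroup E] [NormedSpace ℝ E]

/-- The rescaled values `f (2 ^ n • x) / 2 ^ n`, whose limit in `n` is the additive map
approximating `f` in Hyers' construction. -/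
noncomputable def dyadicAverage (f : G → E) (x : G) (n : ℕ) : E :=
  ((2 : ℝ) ^ n)⁻¹ • f (2 ^ n • x)

theorem dyadicAverage_zero (f : G → E) (x : G) : dyadicAverage f x 0 = f x := by
  simp [dyadicAverage]

theorem dyadicAverage_succ (f : G → E) (x : G) (n : ℕ) :
    dyadicAverage f x (n + 1) = (2 : ℝ)⁻¹ • dyadicAverage f (x + x) n := by
  simp only [dyadicAverage]
  rw [pow_succ', mul_inv, mul_smul, pow_succ, mul_smul, two_nsmul]

variable {f : G → E} {C : ℝ}

theorem norm_dyadicAverage_add_sub_le (hf : ∀ x y, ‖f (x + y) - f x - f y‖ ≤ C) (x y : G) (n : ℕ) :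
    ‖dyadicAverage f (x + y) n - dyadicAverage f x n - dyadicAverage f y n‖ ≤
      ((2 : ℝ) ^ n)⁻¹ * C := by
  simp only [dyadicAverage, smul_add, ← smul_sub]
  rw [norm_smul_of_nonneg (by positivity)]
  gcongr
  exact hf _ _

theorem dist_dyadicAverage_succ_le (hf : ∀ x y, ‖f (x + y) - f x - f y‖ ≤ C) (x : G) (n : ℕ) :
    dist (dyadicAverage f x n) (dyadicAverage f x (n + 1)) ≤ C / 2 / 2 ^ n := by
  have hdiff : dyadicAverage f x (n + 1) - dyadicAverage f x n =
      (2 : ℝ)⁻¹ • (dyadicAverage f (x + x) n - dyadicAverage f x n - dyadicAverage f x n) := by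
    rw [dyadicAverage_succ]
    module
  calc dist (dyadicAverage f x n) (dyadicAverage f x (n + 1))
      = 2⁻¹ * ‖dyadicAverage f (x + x) n - dyadicAverage f x n - dyadicAverage f x n‖ := by
        rw [dist_comm, dist_eq_norm, hdiff, norm_smul_of_nonneg (by norm_num)]
    _ ≤ 2⁻¹ * (((2 : ℝ) ^ n)⁻¹ * C) := by
        gcongr
        exact norm_dyadicAverage_add_sub_le hf x x n
    _ = C / 2 / 2 ^ n := by ring

theorem exists_addMonoidHom_norm_sub_le [CompleteSpace E]
    (hf : ∀ x y, ‖f (x + y) - f x - f y‖ ≤ C) :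
    ∃ g : G →+ E, ∀ x, ‖f x - g x‖ ≤ C := by
  choose g hg using fun x =>
    cauchySeq_tendsto_of_complete (cauchySeq_of_le_geometric_two (dist_dyadicAverage_succ_le hf x))
  have herror : Tendsto (fun n : ℕ => ((2 : ℝ) ^ n)⁻¹ * C) atTop (𝓝 0) := by
    simpa using (tendsto_inv_atTop_zero.comp
      (tendsto_pow_atTop_atTop_of_one_lt one_lt_two)).mul_const C
  have hadd (x y : G) : g (x + y) - g x - g y = 0 :=
    tendsto_nhds_unique (((hg (x + y)).sub (hg x)).sub (hg y))
      (squeeze_zero_norm (norm_dyadicAverage_add_sub_le hf x y) herror)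
  refine ⟨⟨⟨g, by simpa using hadd 0 0⟩, fun x y => ?_⟩, fun x => ?_⟩
  · exact sub_eq_zero.1 ((sub_sub _ _ _).symm.trans (hadd x y))
  · rw [← dist_eq_norm, ← dyadicAverage_zero f x]
    exact dist_le_of_le_geometric_two_of_tendsto₀ (dist_dyadicAverage_succ_le hf x) (hg x)

end QuasiAdditive

section Linearity

variable {E : Type*} [NormedAddCommGroup E] [NormedSpace ℝ E]

theorem addMonoidHom_eq_zero_of_isBounded_range {G : Type*} [AddMonoid G] (g : G →+ E)
    (hg : IsBounded (range g)) : g = 0 := by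
  obtain ⟨M, hM⟩ := hg.exists_norm_le
  ext x
  by_contra hx
  obtain ⟨n, hn⟩ := exists_lt_nsmul (norm_pos_iff.2 hx) M
  refine hn.not_ge ?_
  calc n • ‖g x‖ = ‖g (n • x)‖ := by rw [map_nsmul, RCLike.norm_nsmul ℝ]
    _ ≤ M := hM _ (mem_range_self _)

theorem addMonoidHom_eq_smul_of_isBounded_image_Icc (g : ℝ≥0 →+ E)
    (hg : IsBounded (g '' Icc 0 1)) (t : ℝ≥0) : g t = t • g 1 := by
  let h : ℝ≥0 →+ E := g - (LinearMap.toSpanSingleton ℝ≥0 E (g 1)).toAddMonoidHom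
  have h_apply (s : ℝ≥0) : h s = g s - s • g 1 := rfl
  have h_nat (n : ℕ) : h n = 0 := by
    rw [← nsmul_one, map_nsmul, h_apply, one_smul, sub_self, smul_zero]
  obtain ⟨M, hM⟩ := hg.exists_norm_le
  have hbdd : IsBounded (range h) := by
    refine isBounded_iff_forall_norm_le.2 ⟨M + ‖g 1‖, forall_mem_range.2 fun s => ?_⟩
    obtain ⟨n, r, hr, rfl⟩ : ∃ (n : ℕ) (r : ℝ≥0), r ≤ 1 ∧ s = n + r :=
      ⟨⌊s⌋₊, s - ⌊s⌋₊, tsub_le_iff_left.2 (Nat.lt_floor_add_one s).le,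
        (add_tsub_cancel_of_le (Nat.floor_le zero_le)).symm⟩
    calc ‖h (n + r)‖ = ‖g r - r • g 1‖ := by rw [map_add, h_nat, zero_add, h_apply]
      _ ≤ ‖g r‖ + ‖r • g 1‖ := norm_sub_le _ _
      _ ≤ M + ‖g 1‖ := by
        gcongr
        · exact hM _ (mem_image_of_mem g ⟨zero_le, hr⟩)
        · rw [NNReal.smul_def, norm_smul_of_nonneg r.coe_nonneg]
          exact mul_le_of_le_one_left (norm_nonneg _) hr
  have h_zero : h t = 0 := by rw [addMonoidHom_eq_zero_of_isBounded_range h hbdd]; rfl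
  exact sub_eq_zero.1 h_zero

theorem exists_norm_sub_smul_le_of_quasiadditive [CompleteSpace E] {a : ℝ≥0 → E} {C : ℝ}
    (ha : ∀ s t, ‖a (s + t) - a s - a t‖ ≤ C) (hbdd : IsBounded (a '' Icc 0 1)) :
    ∃ ρ : E, ∀ t, ‖a t - t • ρ‖ ≤ C := by
  obtain ⟨g, hg⟩ := exists_addMonoidHom_norm_sub_le ha
  obtain ⟨M, hM⟩ := hbdd.exists_norm_le
  have hgbdd : IsBounded (g '' Icc 0 1) := by
    refine isBounded_iff_forall_norm_le.2 ⟨M + C, forall_mem_image.2 fun t ht => ?_⟩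
    calc ‖g t‖ ≤ ‖a t‖ + ‖a t - g t‖ := norm_le_norm_add_norm_sub (a t) (g t)
      _ ≤ M + C := add_le_add (hM _ (mem_image_of_mem a ht)) (hg t)
  exact ⟨g 1, fun t => addMonoidHom_eq_smul_of_isBounded_image_Icc g hgbdd t ▸ hg t⟩

end Linearity

section Semiflow

variable {E : Type*} [NormedAddCommGroup E]

theorem norm_displacement_sub_le {f : E → E} {K : ℝ≥0} {L : Set E} {R : ℝ}
    (hlip : LipschitzWith K f) (hper : ∀ x, ∀ m ∈ L, f (x + m) = f x + m)
    (hL : ∀ x, ∃ m ∈ L, ‖x - m‖ ≤ R) (x : E) :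
    ‖f x - x - f 0‖ ≤ (K + 1) * R := by
  obtain ⟨m, hmL, hm⟩ := hL x
  have hfx : f x = f (x - m) + m := by rw [← hper _ m hmL, sub_add_cancel]
  calc ‖f x - x - f 0‖ = ‖(f (x - m) - f 0) - (x - m)‖ := by rw [hfx]; congr 1; abel
    _ ≤ ‖f (x - m) - f 0‖ + ‖x - m‖ := norm_sub_le _ _
    _ ≤ K * ‖x - m‖ + ‖x - m‖ := by
      gcongr
      simpa using hlip.norm_sub_le (x - m) 0
    _ = (K + 1) * ‖x - m‖ := by ring
    _ ≤ (K + 1) * R := by gcongr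

variable [NormedSpace ℝ E]

theorem exists_norm_displacement_sub_smul_le [CompleteSpace E] {F : ℝ → E → E} {C : ℝ}
    (hbdd : IsBounded ((F · 0) '' Icc 0 1))
    (hflow : ∀ s t, 0 ≤ s → 0 ≤ t → F (s + t) = F s ∘ F t)
    (hdisp : ∀ t, 0 ≤ t → ∀ x, ‖F t x - x - F t 0‖ ≤ C) :
    ∃ ρ : E, ∀ t, 0 ≤ t → ∀ x, ‖F t x - x - t • ρ‖ ≤ 2 * C := by
  have hquasi (s t : ℝ≥0) : ‖F (s + t : ℝ≥0) 0 - F s 0 - F t 0‖ ≤ C := by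
    rw [NNReal.coe_add, hflow s t s.2 t.2, Function.comp_apply, sub_right_comm]
    exact hdisp s s.2 (F t 0)
  have hbdd' : IsBounded ((fun t : ℝ≥0 => F t 0) '' Icc 0 1) :=
    hbdd.subset <| image_subset_iff.2 fun t ht => ⟨t, ⟨t.2, mod_cast ht.2⟩, rfl⟩
  obtain ⟨ρ, hρ⟩ := exists_norm_sub_smul_le_of_quasiadditive hquasi hbdd'
  refine ⟨ρ, fun t ht x => ?_⟩
  calc ‖F t x - x - t • ρ‖ ≤ ‖F t x - x - F t 0‖ + ‖F t 0 - t • ρ‖ :=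
        norm_sub_le_norm_sub_add_norm_sub ..
    _ ≤ C + C := add_le_add (hdisp t ht x) (hρ ⟨t, ht⟩)
    _ = 2 * C := (two_mul C).symm

theorem tendstoUniformly_inv_smul_of_norm_sub_smul_le {α : Type*} {u : ℝ → α → E} {ρ : E} {C : ℝ}
    (hu : ∀ᶠ t in atTop, ∀ x, ‖u t x - t • ρ‖ ≤ C) :
    TendstoUniformly (fun t x => t⁻¹ • u t x) (fun _ => ρ) atTop := by
  rw [Metric.tendstoUniformly_iff]
  intro ε hε
  filter_upwards [hu, eventually_gt_atTop 0, eventually_gt_atTop (C / ε)] with t hut ht hCt x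
  calc dist ρ (t⁻¹ • u t x) = t⁻¹ * ‖u t x - t • ρ‖ := by
        rw [dist_comm, dist_eq_norm, ← norm_smul_of_nonneg (inv_nonneg.2 ht.le), smul_sub,
          inv_smul_smul₀ ht.ne']
    _ ≤ t⁻¹ * C := by gcongr; exact hut x
    _ < ε := (inv_mul_lt_iff₀ ht).2 ((div_lt_iff₀ hε).1 hCt)

theorem rotation_vector_exists_general [CompleteSpace E] {F : ℝ → E → E} {K : ℝ≥0} {L : Set E}
    {R : ℝ} (hbdd : IsBounded ((F · 0) '' Icc 0 1))
    (hflow : ∀ s t, 0 ≤ s → 0 ≤ t → F (s + t) = F s ∘ F t)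
    (hper : ∀ t, 0 ≤ t → ∀ x, ∀ m ∈ L, F t (x + m) = F t x + m)
    (hL : ∀ x, ∃ m ∈ L, ‖x - m‖ ≤ R) (hlip : ∀ t, 0 ≤ t → LipschitzWith K (F t)) :
    ∃ ρ : E, TendstoUniformly (fun t q => t⁻¹ • (F t q - q)) (fun _ => ρ) atTop := by
  obtain ⟨ρ, hρ⟩ := exists_norm_displacement_sub_smul_le hbdd hflow fun t ht =>
    norm_displacement_sub_le (hlip t ht) (hper t ht) hL
  exact ⟨ρ, tendstoUniformly_inv_smul_of_norm_sub_smul_le ((eventually_ge_atTop 0).mono hρ)⟩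

end Semiflow

theorem exists_norm_sub_intCast_le_half {ι : Type*} [Fintype ι] (x : ι → ℝ) :
    ∃ m : ι → ℤ, ‖x - fun i => (m i : ℝ)‖ ≤ 1 / 2 :=
  ⟨fun i => round (x i), (pi_norm_le_iff_of_nonneg (by norm_num)).2 fun i => abs_sub_round (x i)⟩

/-- **Rotation vector of a uniformly Lipschitz lifted flow on the torus.**
If `F : ℝ × ℝⁿ → ℝⁿ` is a lifted flow on the torus (`F 0 = id`, `F (s+t) = F s ∘ F t`,
`F t (x + m) = F t x + m` for every integer vector `m`, jointly continuous) and every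
time-`t` map is `K`-Lipschitz for some `K ≥ 1`, then there is a vector `ρ ∈ ℝⁿ` such that
`(F t q - q) / t` converges to `ρ` uniformly in `q` as `t → +∞`. -/
theorem rotation_vector_exists
    (n : ℕ) (F : ℝ → (Fin n → ℝ) → (Fin n → ℝ))
    (hcont : Continuous fun p : ℝ × (Fin n → ℝ) => F p.1 p.2)
    (hF0 : F 0 = id)
    (hflow : ∀ s t : ℝ, F (s + t) = F s ∘ F t)
    (hper : ∀ (t : ℝ) (x : Fin n → ℝ) (m : Fin n → ℤ),
      F t (x + fun i => (m i : ℝ)) = F t x + fun i => (m i : ℝ))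
    (K : NNReal) (hK : 1 ≤ K)
    (hlip : ∀ t : ℝ, LipschitzWith K (F t)) :
    ∃ ρ : Fin n → ℝ,
      TendstoUniformly (fun (t : ℝ) (q : Fin n → ℝ) => t⁻¹ • (F t q - q))
        (fun _ => ρ) atTop := by
  exact rotation_vector_exists_general (L := range fun (m : Fin n → ℤ) i => (m i : ℝ))
    (isCompact_Icc.image (by fun_prop)).isBounded (fun s t _ _ => hflow s t)
    (fun t _ x => forall_mem_range.2 (hper t x))
    (fun x => exists_range_iff.2 (exists_norm_sub_intCast_le_half x)) (fun t _ => hlip t)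
end

section
/- Let F : ℝ × ℝⁿ → ℝⁿ be a lifted flow on the torus such that for some K ≥ 1 every time-t map F_t is K-Lipschitz, let f₁ be the induced time-one homeomorphism of 𝕋ⁿ, and let d : 𝕋ⁿ → ℝⁿ be the continuous displacement function defined by d(π(q)) = F₁(q) − q (well defined since F₁(q+m) = F₁(q)+m). Then for every f₁-invariant Borel probability measure μ on 𝕋ⁿ, the integral ∫_{𝕋ⁿ} d dμ equals the rotation vector ρ of the flow, i.e. the uniform limit of (F_t(q) − q)/t as t → +∞. In particular this integral is the same for all f₁-invariant probability measures. -/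
open MeasureTheory Filter

noncomputable section

/-- The lattice `ℤⁿ` inside `ℝⁿ`. -/
def intLattice (n : ℕ) : AddSubgroup (Fin n → ℝ) where
  carrier := {x | ∀ i, ∃ m : ℤ, x i = (m : ℝ)}
  zero_mem' := fun i => ⟨0, by simp⟩
  add_mem' := by
    intro a b ha hb i
    obtain ⟨ma, hma⟩ := ha i
    obtain ⟨mb, hmb⟩ := hb i
    exact ⟨ma + mb, by simp [hma, hmb]⟩
  neg_mem' := by
    intro a ha i
    obtain ⟨m, hm⟩ := ha i
    exact ⟨-m, by simp [hm]⟩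

/-- The torus `𝕋ⁿ = ℝⁿ/ℤⁿ`, with the quotient (semi)norm/metric. -/
abbrev Torus (n : ℕ) : Type := (Fin n → ℝ) ⧸ intLattice n

/-- The canonical projection `π : ℝⁿ → 𝕋ⁿ`. -/
def torusProj (n : ℕ) : (Fin n → ℝ) → Torus n := QuotientAddGroup.mk' (intLattice n)

instance (priority := 2000) torusMeasurableSpace (n : ℕ) : MeasurableSpace (Torus n) :=
  borel _

instance torusBorelSpace (n : ℕ) : BorelSpace (Torus n) := ⟨rfl⟩

/-! Let `f = f₁` be the time-one map on the torus. The Birkhoff sums of the displacement `d`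
telescope along the lift to `F N q - q`, so its Birkhoff averages converge to the rotation vector.
Invariance of `μ` makes the functions `d ∘ f^[k]` identically distributed; hence the averages are
uniformly integrable, with constant integral `∫ d dμ`, and Vitali's theorem passes to the limit. -/

open Topology ProbabilityTheory

section Birkhoff

variable {X E : Type*} [MeasurableSpace X] [NormedAddCommGroup E] [NormedSpace ℝ E]
  {μ : Measure X} {f : X → X} {g : X → E}

theorem integral_comp_of_measurePreserving {Y : Type*} [MeasurableSpace Y] {ν : Measure Y}
    {φ : X → Y} {h : Y → E} (hφ : MeasurePreserving φ μ ν) (hh : AEStronglyMeasurable h ν) :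
    ∫ x, h (φ x) ∂μ = ∫ y, h y ∂ν := by
  rw [← hφ.map_eq] at hh ⊢
  exact (integral_map hφ.aemeasurable hh).symm

theorem integral_birkhoffAverage_of_ne_zero (hf : MeasurePreserving f μ μ) (hg : Integrable g μ)
    {N : ℕ} (hN : N ≠ 0) : ∫ x, birkhoffAverage ℝ f g N x ∂μ = ∫ x, g x ∂μ := by
  have hcomp (k : ℕ) : Integrable (fun x ↦ g (f^[k] x)) μ :=
    (hf.iterate k).integrable_comp_of_integrable hg
  calc ∫ x, birkhoffAverage ℝ f g N x ∂μ
      = (N : ℝ)⁻¹ • ∑ k ∈ Finset.range N, ∫ x, g (f^[k] x) ∂μ := by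
        simp only [birkhoffAverage, birkhoffSum, integral_smul,
          integral_finsetSum _ fun k _ ↦ hcomp k]
    _ = (N : ℝ)⁻¹ • (N : ℝ) • ∫ x, g x ∂μ := by
        simp only [integral_comp_of_measurePreserving (hf.iterate _) hg.aestronglyMeasurable,
          Finset.sum_const, Finset.card_range, Nat.cast_smul_eq_nsmul]
    _ = ∫ x, g x ∂μ := inv_smul_smul₀ (Nat.cast_ne_zero.mpr hN) _

theorem uniformIntegrable_birkhoffAverage [IsFiniteMeasure μ] {p : ENNReal} (hp : 1 ≤ p)
    (hp' : p ≠ ⊤) (hf : MeasurePreserving f μ μ) (hg : MemLp g p μ) :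
    UniformIntegrable (birkhoffAverage ℝ f g) p μ := by
  borelize E
  have hident (k : ℕ) : IdentDistrib (g ∘ f^[k]) (g ∘ f^[0]) μ μ := by
    refine IdentDistrib.comp_of_aemeasurable ⟨(hf.iterate k).aemeasurable, aemeasurable_id, ?_⟩ ?_
    · exact (hf.iterate k).map_eq.trans Measure.map_id.symm
    · exact (hf.iterate k).map_eq.symm ▸ hg.aestronglyMeasurable.aemeasurable
  have hunif : UniformIntegrable (fun k ↦ g ∘ f^[k]) p μ :=
    MemLp.uniformIntegrable_of_identDistrib (j := 0) hp hp' hg hident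
  convert uniformIntegrable_average hp hunif using 2 with N
  ext x
  simp only [birkhoffAverage, birkhoffSum, Pi.smul_apply, Finset.sum_apply, Function.comp_apply]

theorem integral_eq_of_ae_tendsto_birkhoffAverage [IsFiniteMeasure μ]
    (hf : MeasurePreserving f μ μ) (hg : Integrable g μ) {h : X → E}
    (hlim : ∀ᵐ x ∂μ, Tendsto (fun N : ℕ ↦ birkhoffAverage ℝ f g N x) atTop (𝓝 (h x))) :
    ∫ x, g x ∂μ = ∫ x, h x ∂μ := by
  have hunif : UniformIntegrable (birkhoffAverage ℝ f g) 1 μ :=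
    uniformIntegrable_birkhoffAverage le_rfl ENNReal.one_ne_top hf
      (memLp_one_iff_integrable.mpr hg)
  have hh : MemLp h 1 μ := hunif.memLp_of_ae_tendsto hlim
  have hL1 := tendsto_Lp_finite_of_tendsto_ae le_rfl ENNReal.one_ne_top hunif.1 hh hunif.2.1 hlim
  have hint := tendsto_integral_of_L1' h hh.aestronglyMeasurable
    (.of_forall fun N ↦ memLp_one_iff_integrable.mp (hunif.memLp N)) hL1
  refine tendsto_nhds_unique (tendsto_const_nhds.congr' ?_) hint
  filter_upwards [eventually_ne_atTop 0] with N hN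
  exact (integral_birkhoffAverage_of_ne_zero hf hg hN).symm

end Birkhoff

theorem birkhoffSum_displacement {X E : Type*} [AddCommGroup E] {p : E → X} {G : E → E}
    {f : X → X} {d : X → E} (hGf : Function.Semiconj p G f) (hd : ∀ q, d (p q) = G q - q)
    (N : ℕ) (q : E) : birkhoffSum f d N (p q) = G^[N] q - q := by
  simp only [birkhoffSum, ← hGf.iterate_right _ _, hd, ← Function.iterate_succ_apply' G]
  exact Finset.sum_range_sub (fun k ↦ G^[k] q) N

theorem flow_natCast_eq_iterate {R α : Type*} [AddMonoidWithOne R] {F : R → α → α}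
    (hzero : F 0 = id) (hadd : ∀ s t, F (s + t) = F s ∘ F t) (N : ℕ) : F N = (F 1)^[N] := by
  induction N with
  | zero => rw [Nat.cast_zero, hzero, Function.iterate_zero]
  | succ N ih => rw [Nat.cast_succ, hadd, ih, Function.iterate_succ]

instance torusCompactSpace (n : ℕ) : CompactSpace (Torus n) := by
  have hcover : torusProj n '' Set.Icc 0 1 = Set.univ := by
    refine Set.eq_univ_of_forall fun x ↦ ?_
    obtain ⟨q, rfl⟩ := QuotientAddGroup.mk'_surjective (intLattice n) x
    refine ⟨fun i ↦ Int.fract (q i),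
      ⟨fun i ↦ Int.fract_nonneg _, fun i ↦ (Int.fract_lt_one _).le⟩, ?_⟩
    refine QuotientAddGroup.eq.mpr fun i ↦ ⟨⌊q i⌋, ?_⟩
    rw [Pi.add_apply, Pi.neg_apply, neg_add_eq_sub, Int.self_sub_fract]
  exact ⟨hcover ▸ isCompact_Icc.image continuous_quot_mk⟩

theorem integral_displacement_eq_rotation_vector_general {X E : Type*} [MeasurableSpace X]
    [NormedAddCommGroup E] [NormedSpace ℝ E] [CompleteSpace E] {p : E → X} {G : E → E}
    {f : X → X} {d ρ : X → E} {μ : Measure X} [IsFiniteMeasure μ] (hf : MeasurePreserving f μ μ)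
    (hGf : Function.Semiconj p G f) (hd : ∀ q, d (p q) = G q - q) (hdint : Integrable d μ)
    (hρ : ∀ᵐ x ∂μ, ∃ q, p q = x ∧
      Tendsto (fun N : ℕ ↦ (N : ℝ)⁻¹ • (G^[N] q - q)) atTop (𝓝 (ρ x))) :
    ∫ x, d x ∂μ = ∫ x, ρ x ∂μ := by
  refine integral_eq_of_ae_tendsto_birkhoffAverage hf hdint ?_
  filter_upwards [hρ] with x hx
  obtain ⟨q, rfl, hq⟩ := hx
  simpa only [birkhoffAverage, birkhoffSum_displacement hGf hd] using hq

/-- **The displacement integral of any invariant measure is the rotation vector.**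
Let `F` be a lifted flow on the torus whose time-`t` maps are all `K`-Lipschitz
(`K ≥ 1`), with rotation vector `ρ` (uniform limit of `(F t q - q)/t` as `t → +∞`).
Let `f₁` be the induced time-one homeomorphism of `𝕋ⁿ` and
`d : 𝕋ⁿ → ℝⁿ` the continuous displacement function, `d (π q) = F 1 q - q`.
Then for every `f₁`-invariant Borel probability measure `μ` on `𝕋ⁿ`,
`∫ d dμ = ρ`; in particular this integral is the same for all invariant measures. -/
theorem integral_displacement_eq_rotation_vector
    (n : ℕ) (F : ℝ → (Fin n → ℝ) → (Fin n → ℝ))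
    (hcont : Continuous fun p : ℝ × (Fin n → ℝ) => F p.1 p.2)
    (hF0 : F 0 = id)
    (hflow : ∀ s t : ℝ, F (s + t) = F s ∘ F t)
    (hper : ∀ (t : ℝ) (x : Fin n → ℝ) (m : Fin n → ℤ),
      F t (x + fun i => (m i : ℝ)) = F t x + fun i => (m i : ℝ))
    (K : NNReal) (hK : 1 ≤ K)
    (hlip : ∀ t : ℝ, LipschitzWith K (F t))
    (ρ : Fin n → ℝ)
    (hρ : TendstoUniformly (fun (t : ℝ) (q : Fin n → ℝ) => t⁻¹ • (F t q - q))
        (fun _ => ρ) atTop)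
    (f₁ : Torus n → Torus n) (hf₁cont : Continuous f₁)
    (hf₁ : ∀ q : Fin n → ℝ, f₁ (torusProj n q) = torusProj n (F 1 q))
    (d : Torus n → (Fin n → ℝ)) (hdcont : Continuous d)
    (hd : ∀ q : Fin n → ℝ, d (torusProj n q) = F 1 q - q)
    (μ : Measure (Torus n)) (hμ : IsProbabilityMeasure μ)
    (hinv : ∀ A : Set (Torus n), MeasurableSet A → μ (f₁ ⁻¹' A) = μ A) :
    ∫ x, d x ∂μ = ρ := by
  have hpres : MeasurePreserving f₁ μ μ := ⟨hf₁cont.measurable, Measure.ext fun A hA ↦ by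
    rw [Measure.map_apply hf₁cont.measurable hA, hinv A hA]⟩
  have hdint : Integrable d μ :=
    hdcont.integrable_of_hasCompactSupport (HasCompactSupport.of_compactSpace d)
  have hrot (q : Fin n → ℝ) :
      Tendsto (fun N : ℕ ↦ (N : ℝ)⁻¹ • ((F 1)^[N] q - q)) atTop (𝓝 ρ) := by
    simp only [← flow_natCast_eq_iterate hF0 hflow]
    exact (hρ.tendsto_at q).comp tendsto_natCast_atTop_atTop
  have hlift : ∀ᵐ x ∂μ, ∃ q, torusProj n q = x ∧
      Tendsto (fun N : ℕ ↦ (N : ℝ)⁻¹ • ((F 1)^[N] q - q)) atTop (𝓝 ρ) :=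
    .of_forall fun x ↦ (QuotientAddGroup.mk'_surjective _ x).imp fun q hq ↦ ⟨hq, hrot q⟩
  simpa using integral_displacement_eq_rotation_vector_general hpres
    (fun q ↦ (hf₁ q).symm) hd hdint hlift
end
end

section
/- Let F : ℝ × ℝⁿ → ℝⁿ be a lifted flow on the torus such that for some K ≥ 1 every time-t map F_t is K-Lipschitz, let (f_t) be the induced flow on 𝕋ⁿ, and let ρ ∈ ℝⁿ be the rotation vector (the uniform limit of (F_t(q) − q)/t as t → +∞). Assume ρ is completely irrational, i.e. for every k ∈ ℤⁿ \ {0} one has ⟨k, ρ⟩ ∉ ℤ (equivalently, the translation x ↦ x + π(ρ) of 𝕋ⁿ is minimal). Then there exists a K-Lipschitz homeomorphism h : 𝕋ⁿ → 𝕋ⁿ such that h(f_t(x)) = h(x) + π(tρ) for all t ∈ ℝ and all x ∈ 𝕋ⁿ. -/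
open Filter

noncomputable section

/-
The coordinatewise supremum `H q = sup (F_t q + v - (tρ + v))` over `t ∈ ℝ` and `v ∈ ℤⁿ` is finite
because `F_t q - q - tρ` is bounded; it is `K`-Lipschitz, stays at bounded distance from the
identity and turns `F_t` and the deck transformations into the translations by `tρ` and by `v`. The
vectors `tρ + v` are dense in `ℝⁿ` and the maps `F_t` have `K`-Lipschitz inverses, so, `H` being
proper, `N` preimages of one point which are `δ`-apart yield `N` preimages of every point which are
`δ / (K + ε)` apart. Comparing volumes in a large cube bounds `N`. Hence some fibre has maximal
cardinality, the transferred families exhaust every fibre, and `H` is a covering map of the simply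
connected space `ℝⁿ`: a homeomorphism, which descends to the torus.
-/

open scoped Topology

section Rotation

variable {A E : Type*} [SeminormedAddCommGroup E]

theorem norm_map_succ_nsmul_sub_le [AddMonoid A] {φ : A → E} {D : ℝ}
    (hφ : ∀ s t, ‖φ (s + t) - φ s - φ t‖ ≤ D) (t : A) (j : ℕ) :
    ‖φ ((j + 1) • t) - (j + 1) • φ t‖ ≤ j * D := by
  induction j with
  | zero => simp
  | succ j ih =>
    have hsplit : φ ((j + 1 + 1) • t) - (j + 1 + 1) • φ t =
        (φ ((j + 1) • t + t) - φ ((j + 1) • t) - φ t) + (φ ((j + 1) • t) - (j + 1) • φ t) := by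
      rw [succ_nsmul t, succ_nsmul (φ t)]
      abel
    rw [hsplit]
    refine (norm_add_le_of_le (hφ _ t) ih).trans_eq ?_
    push_cast
    ring

variable [NormedSpace ℝ E] {φ : ℝ → E} {D : ℝ} {ρ : E}

theorem norm_map_sub_smul_le_of_pos (hφ : ∀ s t, ‖φ (s + t) - φ s - φ t‖ ≤ D)
    (hρ : Tendsto (fun t => t⁻¹ • φ t) atTop (𝓝 ρ)) {t : ℝ} (ht : 0 < t) :
    ‖φ t - t • ρ‖ ≤ D := by
  have htimes : Tendsto (fun j : ℕ => ((j : ℝ) + 1) * t) atTop atTop :=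
    (tendsto_atTop_add_const_right _ 1 tendsto_natCast_atTop_atTop).atTop_mul_const ht
  have hlim : Tendsto (fun j : ℕ => φ t - t • ((((j : ℝ) + 1) * t)⁻¹ • φ ((j + 1) * t))) atTop
      (𝓝 (φ t - t • ρ)) :=
    tendsto_const_nhds.sub ((hρ.comp htimes).const_smul t)
  refine le_of_tendsto hlim.norm (Eventually.of_forall fun j => ?_)
  have hj : (0 : ℝ) < j + 1 := by positivity
  have hD : 0 ≤ D := (norm_nonneg _).trans (hφ 0 0)
  have hbound := norm_map_succ_nsmul_sub_le hφ t j
  rw [nsmul_eq_mul, ← Nat.cast_smul_eq_nsmul ℝ (j + 1) (φ t), Nat.cast_succ] at hbound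
  have hrescale : φ t - t • ((((j : ℝ) + 1) * t)⁻¹ • φ ((j + 1) * t)) =
      -((j : ℝ) + 1)⁻¹ • (φ ((j + 1) * t) - ((j : ℝ) + 1) • φ t) := by
    have hcoeff : t * (((j : ℝ) + 1) * t)⁻¹ = ((j : ℝ) + 1)⁻¹ := by field_simp
    rw [smul_smul, hcoeff, neg_smul, smul_sub, inv_smul_smul₀ hj.ne', neg_sub]
  rw [hrescale, neg_smul, norm_neg, norm_smul, norm_inv, Real.norm_of_nonneg hj.le,
    inv_mul_le_iff₀ hj]
  nlinarith

theorem norm_map_sub_smul_le (hφ : ∀ s t, ‖φ (s + t) - φ s - φ t‖ ≤ D)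
    (hρ : Tendsto (fun t => t⁻¹ • φ t) atTop (𝓝 ρ)) (t : ℝ) :
    ‖φ t - t • ρ‖ ≤ 3 * D := by
  have hzero : ‖φ 0‖ ≤ D := by simpa using hφ 0 0
  rcases lt_trichotomy t 0 with ht | rfl | ht
  · have hneg := norm_map_sub_smul_le_of_pos hφ hρ (neg_pos.2 ht)
    have hadd := hφ t (-t)
    have hsplit : φ t - t • ρ =
        φ 0 - (φ (t + -t) - φ t - φ (-t)) - (φ (-t) - (-t) • ρ) := by
      rw [add_neg_cancel, neg_smul]
      abel
    rw [hsplit]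
    linarith [norm_sub_le_of_le (norm_sub_le_of_le hzero hadd) hneg]
  · rw [zero_smul, sub_zero]
    linarith [norm_nonneg (φ 0)]
  · linarith [norm_map_sub_smul_le_of_pos hφ hρ ht, norm_nonneg (φ 0)]

end Rotation

section Lattice

variable {n : ℕ}

theorem mem_intLattice_iff {v : Fin n → ℝ} :
    v ∈ intLattice n ↔ ∃ m : Fin n → ℤ, v = fun i => (m i : ℝ) :=
  Classical.skolem.trans (exists_congr fun _ => funext_iff.symm)

theorem exists_mem_intLattice_norm_sub_le_one (x : Fin n → ℝ) :
    ∃ v ∈ intLattice n, ‖x - v‖ ≤ 1 := by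
  refine ⟨fun i => ⌊x i⌋, fun i => ⟨_, rfl⟩, (pi_norm_le_iff_of_nonneg zero_le_one).2 fun i => ?_⟩
  rw [Pi.sub_apply, Int.self_sub_floor, Real.norm_of_nonneg (Int.fract_nonneg _)]
  exact (Int.fract_lt_one _).le

theorem norm_displacement_sub_le_s3 {G : (Fin n → ℝ) → (Fin n → ℝ)} {K : NNReal}
    (hG : LipschitzWith K G) (hper : ∀ x, ∀ v ∈ intLattice n, G (x + v) = G x + v)
    (x y : Fin n → ℝ) : ‖(G x - x) - (G y - y)‖ ≤ K + 1 := by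
  obtain ⟨v, hv, hle⟩ := exists_mem_intLattice_norm_sub_le_one (x - y)
  rw [sub_sub] at hle
  have hshift : (G x - x) - (G y - y) = (G x - G (y + v)) - (x - (y + v)) := by
    rw [hper y v hv]
    abel
  rw [hshift]
  refine norm_sub_le_of_le ((hG.norm_sub_le _ _).trans ?_) hle
  exact mul_le_of_le_one_right K.2 hle

theorem norm_flow_sub_le {F : ℝ → (Fin n → ℝ) → (Fin n → ℝ)} {K : NNReal} {ρ q₀ : Fin n → ℝ}
    (hflow : ∀ s t, F (s + t) = F s ∘ F t)
    (hper : ∀ t x, ∀ v ∈ intLattice n, F t (x + v) = F t x + v)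
    (hlip : ∀ t, LipschitzWith K (F t))
    (hρ : Tendsto (fun t : ℝ => t⁻¹ • (F t q₀ - q₀)) atTop (𝓝 ρ)) (t : ℝ) (q : Fin n → ℝ) :
    ‖F t q - q - t • ρ‖ ≤ 4 * (K + 1) := by
  have hosc := norm_displacement_sub_le_s3 (hlip t) (hper t) q q₀
  have hbase : ‖F t q₀ - q₀ - t • ρ‖ ≤ 3 * (K + 1) := by
    refine norm_map_sub_smul_le (φ := fun t => F t q₀ - q₀) (fun s t => ?_) hρ t
    have hcocycle : F (s + t) q₀ - q₀ - (F s q₀ - q₀) - (F t q₀ - q₀) =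
        (F s (F t q₀) - F t q₀) - (F s q₀ - q₀) := by
      rw [hflow, Function.comp_apply]
      abel
    rw [hcocycle]
    exact norm_displacement_sub_le_s3 (hlip s) (hper s) _ _
  have hsplit : F t q - q - t • ρ =
      (F t q - q - (F t q₀ - q₀)) + (F t q₀ - q₀ - t • ρ) := by abel
  rw [hsplit]
  linarith [norm_add_le_of_le hosc hbase]

end Lattice

section Semiconjugacy

variable {G κ : Type*}

/-- The coordinatewise supremum `sup_g (F g q - c g)`, the candidate for a semiconjugacy from the
action `F` of the group `G` to its action by the translations `c g`. Suprema of unbounded families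
are zero, so this is only meaningful when `F g q - c g` stays bounded. -/
def supDisplacement (F : G → (κ → ℝ) → (κ → ℝ)) (c : G → κ → ℝ) (q : κ → ℝ) : κ → ℝ :=
  fun i => ⨆ g, (F g q i - c g i)

variable [Fintype κ] {F : G → (κ → ℝ) → (κ → ℝ)} {C : ℝ}

section Bounds

variable {c : G → κ → ℝ}

theorem abs_apply_sub_sub_le (hC : ∀ g q, ‖F g q - q - c g‖ ≤ C) (q : κ → ℝ) (i : κ)
    (g : G) : |F g q i - c g i - q i| ≤ C := by
  have h := (norm_le_pi_norm (F g q - q - c g) i).trans (hC g q)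
  rwa [Pi.sub_apply, Pi.sub_apply, sub_right_comm, Real.norm_eq_abs] at h

theorem bddAbove_range_apply_sub (hC : ∀ g q, ‖F g q - q - c g‖ ≤ C) (q : κ → ℝ)
    (i : κ) : BddAbove (Set.range fun g => F g q i - c g i) := by
  refine ⟨q i + C, Set.forall_mem_range.2 fun g => ?_⟩
  linarith [(abs_le.1 (abs_apply_sub_sub_le hC q i g)).2]

variable [Nonempty G]

theorem norm_supDisplacement_sub_le (hC : ∀ g q, ‖F g q - q - c g‖ ≤ C)
    (q : κ → ℝ) : ‖supDisplacement F c q - q‖ ≤ C := by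
  obtain ⟨g₀⟩ := ‹Nonempty G›
  refine (pi_norm_le_iff_of_nonneg ((norm_nonneg _).trans (hC g₀ 0))).2 fun i => ?_
  have habs := fun g => abs_le.1 (abs_apply_sub_sub_le hC q i g)
  have hlower := le_ciSup (bddAbove_range_apply_sub hC q i) g₀
  have hupper : supDisplacement F c q i ≤ q i + C :=
    ciSup_le fun g => by linarith [(habs g).2]
  refine abs_le.2 ⟨?_, by simpa only [Pi.sub_apply, sub_le_iff_le_add'] using hupper⟩
  rw [Pi.sub_apply, supDisplacement]
  linarith [(habs g₀).1]

theorem lipschitzWith_supDisplacement (hC : ∀ g q, ‖F g q - q - c g‖ ≤ C)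
    {K : NNReal} (hF : ∀ g, LipschitzWith K (F g)) :
    LipschitzWith K (supDisplacement F c) := by
  refine LipschitzWith.of_dist_le_mul fun x y => (dist_pi_le_iff (by positivity)).2 fun i => ?_
  suffices hcoord : LipschitzWith K fun q => supDisplacement F c q i from hcoord.dist_le_mul x y
  refine LipschitzWith.of_le_add_mul K fun x y => ciSup_le fun g => ?_
  have hle : F g y i - c g i ≤ supDisplacement F c y i :=
    le_ciSup (bddAbove_range_apply_sub hC y i) g
  have hdist := (dist_le_pi_dist (F g x) (F g y) i).trans ((hF g).dist_le_mul x y)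
  linarith [le_abs_self (F g x i - F g y i), Real.dist_eq (F g x i) (F g y i)]

end Bounds

theorem supDisplacement_apply_action [AddGroup G] {c : G →+ (κ → ℝ)}
    (hC : ∀ g q, ‖F g q - q - c g‖ ≤ C) (hadd : ∀ g g', F (g + g') = F g ∘ F g') (g : G)
    (q : κ → ℝ) : supDisplacement F c (F g q) = supDisplacement F c q + c g := by
  ext i
  have hreindex : ∀ g', F g' (F g q) i - c g' i = F (g' + g) q i - c (g' + g) i + c g i := by
    intro g'
    rw [hadd, map_add, Function.comp_apply, Pi.add_apply]
    ring
  calc ⨆ g', (F g' (F g q) i - c g' i)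
      = ⨆ g', (F (g' + g) q i - c (g' + g) i + c g i) := iSup_congr hreindex
    _ = ⨆ g', (F g' q i - c g' i + c g i) :=
        (Equiv.addRight g).iSup_comp (g := fun g' => F g' q i - c g' i + c g i)
    _ = (⨆ g', (F g' q i - c g' i)) + c g i :=
        (ciSup_add (bddAbove_range_apply_sub hC q i) _).symm

end Semiconjugacy

section SeparatedPreimages

variable {X Y ι : Type*} [MetricSpace X] {H : X → Y} {δ : ℝ}

/-- `y` has a family of preimages under `H`, indexed by `ι`, whose members lie pairwise at distance
at least `δ`. For proper `H` this is a closed condition on `y`, unlike a lower bound on the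
cardinality of the fibre. -/
def HasSeparatedPreimages (H : X → Y) (ι : Type*) (δ : ℝ) (y : Y) : Prop :=
  ∃ x : ι → X, (∀ i, H (x i) = y) ∧ Pairwise fun i j => δ ≤ dist (x i) (x j)

theorem exists_hasSeparatedPreimages {s : Set X} (hs : s.Finite) {y : Y} (hy : s ⊆ H ⁻¹' {y}) :
    ∃ δ > 0, HasSeparatedPreimages H s δ y := by
  obtain ⟨r, hr, hsep⟩ := hs.relatively_discrete
  refine ⟨(min r 1).toReal, ENNReal.toReal_pos (by positivity) (by simp), Subtype.val,
    fun i => hy i.2, fun i j hij => ?_⟩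
  have hle : min r 1 ≤ edist (i : X) j :=
    (min_le_left r 1).trans (hsep i i.2 j j.2 (Subtype.coe_injective.ne hij))
  exact (ENNReal.toReal_mono (edist_ne_top _ _) hle).trans_eq (dist_edist _ _).symm

variable [TopologicalSpace Y]

theorem isClosed_setOf_exists_mem_forall_apply_eq (hH : IsProperMap H) {S : Set (ι → X)}
    (hS : IsClosed S) : IsClosed {y | ∃ x ∈ S, ∀ i, H (x i) = y} := by
  have himage : IsClosed ((fun (x : ι → X) i => H (x i)) '' S) :=
    (IsProperMap.pi_map fun _ : ι => hH).isClosedMap S hS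
  have hpreimage : {y | ∃ x ∈ S, ∀ i, H (x i) = y} =
      (fun y (_ : ι) => y) ⁻¹' ((fun (x : ι → X) i => H (x i)) '' S) := by
    ext y
    simp only [Set.mem_ofPred_eq, Set.mem_preimage, Set.mem_image, funext_iff]
  rw [hpreimage]
  exact himage.preimage (by fun_prop)

theorem isClosed_setOf_pairwise_le_dist (ι X : Type*) [PseudoMetricSpace X] (δ : ℝ) :
    IsClosed {x : ι → X | Pairwise fun i j => δ ≤ dist (x i) (x j)} := by
  simp only [Pairwise, Set.ofPred_forall]
  refine isClosed_iInter fun i => isClosed_iInter fun j => isClosed_iInter fun _ => ?_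
  exact isClosed_le continuous_const (by fun_prop)

theorem isClosed_setOf_hasSeparatedPreimages (hH : IsProperMap H) (ι : Type*) (δ : ℝ) :
    IsClosed {y | HasSeparatedPreimages H ι δ y} := by
  simpa only [HasSeparatedPreimages, Set.mem_ofPred_eq, and_comm] using
    isClosed_setOf_exists_mem_forall_apply_eq hH (isClosed_setOf_pairwise_le_dist ι X δ)

theorem HasSeparatedPreimages.of_equivariant [AddGroup Y] [ContinuousAdd Y] {G : Type*}
    {F : G → X → X} {c : G → Y} {K : NNReal} {δ' : ℝ} {y : Y} (hH : IsProperMap H)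
    (hequiv : ∀ g x, H (F g x) = H x + c g) (hanti : ∀ g, AntilipschitzWith K (F g))
    (hdense : DenseRange c) (hδ : K * δ' < δ) (hy : HasSeparatedPreimages H ι δ y)
    (z : Y) : HasSeparatedPreimages H ι δ' z := by
  obtain ⟨x, hx, hsep⟩ := hy
  have hdense_add : DenseRange fun g => y + c g :=
    (add_left_surjective y).denseRange.comp hdense (continuous_const_add y)
  refine (isClosed_setOf_hasSeparatedPreimages hH ι δ').closure_subset_iff.2 ?_ (hdense_add z)
  rintro _ ⟨g, rfl⟩
  refine ⟨fun i => F g (x i), fun i => by rw [hequiv, hx], fun i j hij => ?_⟩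
  by_contra! hlt
  have hle := (hsep hij).trans ((hanti g).le_mul_dist _ _)
  exact absurd (hle.trans (mul_le_mul_of_nonneg_left hlt.le K.2)) hδ.not_ge

end SeparatedPreimages

section MaximalFibres

variable {X Y ι : Type*} [MetricSpace X] {H : X → Y} {δ : ℝ} [Finite ι]

theorem range_eq_preimage_of_encard_le {x : ι → X} {y : Y} (hδ : 0 < δ) (hx : ∀ i, H (x i) = y)
    (hsep : Pairwise fun i j => δ ≤ dist (x i) (x j)) (hcard : (H ⁻¹' {y}).encard ≤ ENat.card ι) :
    Set.range x = H ⁻¹' {y} := by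
  have hinj : Function.Injective x := by
    intro i j hij
    by_contra hne
    exact absurd (hsep hne) (by simpa only [hij, dist_self, not_le] using hδ)
  exact (Set.finite_range x).eq_of_subset_of_encard_le (Set.range_subset_iff.2 hx)
    (hcard.trans hinj.encard_range)

theorem eq_of_apply_eq_of_dist_lt (hδ : 0 < δ) (hsep : ∀ y, HasSeparatedPreimages H ι δ y)
    (hcard : ∀ y, (H ⁻¹' {y}).encard ≤ ENat.card ι) {a b : X} (hab : H a = H b)
    (hdist : dist a b < δ) : a = b := by
  obtain ⟨x, hx, hx_sep⟩ := hsep (H b)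
  have hrange := range_eq_preimage_of_encard_le hδ hx hx_sep (hcard _)
  obtain ⟨i, rfl⟩ := hrange.ge hab
  obtain ⟨j, rfl⟩ := hrange.ge (Set.mem_singleton (H b))
  by_contra hne
  exact hdist.not_ge (hx_sep (ne_of_apply_ne x hne))

variable [TopologicalSpace Y]

theorem isOpenMap_of_hasSeparatedPreimages (hH : IsProperMap H) (hδ : 0 < δ)
    (hsep : ∀ y, HasSeparatedPreimages H ι δ y)
    (hcard : ∀ y, (H ⁻¹' {y}).encard ≤ ENat.card ι) : IsOpenMap H := by
  -- Separated `ι`-families are whole fibres, so `y ∉ H(U)` iff one of them over `y` avoids `U`.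
  intro U hU
  have hclosed : IsClosed ((Set.univ.pi fun _ : ι => Uᶜ) ∩
      {x | Pairwise fun i j => δ ≤ dist (x i) (x j)}) :=
    (isClosed_set_pi fun _ _ => hU.isClosed_compl).inter (isClosed_setOf_pairwise_le_dist ι X δ)
  rw [← isClosed_compl_iff]
  convert isClosed_setOf_exists_mem_forall_apply_eq hH hclosed using 1
  ext y
  constructor
  · intro hy
    obtain ⟨x, hx, hx_sep⟩ := hsep y
    exact ⟨x, ⟨fun i _ hi => hy ⟨x i, hi, hx i⟩, hx_sep⟩, hx⟩
  · rintro ⟨x, ⟨hxU, hx_sep⟩, hx⟩ ⟨a, haU, ha⟩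
    obtain ⟨i, rfl⟩ := (range_eq_preimage_of_encard_le hδ hx hx_sep (hcard y)).ge ha
    exact hxU i trivial haU

theorem isLocalHomeomorph_of_hasSeparatedPreimages (hH : IsProperMap H) (hδ : 0 < δ)
    (hsep : ∀ y, HasSeparatedPreimages H ι δ y)
    (hcard : ∀ y, (H ⁻¹' {y}).encard ≤ ENat.card ι) : IsLocalHomeomorph H := by
  refine isLocalHomeomorph_iff_isOpenEmbedding_restrict.2 fun x =>
    ⟨Metric.ball x (δ / 2), Metric.ball_mem_nhds x (half_pos hδ), ?_⟩
  refine .of_continuous_injective_isOpenMap (hH.continuous.comp continuous_subtype_val) ?_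
    ((isOpenMap_of_hasSeparatedPreimages hH hδ hsep hcard).comp
      Metric.isOpen_ball.isOpenMap_subtype_val)
  intro a b hab
  refine Subtype.ext (eq_of_apply_eq_of_dist_lt hδ hsep hcard hab ?_)
  exact (dist_triangle_right _ _ x).trans_lt ((add_lt_add a.2 b.2).trans_eq (add_halves δ))

theorem isCoveringMap_of_hasSeparatedPreimages (hH : IsProperMap H) (hδ : 0 < δ)
    (hsep : ∀ y, HasSeparatedPreimages H ι δ y)
    (hcard : ∀ y, (H ⁻¹' {y}).encard ≤ ENat.card ι) : IsCoveringMap H := by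
  refine isCoveringMap_iff_isCoveringMapOn_univ.2 ?_
  refine hH.isClosedMap.isCoveringMapOn_of_isLocalHomeomorphOn (fun y _ => ?_) ?_
  · exact Set.finite_of_encard_le_coe ((hcard y).trans_eq (ENat.card_eq_coe_natCard ι))
  · exact (isLocalHomeomorph_of_hasSeparatedPreimages hH hδ hsep hcard).isLocalHomeomorphOn

end MaximalFibres

theorem isHomeomorph_of_isCoveringMap {X Y : Type*} [TopologicalSpace X] [TopologicalSpace Y]
    [ConnectedSpace X] [SimplyConnectedSpace Y] [LocallyPathConnectedSpace Y] {p : X → Y}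
    (hp : IsCoveringMap p) : IsHomeomorph p := by
  obtain ⟨x⟩ := ‹ConnectedSpace X›.toNonempty
  obtain ⟨s, ⟨hsx, hps⟩, -⟩ := hp.existsUnique_continuousMap_lifts (ContinuousMap.id Y) (p x) x rfl
  have hright : Function.RightInverse s p := congrFun hps
  have hps_comp : p ∘ (s ∘ p) = p ∘ id := funext fun a => hright (p a)
  have hleft : Function.LeftInverse s p := congrFun <|
    hp.eq_of_comp_eq (s.continuous.comp hp.continuous) continuous_id hps_comp x hsx
  exact ⟨hp.continuous, hp.isOpenMap, hleft.injective, hright.surjective⟩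

section EquivariantMaps

variable {X Y G : Type*} [MetricSpace X] [TopologicalSpace Y] [AddGroup Y] [ContinuousAdd Y]
  {H : X → Y} {F : G → X → X} {c : G → Y} {K : NNReal}

theorem isHomeomorph_of_encard_preimage_le [ConnectedSpace X] [SimplyConnectedSpace Y]
    [LocallyPathConnectedSpace Y] {B : ℕ} (hH : IsProperMap H)
    (hequiv : ∀ g x, H (F g x) = H x + c g) (hanti : ∀ g, AntilipschitzWith K (F g))
    (hdense : DenseRange c) (hB : ∀ y, (H ⁻¹' {y}).encard ≤ B) : IsHomeomorph H := by
  obtain ⟨y₀, hy₀⟩ := ENat.exists_eq_iSup_of_lt_top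
    ((iSup_le hB).trans_lt (ENat.natCast_lt_top B) : ⨆ y, (H ⁻¹' {y}).encard < ⊤)
  have hfinite : (H ⁻¹' {y₀}).Finite := Set.finite_of_encard_le_coe (hB y₀)
  have hcard : ∀ y, (H ⁻¹' {y}).encard ≤ ENat.card (H ⁻¹' {y₀}) := fun y =>
    (le_iSup (fun y => (H ⁻¹' {y}).encard) y).trans_eq (by rw [← hy₀, ENat.card_coe_set_eq])
  obtain ⟨δ, hδ, hsep₀⟩ := exists_hasSeparatedPreimages hfinite subset_rfl
  obtain ⟨δ', hδ', hlt⟩ := exists_pos_mul_lt hδ K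
  have := hfinite.to_subtype
  exact isHomeomorph_of_isCoveringMap <| isCoveringMap_of_hasSeparatedPreimages hH hδ'
    (hsep₀.of_equivariant hH hequiv hanti hdense hlt) hcard

end EquivariantMaps

theorem isProperMap_of_norm_sub_le {E : Type*} [NormedAddCommGroup E] [ProperSpace E] {H : E → E}
    {C : ℝ} (hcont : Continuous H) (hC : ∀ q, ‖H q - q‖ ≤ C) : IsProperMap H := by
  refine isProperMap_iff_tendsto_cocompact.2 ⟨hcont, ?_⟩
  rw [← Metric.cobounded_eq_cocompact, ← tendsto_norm_atTop_iff_cobounded]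
  refine tendsto_atTop_mono (fun q => ?_) (tendsto_atTop_add_const_right _ (-C)
    tendsto_norm_cobounded_atTop)
  linarith [norm_sub_norm_le q (H q), norm_sub_rev q (H q), hC q]

section Packing

variable {α κ : Type*} [Fintype α] [Fintype κ] {δ : ℝ}

theorem card_le_of_pairwise_le_dist {x : α → κ → ℝ} {m : ℕ} (hδ : 0 < δ)
    (hnorm : ∀ a, ‖x a‖ ≤ m * δ) (hsep : Pairwise fun a b => δ ≤ dist (x a) (x b)) :
    Fintype.card α ≤ (2 * m + 1) ^ Fintype.card κ := by
  classical
  have hmaps : Set.MapsTo (fun a k => ⌊x a k / δ⌋) (Finset.univ : Finset α)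
      (Fintype.piFinset fun _ : κ => Finset.Icc (-m : ℤ) m) := by
    intro a _
    refine Fintype.mem_piFinset.2 fun k => Finset.mem_Icc.2 ?_
    have habs : |x a k| ≤ m * δ := (norm_le_pi_norm (x a) k).trans (hnorm a)
    have hscaled : |x a k / δ| ≤ m := by rwa [abs_div, abs_of_pos hδ, div_le_iff₀ hδ]
    obtain ⟨hlower, hupper⟩ := abs_le.1 hscaled
    exact ⟨Int.le_floor.2 (mod_cast hlower), Int.floor_le_iff.2 (by push_cast; linarith)⟩
  have hinj : Set.InjOn (fun a k => ⌊x a k / δ⌋) (Finset.univ : Finset α) := by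
    intro a _ b _ hab
    by_contra hne
    refine (hsep hne).not_gt ((dist_pi_lt_iff hδ).2 fun k => ?_)
    have hlt := Int.abs_sub_lt_one_of_floor_eq_floor (congrFun hab k)
    rwa [← sub_div, abs_div, abs_of_pos hδ, div_lt_one hδ] at hlt
  have hbox : (Finset.Icc (-m : ℤ) m).card = 2 * m + 1 := by
    rw [Int.card_Icc]
    lia
  simpa only [Finset.card_univ, Fintype.card_piFinset, Finset.prod_const, hbox] using
    Finset.card_le_card_of_injOn _ hmaps hinj

theorem le_dist_mul_natCast {M : ℕ} {r : ℝ} (hr : 0 ≤ r) {p p' : κ → Fin M} (hne : p ≠ p') :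
    r ≤ dist (fun k => r * (p k : ℕ)) (fun k => r * (p' k : ℕ)) := by
  obtain ⟨k, hk⟩ := Function.ne_iff.1 hne
  refine le_trans ?_ (dist_le_pi_dist _ _ k)
  have hone : 1 ≤ |((p k : ℕ) : ℝ) - (p' k : ℕ)| :=
    Nat.pairwise_one_le_dist (Fin.val_injective.ne hk)
  rw [Real.dist_eq, ← mul_sub, abs_mul, abs_of_nonneg hr]
  exact le_mul_of_one_le_right hr hone

variable {H : (κ → ℝ) → (κ → ℝ)} {K : NNReal} {C : ℝ}

theorem pow_mul_card_le_of_forall_hasSeparatedPreimages (hH : LipschitzWith K H)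
    (hC : ∀ q, ‖H q - q‖ ≤ C) (hδ : 0 < δ) (hsep : ∀ y, HasSeparatedPreimages H α δ y) {A M : ℕ}
    (hA : K < A) (hM : C ≤ M * δ) :
    M ^ Fintype.card κ * Fintype.card α ≤ (2 * ((A + 1) * M) + 1) ^ Fintype.card κ := by
  -- All the preimages of the grid points `A δ p`, `0 ≤ p k < M`, are still pairwise `δ`-separated,
  -- because `H` cannot stretch distances by the factor `A > K`.
  choose x hx hx_sep using fun p : κ → Fin M => hsep fun k => A * δ * (p k : ℕ)
  have hAδ : 0 ≤ A * δ := by positivity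
  have hnorm : ∀ a : (κ → Fin M) × α, ‖x a.1 a.2‖ ≤ ((A + 1) * M : ℕ) * δ := by
    rintro ⟨p, a⟩
    have hgrid : ‖H (x p a)‖ ≤ A * δ * M := by
      rw [hx]
      refine (pi_norm_le_iff_of_nonneg (by positivity)).2 fun k => ?_
      rw [norm_mul, Real.norm_of_nonneg hAδ, Real.norm_natCast]
      gcongr
      exact (p k).2.le
    have htri : ‖x p a‖ ≤ ‖H (x p a)‖ + ‖H (x p a) - x p a‖ := norm_le_norm_add_norm_sub _ _
    push_cast
    linarith [hC (x p a)]
  have hpairwise : Pairwise fun a b : (κ → Fin M) × α => δ ≤ dist (x a.1 a.2) (x b.1 b.2) := by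
    rintro ⟨p, a⟩ ⟨p', b⟩ hne
    rcases eq_or_ne p p' with rfl | hp
    · exact hx_sep p fun hab => hne (congrArg _ hab)
    · by_contra! hlt
      have hfar := le_dist_mul_natCast hAδ hp
      rw [← hx p a, ← hx p' b] at hfar
      have hlip := hH.dist_le_mul (x p a) (x p' b)
      have hnear := hlip.trans (mul_le_mul_of_nonneg_left hlt.le K.2)
      exact (hfar.trans hnear).not_gt (mul_lt_mul_of_pos_right (mod_cast hA) hδ)
  classical
  simpa only [Fintype.card_prod, Fintype.card_fun, Fintype.card_fin] using
    card_le_of_pairwise_le_dist hδ hnorm hpairwise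

theorem card_le_of_forall_hasSeparatedPreimages (hH : LipschitzWith K H)
    (hC : ∀ q, ‖H q - q‖ ≤ C) (hδ : 0 < δ) (hsep : ∀ y, HasSeparatedPreimages H α δ y) :
    Fintype.card α ≤ (2 * ⌊K⌋₊ + 5) ^ Fintype.card κ := by
  obtain ⟨M, hM⟩ := exists_nat_ge (max 1 (C / δ))
  have hM_pos : 1 ≤ M := Nat.one_le_cast.1 ((le_max_left 1 (C / δ)).trans hM)
  have hM_ge : C ≤ M * δ := (div_le_iff₀ hδ).1 ((le_max_right _ _).trans hM)
  have hK : K < (⌊K⌋₊ + 1 : ℕ) := mod_cast Nat.lt_floor_add_one K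
  have hcount := pow_mul_card_le_of_forall_hasSeparatedPreimages hH hC hδ hsep hK hM_ge
  refine Nat.le_of_mul_le_mul_left (hcount.trans ?_) (Nat.pow_pos (n := Fintype.card κ) hM_pos)
  rw [← mul_pow]
  gcongr
  nlinarith

theorem encard_preimage_le {G : Type*} {F : G → (κ → ℝ) → (κ → ℝ)} {c : G → κ → ℝ}
    (hH : LipschitzWith K H) (hC : ∀ q, ‖H q - q‖ ≤ C) (hequiv : ∀ g q, H (F g q) = H q + c g)
    {L : NNReal} (hanti : ∀ g, AntilipschitzWith L (F g)) (hdense : DenseRange c) (y : κ → ℝ) :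
    (H ⁻¹' {y}).encard ≤ ((2 * ⌊K⌋₊ + 5) ^ Fintype.card κ : ℕ) := by
  by_contra! hlt
  obtain ⟨s, hs, hs_card⟩ := Set.exists_subset_encard_eq (Order.add_one_le_of_lt hlt)
  have hs_finite : s.Finite := Set.finite_of_encard_eq_coe hs_card
  obtain ⟨δ, hδ, hsep⟩ := exists_hasSeparatedPreimages hs_finite hs
  obtain ⟨δ', hδ', hδδ'⟩ := exists_pos_mul_lt hδ L
  have := hs_finite.fintype
  have hle := card_le_of_forall_hasSeparatedPreimages hH hC hδ' <|
    hsep.of_equivariant (isProperMap_of_norm_sub_le hH.continuous hC) hequiv hanti hdense hδδ'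
  rw [← Set.coe_fintypeCard] at hs_card
  have : Fintype.card s = _ + 1 := mod_cast hs_card
  lia

end Packing

theorem exists_homeomorph_conj_translation {κ G : Type*} [Fintype κ] [AddGroup G]
    {F : G → (κ → ℝ) → (κ → ℝ)} {c : G →+ (κ → ℝ)} {K : NNReal} {C : ℝ} (hzero : F 0 = id)
    (hadd : ∀ g g', F (g + g') = F g ∘ F g') (hlip : ∀ g, LipschitzWith K (F g))
    (hC : ∀ g q, ‖F g q - q - c g‖ ≤ C) (hdense : DenseRange c) :
    ∃ H : (κ → ℝ) ≃ₜ (κ → ℝ), LipschitzWith K H ∧ ∀ g q, H (F g q) = H q + c g := by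
  have hH := lipschitzWith_supDisplacement hC hlip
  have hbound := norm_supDisplacement_sub_le hC
  have hequiv := supDisplacement_apply_action hC hadd
  have hanti : ∀ g, AntilipschitzWith K (F g) := fun g =>
    (hlip (-g)).to_rightInverse fun q => by
      rw [← Function.comp_apply (f := F (-g)), ← hadd, neg_add_cancel, hzero, id]
  have hhomeo : IsHomeomorph (supDisplacement F c) :=
    isHomeomorph_of_encard_preimage_le (isProperMap_of_norm_sub_le hH.continuous hbound) hequiv
      hanti hdense (encard_preimage_le hH hbound hequiv hanti hdense)
  exact ⟨hhomeo.homeomorph, hH, hequiv⟩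

section Kronecker

open MeasureTheory UnitAddTorus

-- `mFourierCoeff` integrates against this normalised Haar measure, which is not a global instance.
local instance : MeasureSpace UnitAddCircle := ⟨AddCircle.haarAddCircle⟩

local instance : Measure.IsAddHaarMeasure (volume : Measure UnitAddCircle) :=
  inferInstanceAs (Measure.IsAddHaarMeasure AddCircle.haarAddCircle)

local instance : IsProbabilityMeasure (volume : Measure UnitAddCircle) :=
  inferInstanceAs (IsProbabilityMeasure AddCircle.haarAddCircle)

variable {d : Type*} [Fintype d]

theorem mFourier_add_apply (k : d → ℤ) (x y : UnitAddTorus d) :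
    mFourier k (x + y) = mFourier k x * mFourier k y := by
  simp only [mFourier, ContinuousMap.coe_mk, Pi.add_apply, fourier_apply, smul_add,
    AddCircle.toCircle_add, Circle.coe_mul, Finset.prod_mul_distrib]

theorem mFourier_coe_apply (k : d → ℤ) (x : d → ℝ) :
    mFourier k (fun i => (x i : UnitAddCircle)) =
      Complex.exp (2 * Real.pi * Complex.I * (∑ i, k i * x i : ℝ)) := by
  simp only [mFourier, ContinuousMap.coe_mk, fourier_coe_apply, ← Complex.exp_sum]
  push_cast
  simp only [Finset.mul_sum, div_one, mul_assoc]

theorem mFourierCoeff_eq_zero_of_periodic {f : UnitAddTorus d → ℂ} {a : UnitAddTorus d}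
    (hf : Function.Periodic f a) {k : d → ℤ} (hk : mFourier (-k) a ≠ 1) :
    mFourierCoeff f k = 0 := by
  have hshift : mFourierCoeff f k = mFourier (-k) a * mFourierCoeff f k := by
    calc mFourierCoeff f k = ∫ x, mFourier (-k) (x + a) • f (x + a) :=
          (integral_add_right_eq_self _ a).symm
      _ = ∫ x, mFourier (-k) a * (mFourier (-k) x • f x) := by
          simp only [mFourier_add_apply, hf _, smul_eq_mul, mul_comm, mul_left_comm]
      _ = mFourier (-k) a * mFourierCoeff f k := integral_const_mul _ _
  by_contra hne
  exact hk ((mul_eq_right₀ hne).1 hshift.symm)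

theorem apply_eq_mFourierCoeff_zero {f : C(UnitAddTorus d, ℂ)}
    (hf : ∀ k ≠ 0, mFourierCoeff f k = 0) (x : UnitAddTorus d) : f x = mFourierCoeff f 0 := by
  have hsummable : Summable (mFourierCoeff f) :=
    summable_of_ne_finset_zero (s := {0}) fun k hk => hf k (by simpa using hk)
  have hseries := hasSum_mFourier_series_apply_of_summable hsummable x
  have hsingle := hasSum_single (f := fun k => mFourierCoeff f k • mFourier k x) 0
    fun k hk => by rw [hf k hk, zero_smul]
  simpa only [mFourier_zero, ContinuousMap.one_apply, smul_eq_mul, mul_one] using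
    hseries.unique hsingle

theorem dense_of_forall_exists_mFourier_ne_one {S : AddSubgroup (UnitAddTorus d)}
    (hS : ∀ k ≠ 0, ∃ a ∈ S, mFourier k a ≠ 1) : Dense (S : Set (UnitAddTorus d)) := by
  let f : C(UnitAddTorus d, ℂ) :=
    ⟨fun x => (Metric.infDist x S : ℂ),
      Complex.continuous_ofReal.comp (Metric.continuous_infDist_pt _)⟩
  have hperiodic : ∀ a ∈ S, Function.Periodic f a := by
    intro a ha x
    have himage : (fun s => a + s) '' (S : Set (UnitAddTorus d)) = S := vadd_coe_set ha
    have hinfDist := Metric.infDist_image (t := (S : Set (UnitAddTorus d))) (x := x)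
      (isometry_add_left a)
    rw [himage, add_comm] at hinfDist
    exact congrArg ((↑) : ℝ → ℂ) hinfDist
  have hconst : ∀ x, f x = mFourierCoeff f 0 := apply_eq_mFourierCoeff_zero fun k hk => by
    obtain ⟨a, ha, hne⟩ := hS (-k) (neg_ne_zero.2 hk)
    exact mFourierCoeff_eq_zero_of_periodic (hperiodic a ha) hne
  intro x
  refine (Metric.mem_closure_iff_infDist_zero ⟨0, S.zero_mem⟩).2 ?_
  rw [← Metric.infDist_zero_of_mem (S.zero_mem : (0 : UnitAddTorus d) ∈ (S : Set _))]
  exact Complex.ofReal_injective ((hconst x).trans (hconst 0).symm)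

/-- The homomorphism `(t, v) ↦ tρ + v` on `ℝ × ℤⁿ`, which lifts the translation flow `x ↦ x + tρ` of
the torus together with the deck transformations of `ℝⁿ → 𝕋ⁿ`. -/
def flowTranslation {n : ℕ} (ρ : Fin n → ℝ) : ℝ × intLattice n →+ (Fin n → ℝ) :=
  (LinearMap.toSpanSingleton ℝ _ ρ).toAddMonoidHom.coprod (intLattice n).subtype

theorem flowTranslation_apply {n : ℕ} (ρ : Fin n → ℝ) (g : ℝ × intLattice n) :
    flowTranslation ρ g = g.1 • ρ + g.2 := rfl

theorem exists_mFourier_smul_ne_one {ρ : d → ℝ} (hρ : LinearIndependent ℤ ρ) {k : d → ℤ}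
    (hk : k ≠ 0) : ∃ t : ℝ, mFourier k (fun i => ((t • ρ) i : UnitAddCircle)) ≠ 1 := by
  have hne : ∑ i, k i * ρ i ≠ 0 := by
    contrapose! hk
    simp only [← zsmul_eq_mul] at hk
    exact funext (Fintype.linearIndependent_iff.1 hρ k hk)
  have hpair : ∀ t : ℝ, ∑ i, k i * (t • ρ) i = t * ∑ i, k i * ρ i := fun t => by
    simp only [Pi.smul_apply, smul_eq_mul, mul_left_comm _ t, Finset.mul_sum]
  refine ⟨2⁻¹ * (∑ i, k i * ρ i)⁻¹, ?_⟩
  rw [mFourier_coe_apply, hpair, inv_mul_cancel_right₀ hne]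
  have hexp : (2 * Real.pi * Complex.I * (2⁻¹ : ℝ) : ℂ) = Real.pi * Complex.I := by
    push_cast
    ring
  rw [hexp, Complex.exp_pi_mul_I]
  norm_num

theorem denseRange_flowTranslation {n : ℕ} {ρ : Fin n → ℝ} (hρ : LinearIndependent ℤ ρ) :
    DenseRange (flowTranslation ρ) := by
  let proj : (Fin n → ℝ) →+ UnitAddTorus (Fin n) :=
    (QuotientAddGroup.mk' (AddSubgroup.zmultiples (1 : ℝ))).compLeft (Fin n)
  have hproj : IsOpenMap proj :=
    (IsOpenQuotientMap.piMap fun _ => QuotientAddGroup.isOpenQuotientMap_mk).isOpenMap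
  have hdense : Dense ((flowTranslation ρ).range.map proj : Set (UnitAddTorus (Fin n))) := by
    refine dense_of_forall_exists_mFourier_ne_one fun k hk => ?_
    obtain ⟨t, ht⟩ := exists_mFourier_smul_ne_one hρ hk
    exact ⟨proj (t • ρ), ⟨t • ρ, ⟨(t, 0), add_zero _⟩, rfl⟩, ht⟩
  refine (hdense.preimage hproj).mono ?_
  rintro x ⟨_, ⟨g, rfl⟩, hg⟩
  have hlattice : x - flowTranslation ρ g ∈ intLattice n := fun i => by
    have hcoe : ((x i - flowTranslation ρ g i : ℝ) : UnitAddCircle) = 0 := by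
      rw [AddCircle.coe_sub, sub_eq_zero]
      exact congrFun hg.symm i
    obtain ⟨m, hm⟩ := (AddCircle.coe_eq_zero_iff 1).1 hcoe
    exact ⟨m, by rw [Pi.sub_apply, ← hm, zsmul_one]⟩
  refine ⟨g + (0, ⟨_, hlattice⟩), ?_⟩
  rw [map_add, flowTranslation_apply ρ (0, _), zero_smul, zero_add, add_sub_cancel]

end Kronecker

section Quotient

theorem exists_homeomorph_quotient {E : Type*} [TopologicalSpace E] [AddGroup E]
    {Λ : AddSubgroup E} (H : E ≃ₜ E) (hH : ∀ x, ∀ v ∈ Λ, H (x + v) = H x + v) :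
    ∃ h : E ⧸ Λ ≃ₜ E ⧸ Λ, ∀ x : E, h x = (H x : E ⧸ Λ) := by
  have hrel : ∀ a b, QuotientAddGroup.leftRel Λ a b ↔ QuotientAddGroup.leftRel Λ (H a) (H b) := by
    intro a b
    rw [QuotientAddGroup.leftRel_apply, QuotientAddGroup.leftRel_apply]
    constructor <;> intro hab
    · have hb := hH a _ hab
      rw [add_neg_cancel_left] at hb
      rwa [hb, neg_add_cancel_left]
    · have hb := hH a _ hab
      rw [add_neg_cancel_left] at hb
      rwa [← H.injective hb, neg_add_cancel_left]
  have hmk : Topology.IsQuotientMap (QuotientAddGroup.mk : E → E ⧸ Λ) :=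
    QuotientAddGroup.isQuotientMap_mk Λ
  exact ⟨{ toEquiv := Quotient.congr H.toEquiv hrel
           continuous_toFun := hmk.continuous_iff.2 (hmk.continuous.comp H.continuous)
           continuous_invFun := hmk.continuous_iff.2 (hmk.continuous.comp H.symm.continuous) },
    fun _ => rfl⟩

theorem lipschitzWith_of_lift {E E' : Type*} [SeminormedAddCommGroup E] [SeminormedAddCommGroup E']
    {Λ : AddSubgroup E} {Λ' : AddSubgroup E'} {H : E → E'} {h : E ⧸ Λ → E' ⧸ Λ'} {K : NNReal}
    (hH : LipschitzWith K H) (hlift : ∀ x : E, h x = (H x : E' ⧸ Λ')) : LipschitzWith K h := by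
  refine LipschitzWith.of_dist_le_mul fun x y => ?_
  have hle : ∀ r > dist x y, dist (h x) (h y) ≤ K * r := by
    intro r hr
    obtain ⟨b, rfl⟩ := QuotientAddGroup.mk_surjective y
    rw [gt_iff_lt, dist_eq_norm] at hr
    obtain ⟨v, hv, hvr⟩ := QuotientAddGroup.norm_lt_iff.1 hr
    obtain rfl : ((v + b : E) : E ⧸ Λ) = x := by
      rw [QuotientAddGroup.mk_add, hv, sub_add_cancel]
    calc dist (h (v + b : E)) (h b) = ‖((H (v + b) - H b : E') : E' ⧸ Λ')‖ := by
          rw [hlift, hlift, dist_eq_norm, QuotientAddGroup.mk_sub]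
      _ ≤ ‖H (v + b) - H b‖ := QuotientAddGroup.norm_mk_le_norm
      _ ≤ K * ‖v‖ := by simpa only [add_sub_cancel_right] using hH.norm_sub_le (v + b) b
      _ ≤ K * r := by gcongr
  have hlim : Tendsto (fun r => (K : ℝ) * r) (𝓝[>] dist x y) (𝓝 (K * dist x y)) :=
    (tendsto_id.const_mul _).mono_left nhdsWithin_le_nhds
  exact ge_of_tendsto hlim (eventually_mem_nhdsWithin.mono hle)

end Quotient

theorem exists_homeomorph_conj_flow {n : ℕ} {F : ℝ → (Fin n → ℝ) → (Fin n → ℝ)} {K : NNReal}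
    {ρ q₀ : Fin n → ℝ} (hzero : F 0 = id) (hflow : ∀ s t, F (s + t) = F s ∘ F t)
    (hper : ∀ t x, ∀ v ∈ intLattice n, F t (x + v) = F t x + v)
    (hlip : ∀ t, LipschitzWith K (F t))
    (hρ : Tendsto (fun t : ℝ => t⁻¹ • (F t q₀ - q₀)) atTop (𝓝 ρ)) (hirr : LinearIndependent ℤ ρ) :
    ∃ H : (Fin n → ℝ) ≃ₜ (Fin n → ℝ), LipschitzWith K H ∧
      (∀ x, ∀ v ∈ intLattice n, H (x + v) = H x + v) ∧ ∀ t x, H (F t x) = H x + t • ρ := by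
  let A : ℝ × intLattice n → (Fin n → ℝ) → (Fin n → ℝ) := fun g x => F g.1 x + g.2
  have hA_zero : A 0 = id := by
    ext1 x
    change F 0 x + 0 = x
    rw [hzero, add_zero, id]
  have hA_add : ∀ g g', A (g + g') = A g ∘ A g' := by
    intro g g'
    ext1 x
    change F (g.1 + g'.1) x + ((g.2 : Fin n → ℝ) + g'.2) = F g.1 (F g'.1 x + g'.2) + g.2
    rw [hper _ _ _ g'.2.2, hflow, Function.comp_apply, add_comm (g.2 : Fin n → ℝ), add_assoc]
  have hA_lip : ∀ g, LipschitzWith K (A g) := fun g =>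
    LipschitzWith.of_dist_le_mul fun x y =>
      (dist_add_right _ _ _).trans_le ((hlip g.1).dist_le_mul x y)
  have hA_bound : ∀ g q, ‖A g q - q - flowTranslation ρ g‖ ≤ 4 * (K + 1) := fun g q => by
    rw [flowTranslation_apply, add_sub_right_comm, add_sub_add_right_eq_sub]
    exact norm_flow_sub_le hflow hper hlip hρ g.1 q
  obtain ⟨H, hH, hequiv⟩ := exists_homeomorph_conj_translation hA_zero hA_add hA_lip hA_bound
    (denseRange_flowTranslation hirr)
  refine ⟨H, hH, fun x v hv => ?_, fun t x => ?_⟩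
  · simpa only [A, flowTranslation_apply, hzero, id, zero_smul, zero_add] using
      hequiv (0, ⟨v, hv⟩) x
  · simpa only [A, flowTranslation_apply, AddSubgroup.coe_zero, add_zero] using hequiv (t, 0) x

theorem lipschitz_conjugacy_of_completely_irrational_general {n : ℕ}
    {F : ℝ → (Fin n → ℝ) → (Fin n → ℝ)} (hF0 : F 0 = id) (hflow : ∀ s t, F (s + t) = F s ∘ F t)
    (hper : ∀ (t : ℝ) (x : Fin n → ℝ) (m : Fin n → ℤ),
      F t (x + fun i => (m i : ℝ)) = F t x + fun i => (m i : ℝ))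
    {K : NNReal} (hlip : ∀ t, LipschitzWith K (F t)) {f : ℝ → Torus n → Torus n}
    (hf : ∀ t q, f t (torusProj n q) = torusProj n (F t q)) {ρ q₀ : Fin n → ℝ}
    (hρ : Tendsto (fun t : ℝ => t⁻¹ • (F t q₀ - q₀)) atTop (𝓝 ρ)) (hirr : LinearIndependent ℤ ρ) :
    ∃ h : Torus n ≃ₜ Torus n, LipschitzWith K ⇑h ∧
      ∀ (t : ℝ) (x : Torus n), h (f t x) = h x + torusProj n (t • ρ) := by
  have hlattice : ∀ t x, ∀ v ∈ intLattice n, F t (x + v) = F t x + v := by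
    intro t x v hv
    obtain ⟨m, rfl⟩ := mem_intLattice_iff.1 hv
    exact hper t x m
  obtain ⟨H, hH, hHper, hconj⟩ := exists_homeomorph_conj_flow hF0 hflow hlattice hlip hρ hirr
  obtain ⟨h, hh⟩ := exists_homeomorph_quotient H hHper
  refine ⟨h, lipschitzWith_of_lift hH hh, fun t x => ?_⟩
  obtain ⟨q, rfl⟩ := QuotientAddGroup.mk_surjective x
  calc h (f t (torusProj n q)) = h (torusProj n (F t q)) := congrArg h (hf t q)
    _ = torusProj n (H (F t q)) := hh _
    _ = torusProj n (H q + t • ρ) := congrArg _ (hconj t q)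
    _ = torusProj n (H q) + torusProj n (t • ρ) := map_add (QuotientAddGroup.mk' _) _ _
    _ = h (torusProj n q) + torusProj n (t • ρ) := congrArg (· + _) (hh q).symm

/-- **Lipschitz conjugacy to a minimal translation flow.**
Let `F` be a lifted flow on the torus whose time-`t` maps are all `K`-Lipschitz
(`K ≥ 1`), let `f` be the induced flow on `𝕋ⁿ`, and let `ρ` be the rotation vector
(uniform limit of `(F t q - q)/t` as `t → +∞`). If `ρ` is completely irrational
(`⟨k, ρ⟩ ∉ ℤ` for every nonzero integer vector `k`, i.e. the translation by `π ρ` is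
minimal), then there is a `K`-Lipschitz homeomorphism `h` of `𝕋ⁿ` with
`h (f t x) = h x + π (t • ρ)` for all `t` and `x`. -/
theorem lipschitz_conjugacy_of_completely_irrational
    (n : ℕ) (F : ℝ → (Fin n → ℝ) → (Fin n → ℝ))
    (hcont : Continuous fun p : ℝ × (Fin n → ℝ) => F p.1 p.2)
    (hF0 : F 0 = id)
    (hflow : ∀ s t : ℝ, F (s + t) = F s ∘ F t)
    (hper : ∀ (t : ℝ) (x : Fin n → ℝ) (m : Fin n → ℤ),
      F t (x + fun i => (m i : ℝ)) = F t x + fun i => (m i : ℝ))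
    (K : NNReal) (hK : 1 ≤ K)
    (hlip : ∀ t : ℝ, LipschitzWith K (F t))
    (f : ℝ → Torus n → Torus n)
    (hf : ∀ (t : ℝ) (q : Fin n → ℝ), f t (torusProj n q) = torusProj n (F t q))
    (ρ : Fin n → ℝ)
    (hρ : TendstoUniformly (fun (t : ℝ) (q : Fin n → ℝ) => t⁻¹ • (F t q - q))
        (fun _ => ρ) atTop)
    (hirr : ∀ k : Fin n → ℤ, k ≠ 0 → ∀ m : ℤ, (∑ i, (k i : ℝ) * ρ i) ≠ (m : ℝ)) :
    ∃ h : Torus n ≃ₜ Torus n, LipschitzWith K ⇑h ∧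
      ∀ (t : ℝ) (x : Torus n), h (f t x) = h x + torusProj n (t • ρ) :=
  lipschitz_conjugacy_of_completely_irrational_general hF0 hflow hper hlip hf (hρ.tendsto_at 0) <|
    Fintype.linearIndependent_iff.2 fun k hk => congrFun <| by_contra fun hne =>
      hirr k hne 0 (by simpa only [zsmul_eq_mul, Int.cast_zero] using hk)
end
end

section
/- Let g : 𝕋ⁿ → 𝕋ⁿ be a homeomorphism such that for some K ≥ 1 every iterate gᵏ, k ∈ ℤ, is K-Lipschitz. Then there exists a g-invariant Borel probability measure μ on 𝕋ⁿ such that for every Borel set A ⊆ 𝕋ⁿ one has K⁻ⁿ · Leb(A) ≤ μ(A) ≤ Kⁿ · Leb(A); in particular μ is equivalent to Leb. -/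
/-!
For a group acting on a probability space with every translate of `ν` at most `c • ν`, the supremum
of all translates of `ν` lies between `ν` and `c • ν` and is invariant, because the group only
permutes the translates. Its mass is between `1` and `c`, so normalising it costs at most a
factor `c`. A `K`-Lipschitz map multiplies `d`-dimensional Hausdorff measure by at most `K ^ d`, so
this applies with `c = K ^ d` to groups of `K`-Lipschitz maps and `ν` the Hausdorff measure. On the
torus, `Leb` is the `n`-dimensional Hausdorff measure, since the projection from `ℝⁿ` is locally
isometric and bijective on the unit cube.
-/

open MeasureTheory

noncomputable section

/-- The Haar (Lebesgue) probability measure on `𝕋ⁿ`: the pushforward under `π` of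
Lebesgue measure restricted to the fundamental cube `[0,1)ⁿ`. -/
def torusLeb (n : ℕ) : Measure (Torus n) :=
  Measure.map (torusProj n)
    (volume.restrict (Set.univ.pi fun _ : Fin n => Set.Ico (0:ℝ) 1))

open Measure Set Topology

section OrbitSup

variable (G : Type*) {X : Type*} [Group G] [MulAction G X] [MeasurableSpace X]

/-- The least upper bound of the translates of `ν` under `G`. It is the least
`G`-invariant measure above `ν`, before any normalisation. -/
def orbitSup (ν : Measure X) : Measure X := ⨆ γ : G, ν.map (γ • ·)

variable {G} {ν : Measure X}

lemma map_smul_le_orbitSup (γ : G) : ν.map (γ • ·) ≤ orbitSup G ν :=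
  le_iSup (fun γ : G ↦ ν.map (γ • ·)) γ

lemma le_orbitSup : ν ≤ orbitSup G ν := by
  simpa using map_smul_le_orbitSup (ν := ν) (1 : G)

variable [MeasurableConstSMul G X]

lemma orbitSup_le_map_smul (γ : G) : orbitSup G ν ≤ (orbitSup G ν).map (γ • ·) :=
  iSup_le fun η ↦ calc
    ν.map (η • ·) = (ν.map ((γ⁻¹ * η) • ·)).map (γ • ·) := by
      rw [map_map (measurable_const_smul γ) (measurable_const_smul _)]
      simp [Function.comp_def, smul_smul]
    _ ≤ (orbitSup G ν).map (γ • ·) :=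
      map_mono (map_smul_le_orbitSup _) (measurable_const_smul γ)

instance smulInvariantMeasure_orbitSup : SMulInvariantMeasure G X (orbitSup G ν) := by
  refine ((smulInvariantMeasure_tfae G (orbitSup G ν)).out 0 5).2 fun γ ↦
    le_antisymm ?_ (orbitSup_le_map_smul γ)
  calc (orbitSup G ν).map (γ • ·)
      ≤ ((orbitSup G ν).map (γ⁻¹ • ·)).map (γ • ·) :=
        map_mono (orbitSup_le_map_smul γ⁻¹) (measurable_const_smul γ)
    _ = orbitSup G ν := by
        rw [map_map (measurable_const_smul γ) (measurable_const_smul _)]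
        simp [Function.comp_def]

theorem exists_smulInvariantMeasure_of_map_smul_le [IsProbabilityMeasure ν] {c : ENNReal}
    (hc : c ≠ ⊤) (h : ∀ γ : G, ν.map (γ • ·) ≤ c • ν) :
    ∃ μ : Measure X, IsProbabilityMeasure μ ∧ SMulInvariantMeasure G X μ ∧
      c⁻¹ • ν ≤ μ ∧ μ ≤ c • ν := by
  set M := orbitSup G ν
  have hMν : M ≤ c • ν := iSup_le h
  have one_le_mass : 1 ≤ M univ := by simpa using (le_orbitSup : ν ≤ M) univ
  have mass_le : M univ ≤ c := by simpa using hMν univ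
  have : IsFiniteMeasure M := ⟨mass_le.trans_lt hc.lt_top⟩
  have : NeZero M := ⟨fun h0 ↦ by simp [h0] at one_le_mass⟩
  refine ⟨(M univ)⁻¹ • M, inferInstance, inferInstance, ?_, ?_⟩
  · gcongr
    exact le_orbitSup
  · calc (M univ)⁻¹ • M ≤ (1 : ENNReal) • M := by
          gcongr
          exact ENNReal.inv_le_one.2 one_le_mass
      _ ≤ c • ν := by rwa [one_smul]

end OrbitSup

lemma lipschitzWith_of_mem_zpowers {X : Type*} [PseudoEMetricSpace X] {K : NNReal}
    {g γ : Equiv.Perm X} (hlip : ∀ k : ℕ, LipschitzWith K g^[k])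
    (hlip' : ∀ k : ℕ, LipschitzWith K g.symm^[k])
    (hγ : γ ∈ Subgroup.zpowers g) : LipschitzWith K γ := by
  obtain ⟨k, rfl⟩ := hγ
  obtain ⟨m, rfl | rfl⟩ := k.eq_nat_or_neg
  · simpa [Equiv.Perm.iterate_eq_pow] using hlip m
  · simpa [Equiv.Perm.iterate_eq_pow, ← Equiv.Perm.inv_def] using hlip' m

section LipschitzGroup

variable {X : Type*} [EMetricSpace X] [MeasurableSpace X] [BorelSpace X]
  {d : ℝ} {K : NNReal}

lemma map_hausdorffMeasure_le {Y : Type*} [EMetricSpace Y] [MeasurableSpace Y] [BorelSpace Y]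
    {f : X → Y} (hd : 0 ≤ d) (hf : AntilipschitzWith K f) (hfm : Measurable f) :
    μH[d].map f ≤ (K : ENNReal) ^ d • μH[d] := by
  refine Measure.le_iff.2 fun A hA ↦ ?_
  rw [map_apply hfm hA]
  exact hf.hausdorffMeasure_preimage_le hd A

theorem exists_smulInvariantMeasure_of_lipschitzWith {G : Type*} [Group G] [MulAction G X]
    (hd : 0 ≤ d) [IsProbabilityMeasure (μH[d] : Measure X)]
    (hlip : ∀ γ : G, LipschitzWith K (γ • · : X → X)) :
    ∃ μ : Measure X, IsProbabilityMeasure μ ∧ SMulInvariantMeasure G X μ ∧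
      ((K : ENNReal) ^ d)⁻¹ • μH[d] ≤ μ ∧ μ ≤ (K : ENNReal) ^ d • μH[d] := by
  have : ContinuousConstSMul G X := ⟨fun γ ↦ (hlip γ).continuous⟩
  refine exists_smulInvariantMeasure_of_map_smul_le
    (ENNReal.rpow_ne_top_of_nonneg hd ENNReal.coe_ne_top) fun γ ↦ ?_
  exact map_hausdorffMeasure_le hd ((hlip γ⁻¹).to_rightInverse (inv_smul_smul γ))
    (measurable_const_smul γ)

theorem exists_invariant_measure_equivalent_to_leb_general (g : Equiv.Perm X)
    (hd : 0 ≤ d) [IsProbabilityMeasure (μH[d] : Measure X)]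
    (hlip : ∀ k : ℕ, LipschitzWith K g^[k]) (hlip' : ∀ k : ℕ, LipschitzWith K g.symm^[k]) :
    ∃ μ : Measure X, IsProbabilityMeasure μ ∧
      (∀ A : Set X, MeasurableSet A → μ (g ⁻¹' A) = μ A) ∧
      (∀ A : Set X, MeasurableSet A →
        ((K : ENNReal) ^ d)⁻¹ * μH[d] A ≤ μ A ∧ μ A ≤ (K : ENNReal) ^ d * μH[d] A) ∧
      μ ≪ μH[d] ∧ μH[d] ≪ μ := by
  obtain ⟨μ, hprob, hinv, hge, hle⟩ :=
    exists_smulInvariantMeasure_of_lipschitzWith (G := Subgroup.zpowers g) hd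
      fun γ ↦ lipschitzWith_of_mem_zpowers hlip hlip' γ.2
  have hKd : ((K : ENNReal) ^ d)⁻¹ ≠ 0 :=
    ENNReal.inv_ne_zero.2 (ENNReal.rpow_ne_top_of_nonneg hd ENNReal.coe_ne_top)
  exact ⟨μ, hprob, fun A ↦ hinv.measure_preimage_smul ⟨g, Subgroup.mem_zpowers g⟩ (s := A),
    fun A _ ↦ ⟨hge A, hle A⟩, absolutelyContinuous_of_le_smul hle,
    (absolutelyContinuous_smul hKd).trans hge.absolutelyContinuous⟩

end LipschitzGroup

lemma hausdorffMeasure_image_of_isometry_domRestrict {X Y : Type*}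
    [EMetricSpace X] [MeasurableSpace X] [BorelSpace X]
    [EMetricSpace Y] [MeasurableSpace Y] [BorelSpace Y]
    {f : X → Y} {d : ℝ} {U A : Set X} (hd : 0 ≤ d)
    (hf : Isometry (U.domRestrict f)) (hA : A ⊆ U) : μH[d] (f '' A) = μH[d] A := by
  have hfA := hf.hausdorffMeasure_image (.inl hd) ((↑) ⁻¹' A)
  have hvalA := (isometry_subtype_coe (s := U)).hausdorffMeasure_image (.inl hd) ((↑) ⁻¹' A)
  rw [image_domRestrict, inter_eq_left.2 hA] at hfA
  rw [Subtype.image_preimage_coe, inter_eq_right.2 hA] at hvalA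
  rw [hfA, hvalA]

/-- A map is locally isometric if every point has a neighbourhood on which it preserves distances.
It need not be injective: the model case is the projection of a normed group onto its quotient by a
uniformly discrete subgroup. -/
def IsLocallyIsometric {X Y : Type*} [PseudoEMetricSpace X] [PseudoEMetricSpace Y]
    (f : X → Y) : Prop :=
  ∀ x, ∃ U ∈ 𝓝 x, Isometry (U.domRestrict f)

namespace IsLocallyIsometric

section Pseudo

variable {X Y : Type*} [PseudoEMetricSpace X] [PseudoEMetricSpace Y] {f : X → Y}

protected lemma continuous (hf : IsLocallyIsometric f) : Continuous f :=
  continuous_iff_continuousAt.2 fun x ↦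
    let ⟨_, hU, hfU⟩ := hf x
    (continuousOn_iff_continuous_domRestrict.2 hfU.continuous).continuousAt hU

lemma domRestrict (hf : IsLocallyIsometric f) (s : Set X) : IsLocallyIsometric (s.domRestrict f) :=
  fun x ↦
    let ⟨U, hU, hfU⟩ := hf x
    ⟨Subtype.val ⁻¹' U, continuous_subtype_val.continuousAt.preimage_mem_nhds hU,
      fun y z ↦ hfU ⟨y, y.2⟩ ⟨z, z.2⟩⟩

end Pseudo

variable {X Y : Type*} [EMetricSpace X] [MeasurableSpace X] [BorelSpace X]
  [EMetricSpace Y] [MeasurableSpace Y] [BorelSpace Y] {f : X → Y} {d : ℝ}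

lemma comap_hausdorffMeasure [SecondCountableTopology X] (hf : IsLocallyIsometric f)
    (hfe : MeasurableEmbedding f) (hd : 0 ≤ d) : comap f μH[d] = μH[d] := by
  choose U hU hfU using hf
  obtain ⟨c, hc, hcover⟩ := TopologicalSpace.countable_cover_nhds hU
  refine (ext_iff_of_biUnion_eq_univ hc hcover).2 fun x _ ↦ ?_
  ext A hA
  rw [Measure.restrict_apply hA, Measure.restrict_apply hA, hfe.comap_apply,
    hausdorffMeasure_image_of_isometry_domRestrict hd (hfU x) inter_subset_right]

lemma map_hausdorffMeasure [SecondCountableTopology X] (hf : IsLocallyIsometric f)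
    (hfe : MeasurableEmbedding f) (hd : 0 ≤ d) : μH[d].map f = μH[d].restrict (range f) := by
  rw [← hf.comap_hausdorffMeasure hfe hd, hfe.map_comap]

theorem map_restrict_hausdorffMeasure [PolishSpace X] (hf : IsLocallyIsometric f) {s : Set X}
    (hs : MeasurableSet s) (hinj : InjOn f s) (hd : 0 ≤ d) :
    (μH[d].restrict s).map f = μH[d].restrict (f '' s) := by
  have hval : (μH[d] : Measure s).map (↑) = μH[d].restrict s := by
    simpa using (isometry_subtype_coe (s := s)).map_hausdorffMeasure (.inl hd)
  rw [← hval, map_map hf.continuous.measurable measurable_subtype_coe, ← range_domRestrict]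
  exact (hf.domRestrict s).map_hausdorffMeasure
    (hf.continuous.continuousOn.measurableEmbedding hs hinj) hd

end IsLocallyIsometric

section Quotient

variable {E : Type*} [SeminormedAddCommGroup E] {S : AddSubgroup E} {r : ℝ}

lemma norm_quotientMk_eq (hS : ∀ m ∈ S, m ≠ 0 → 2 * r ≤ ‖m‖) {x : E} (hx : ‖x‖ ≤ r) :
    ‖(x : E ⧸ S)‖ = ‖x‖ := by
  refine le_antisymm QuotientAddGroup.norm_mk_le_norm (QuotientAddGroup.le_norm_iff.2 fun y hy ↦ ?_)
  have hmem : -y + x ∈ S := QuotientAddGroup.eq.1 hy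
  obtain h0 | h0 := eq_or_ne (-y + x) 0
  · rw [neg_add_eq_zero.1 h0]
  · have := norm_add_le (-y) x
    rw [norm_neg] at this
    linarith [hS _ hmem h0]

lemma isLocallyIsometric_quotientMk (hr : 0 < r) (hS : ∀ m ∈ S, m ≠ 0 → 2 * r ≤ ‖m‖) :
    IsLocallyIsometric ((↑) : E → E ⧸ S) := fun x ↦ by
  refine ⟨Metric.ball x (r / 2), Metric.ball_mem_nhds x (half_pos hr),
    Isometry.of_dist_eq fun y z ↦ ?_⟩
  have hyz : dist (y : E) z ≤ r := by
    linarith [dist_triangle_right (y : E) z x, Metric.mem_ball.1 y.2, Metric.mem_ball.1 z.2]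
  rw [dist_eq_norm] at hyz
  rw [Subtype.dist_eq, dist_eq_norm, dist_eq_norm, ← norm_quotientMk_eq hS hyz]
  rfl

end Quotient

section Torus

variable (n : ℕ)

lemma isClosed_intLattice : IsClosed (intLattice n : Set (Fin n → ℝ)) := by
  have : (intLattice n : Set (Fin n → ℝ)) = univ.pi fun _ ↦ range ((↑) : ℤ → ℝ) := by
    ext x
    simp [intLattice, eq_comm]
  rw [this]
  exact isClosed_set_pi fun _ _ ↦ Int.isClosedEmbedding_coe_real.isClosed_range

variable {n} in
lemma one_le_norm_of_mem_intLattice {m : Fin n → ℝ} (hm : m ∈ intLattice n) (h0 : m ≠ 0) :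
    1 ≤ ‖m‖ := by
  obtain ⟨i, hi⟩ := Function.ne_iff.1 h0
  obtain ⟨k, hk⟩ := hm i
  have hk0 : k ≠ 0 := by
    rintro rfl
    simp [hk] at hi
  calc (1 : ℝ) ≤ |(k : ℝ)| := mod_cast Int.one_le_abs hk0
    _ = ‖m i‖ := by rw [hk, Real.norm_eq_abs]
    _ ≤ ‖m‖ := norm_le_pi_norm m i

lemma isLocallyIsometric_torusProj : IsLocallyIsometric (torusProj n) :=
  isLocallyIsometric_quotientMk (r := 1 / 2) (by norm_num) fun m hm h0 ↦ by
    linarith [one_le_norm_of_mem_intLattice hm h0]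

variable {n} in
lemma torusProj_eq_iff {x y : Fin n → ℝ} :
    torusProj n x = torusProj n y ↔ ∀ i, Int.fract (x i) = Int.fract (y i) := by
  simp only [eq_comm (a := torusProj n x), Int.fract_eq_fract]
  refine QuotientAddGroup.eq.trans (forall_congr' fun i ↦ ?_)
  simp [neg_add_eq_sub]

lemma bijOn_torusProj_cube :
    BijOn (torusProj n) (univ.pi fun _ ↦ Ico (0 : ℝ) 1) univ := by
  refine ⟨mapsTo_univ _ _, fun x hx y hy h ↦ funext fun i ↦ ?_, fun z _ ↦ ?_⟩
  · rw [← Int.fract_eq_self.2 (hx i trivial), ← Int.fract_eq_self.2 (hy i trivial)]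
    exact torusProj_eq_iff.1 h i
  · obtain ⟨x, rfl⟩ := QuotientAddGroup.mk_surjective z
    exact ⟨fun i ↦ Int.fract (x i), fun i _ ↦ ⟨Int.fract_nonneg _, Int.fract_lt_one _⟩,
      torusProj_eq_iff.2 fun i ↦ Int.fract_fract (x i)⟩

instance isProbabilityMeasure_torusLeb : IsProbabilityMeasure (torusLeb n) where
  measure_univ := by
    rw [torusLeb, map_apply (isLocallyIsometric_torusProj n).continuous.measurable .univ]
    simp [volume_pi_pi]

-- Only local: closedness upgrades the quotient seminorm to a norm, and a global instance could
-- change the metric structure found by instance search in statements about `Torus n`.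
attribute [local instance] isClosed_intLattice

theorem torusLeb_eq_hausdorffMeasure : torusLeb n = μH[n] := by
  have hvol : (volume : Measure (Fin n → ℝ)) = μH[n] := by
    rw [← hausdorffMeasure_pi_real, Fintype.card_fin]
  rw [torusLeb, hvol, (isLocallyIsometric_torusProj n).map_restrict_hausdorffMeasure
    (.univ_pi fun _ ↦ measurableSet_Ico) (bijOn_torusProj_cube n).injOn n.cast_nonneg,
    (bijOn_torusProj_cube n).image_eq, Measure.restrict_univ]

end Torus

/-- **An equi-Lipschitz homeomorphism of the torus has an invariant measure
comparable to Lebesgue.**  If `g` is a homeomorphism of `𝕋ⁿ` all of whose iterates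
`gᵏ, k ∈ ℤ`, are `K`-Lipschitz (`K ≥ 1`), then there is a `g`-invariant Borel
probability measure `μ` on `𝕋ⁿ` with
`K⁻ⁿ · Leb A ≤ μ A ≤ Kⁿ · Leb A` for every Borel set `A`;
in particular `μ` is equivalent to `Leb`. -/
theorem exists_invariant_measure_equivalent_to_leb
    (n : ℕ) (g : Torus n ≃ₜ Torus n)
    (K : NNReal) (hK : 1 ≤ K)
    (hlip : ∀ k : ℕ, LipschitzWith K (⇑g)^[k])
    (hlip' : ∀ k : ℕ, LipschitzWith K (⇑g.symm)^[k]) :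
    ∃ μ : Measure (Torus n), IsProbabilityMeasure μ ∧
      (∀ A : Set (Torus n), MeasurableSet A → μ (⇑g ⁻¹' A) = μ A) ∧
      (∀ A : Set (Torus n), MeasurableSet A →
        ((K : ENNReal) ^ n)⁻¹ * torusLeb n A ≤ μ A ∧
          μ A ≤ (K : ENNReal) ^ n * torusLeb n A) ∧
      μ ≪ torusLeb n ∧ torusLeb n ≪ μ := by
  have := isClosed_intLattice n
  have : IsProbabilityMeasure (μH[n] : Measure (Torus n)) :=
    torusLeb_eq_hausdorffMeasure n ▸ isProbabilityMeasure_torusLeb n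
  simpa [torusLeb_eq_hausdorffMeasure] using
    exists_invariant_measure_equivalent_to_leb_general g.toEquiv n.cast_nonneg hlip hlip'
end
end

section
/- Let G : ℝⁿ → ℝⁿ be a bijection such that both G and G⁻¹ are Lipschitz, and suppose G is differentiable at a point q₀ with derivative L = DG(q₀). Then L is an invertible linear map, G⁻¹ is differentiable at G(q₀), and DG⁻¹(G(q₀)) = L⁻¹. -/
/-!
Write `b = G q₀`. The Lipschitz bound on `G⁻¹` passes to the limit in the difference quotients of
`G`, so `L` is bounded below. Moreover `y - b = G (G⁻¹ y) - G (G⁻¹ b)` equals `L (G⁻¹ y - G⁻¹ b)` up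
to an error `o(G⁻¹ y - G⁻¹ b)`, which is `o(y - b)`: that is, `L ∘ G⁻¹` has derivative `id` at `b`.
A derivative takes its values in the closed span of the values of the function, so `L` has dense
range and hence is invertible, and then `G⁻¹ = L⁻¹ ∘ (L ∘ G⁻¹)` has derivative `L⁻¹` at `b`.
Obtaining surjectivity from the dense range, instead of counting dimensions, makes the argument work
in Banach spaces.
-/

open Asymptotics Bornology Filter Topology
open scoped NNReal

section LocalInverse

variable {𝕜 E F : Type*} [NontriviallyNormedField 𝕜]
  [NormedAddCommGroup E] [NormedSpace 𝕜 E] [NormedAddCommGroup F] [NormedSpace 𝕜 F]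
  {f : E → F} {f' : E →L[𝕜] F} {g : F → E} {a : E} {b : F}

theorem tendsto_add_inv_smul_cobounded (a v : E) :
    Tendsto (fun c : 𝕜 ↦ a + c⁻¹ • v) (cobounded 𝕜) (𝓝 a) := by
  have inv_smul_tendsto : Tendsto (fun c : 𝕜 ↦ c⁻¹ • v) (cobounded 𝕜) (𝓝 0) := by
    simpa only [zero_smul] using (tendsto_inv₀_cobounded (α := 𝕜)).smul_const v
  simpa only [add_zero] using inv_smul_tendsto.const_add a

theorem antilipschitzWith_of_hasFDerivAt_of_eventually_norm_sub_le {K : ℝ≥0}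
    (hf : HasFDerivAt f f' a) (hK : ∀ᶠ x in 𝓝 a, ‖x - a‖ ≤ K * ‖f x - f a‖) :
    AntilipschitzWith K f' := by
  refine f'.antilipschitz_of_bound fun v ↦ ?_
  have quotient_tendsto := hf.lim v (c := id) (l := cobounded 𝕜) tendsto_norm_cobounded_atTop
  refine ge_of_tendsto (quotient_tendsto.norm.const_mul (K : ℝ)) ?_
  filter_upwards [(tendsto_add_inv_smul_cobounded a v).eventually hK, eventually_ne_cobounded 0]
    with c hc hc₀
  calc
    ‖v‖ = ‖c‖ * ‖a + c⁻¹ • v - a‖ := by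
      rw [add_sub_cancel_left, ← norm_smul, smul_inv_smul₀ hc₀]
    _ ≤ ‖c‖ * (K * ‖f (a + c⁻¹ • v) - f a‖) := by gcongr
    _ = K * ‖c • (f (a + c⁻¹ • v) - f a)‖ := by rw [norm_smul, mul_left_comm]

theorem hasFDerivAt_apply_mem_topologicalClosure (hf : HasFDerivAt f f' a) {S : Submodule 𝕜 F}
    (hS : ∀ᶠ x in 𝓝 a, f x ∈ S) (v : E) : f' v ∈ S.topologicalClosure := by
  refine mem_closure_of_tendsto
    (hf.lim v (c := id) (l := cobounded 𝕜) tendsto_norm_cobounded_atTop) ?_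
  filter_upwards [(tendsto_add_inv_smul_cobounded a v).eventually hS] with c hc
  exact S.smul_mem c (S.sub_mem hc hS.self_of_nhds)

theorem continuousAt_of_isBigO_sub (hg : (fun y ↦ g y - g b) =O[𝓝 b] fun y ↦ y - b) :
    ContinuousAt g b :=
  tendsto_sub_nhds_zero_iff.1 <| hg.trans_tendsto <| tendsto_sub_nhds_zero_iff.2 tendsto_id

theorem exists_antilipschitzWith_of_eventually_leftInverse (hf : HasFDerivAt f f' a)
    (hgf : ∀ᶠ x in 𝓝 a, g (f x) = x)
    (hg : (fun y ↦ g y - g (f a)) =O[𝓝 (f a)] fun y ↦ y - f a) :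
    ∃ K, AntilipschitzWith K f' := by
  obtain ⟨K, hK₀, hK⟩ := hg.exists_nonneg
  lift K to ℝ≥0 using hK₀
  refine ⟨K, antilipschitzWith_of_hasFDerivAt_of_eventually_norm_sub_le hf ?_⟩
  filter_upwards [hf.continuousAt.eventually hK.bound, hgf] with x hx hgfx
  rwa [hgfx, hgf.self_of_nhds] at hx

theorem hasFDerivAt_comp_of_eventually_rightInverse (hf : HasFDerivAt f f' (g b))
    (hfg : ∀ᶠ y in 𝓝 b, f (g y) = y) (hg : (fun y ↦ g y - g b) =O[𝓝 b] fun y ↦ y - b) :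
    HasFDerivAt (f' ∘ g) (ContinuousLinearMap.id 𝕜 F) b := by
  have remainder : (fun y ↦ f (g y) - f (g b) - f' (g y - g b)) =o[𝓝 b] fun y ↦ y - b :=
    (hf.isLittleO.comp_tendsto (continuousAt_of_isBigO_sub hg)).trans_isBigO hg
  refine .of_isLittleO (remainder.neg_left.congr' ?_ .rfl)
  filter_upwards [hfg] with y hy
  simp [hy, hfg.self_of_nhds]

theorem isInvertible_of_antilipschitzWith_of_topologicalClosure_range_eq_top [CompleteSpace E]
    {K : ℝ≥0} (hf' : AntilipschitzWith K f') (hdense : f'.range.topologicalClosure = ⊤) :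
    f'.IsInvertible := by
  have hsurj : Function.Surjective f' :=
    LinearMap.range_eq_top.1 <|
      (ContinuousLinearMap.closed_range_of_antilipschitz hf').symm.trans hdense
  let e := LinearEquiv.ofBijective (f' : E →ₗ[𝕜] F) ⟨hf'.injective, hsurj⟩
  exact ⟨⟨e, f'.continuous, (hf'.to_rightInverse e.apply_symm_apply).continuous⟩, rfl⟩

theorem inverse_differentiable_of_biLipschitz_general [CompleteSpace E]
    (hf : HasFDerivAt f f' a) (hgf : ∀ᶠ x in 𝓝 a, g (f x) = x)
    (hfg : ∀ᶠ y in 𝓝 (f a), f (g y) = y)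
    (hg : (fun y ↦ g y - g (f a)) =O[𝓝 (f a)] fun y ↦ y - f a) :
    ∃ e : E ≃L[𝕜] F, (e : E →L[𝕜] F) = f' ∧ HasFDerivAt g (e.symm : F →L[𝕜] E) (f a) := by
  obtain ⟨K, hK⟩ := exists_antilipschitzWith_of_eventually_leftInverse hf hgf hg
  have hcomp : HasFDerivAt (f' ∘ g) (ContinuousLinearMap.id 𝕜 F) (f a) :=
    hasFDerivAt_comp_of_eventually_rightInverse (hgf.self_of_nhds.symm ▸ hf) hfg hg
  have hdense : f'.range.topologicalClosure = ⊤ :=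
    eq_top_iff.2 fun v _ ↦ hasFDerivAt_apply_mem_topologicalClosure hcomp
      (.of_forall fun y ↦ LinearMap.mem_range_self f'.toLinearMap (g y)) v
  obtain ⟨e, rfl⟩ := isInvertible_of_antilipschitzWith_of_topologicalClosure_range_eq_top hK hdense
  refine ⟨e, rfl, e.comp_hasFDerivAt_iff.1 ?_⟩
  simpa using hcomp

end LocalInverse

/-- **Differentiability of the inverse of a bi-Lipschitz bijection at a point of
differentiability.**  Let `G : ℝⁿ → ℝⁿ` be a bijection such that `G` and `G⁻¹` are
Lipschitz, and suppose `G` is (Fréchet) differentiable at `q₀` with derivative `L`.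
Then `L` is invertible, `G⁻¹` is differentiable at `G q₀`, and `D G⁻¹ (G q₀) = L⁻¹`. -/
theorem inverse_differentiable_of_biLipschitz
    (n : ℕ) (G : (Fin n → ℝ) ≃ (Fin n → ℝ))
    (K₁ K₂ : NNReal) (hG : LipschitzWith K₁ ⇑G) (hGinv : LipschitzWith K₂ ⇑G.symm)
    (q₀ : Fin n → ℝ) (L : (Fin n → ℝ) →L[ℝ] (Fin n → ℝ))
    (hL : HasFDerivAt (⇑G) L q₀) :
    ∃ e : (Fin n → ℝ) ≃L[ℝ] (Fin n → ℝ),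
      (e : (Fin n → ℝ) →L[ℝ] (Fin n → ℝ)) = L ∧
      HasFDerivAt (⇑G.symm) (e.symm : (Fin n → ℝ) →L[ℝ] (Fin n → ℝ)) (G q₀) := by
  exact inverse_differentiable_of_biLipschitz_general hL
    (.of_forall G.symm_apply_apply) (.of_forall G.apply_symm_apply)
    (.of_bound K₂ (.of_forall fun y ↦ hGinv.norm_sub_le y (G q₀)))
end

section
/- Let f : 𝕋ⁿ → 𝕋ⁿ be a homeomorphism and let g, h : 𝕋ⁿ → 𝕋ⁿ be continuous maps, each homotopic to the identity, such that g(f(x)) = g(x) + α and h(f(x)) = h(x) + β for all x ∈ 𝕋ⁿ, where α, β ∈ 𝕋ⁿ. Then α = β. -/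
noncomputable section

/-! Since `g` and `h` are homotopic, `g - h` is null-homotopic, so it lifts through the covering
`E → E ⧸ Λ` to a map `D : X → E`. The difference `D ∘ f - D` lifts the constant `α - β`, hence is
itself a constant `c`, and `D (f^[k] x) = D x + k • c` for all `k`. A bounded set contains no
nonconstant infinite arithmetic progression, so `c = 0`. -/

open Bornology Filter Topology

section BoundedSemiconjugacy

variable {E : Type*} [AddCommGroup E] [Module ℝ E] [TopologicalSpace E] [IsTopologicalAddGroup E]
  [T2Space E]

lemma eq_zero_of_forall_add_nsmul_mem {s : Set E} (hs : IsVonNBounded ℝ s) {a c : E}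
    (h : ∀ k : ℕ, a + k • c ∈ s) : c = 0 := by
  have tendsto_inv : Tendsto (fun k : ℕ ↦ (k : ℝ)⁻¹) atTop (𝓝 0) :=
    tendsto_inv_atTop_nhds_zero_nat
  have tendsto_progression : Tendsto (fun k : ℕ ↦ (k : ℝ)⁻¹ • (a + k • c)) atTop (𝓝 0) :=
    hs.smul_tendsto_zero (.of_forall h) tendsto_inv
  have tendsto_start : Tendsto (fun k : ℕ ↦ (k : ℝ)⁻¹ • a) atTop (𝓝 0) :=
    hs.smul_tendsto_zero (.of_forall fun _ ↦ by simpa using h 0) tendsto_inv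
  have tendsto_step : Tendsto (fun _ : ℕ ↦ c) atTop (𝓝 0) := by
    rw [← sub_zero (0 : E)]
    refine (tendsto_progression.sub tendsto_start).congr' ?_
    filter_upwards [eventually_ne_atTop 0] with k hk
    rw [smul_add, add_sub_cancel_left, ← Nat.cast_smul_eq_nsmul ℝ,
      inv_smul_smul₀ (Nat.cast_ne_zero.mpr hk)]
  exact tendsto_nhds_unique tendsto_const_nhds tendsto_step

lemma eq_zero_of_semiconj_add_right {X : Type*} [Nonempty X] {D : X → E} {f : X → X} {c : E}
    (hD : IsVonNBounded ℝ (Set.range D)) (h : Function.Semiconj D f (· + c)) : c = 0 := by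
  obtain ⟨x⟩ := ‹Nonempty X›
  refine eq_zero_of_forall_add_nsmul_mem hD (a := D x) fun k ↦ ⟨f^[k] x, ?_⟩
  rw [(h.iterate_right k).eq, add_right_iterate]

end BoundedSemiconjugacy

section Lifting

lemma exists_lift_of_homotopic {A E X : Type*} [TopologicalSpace A] [TopologicalSpace E]
    [TopologicalSpace X] {p : E → X} (hp : IsCoveringMap p) {F₀ F₁ : C(A, X)}
    (hF : F₀.Homotopic F₁) (G₀ : C(A, E)) (hG₀ : ∀ a, p (G₀ a) = F₀ a) :
    ∃ G₁ : C(A, E), ∀ a, p (G₁ a) = F₁ a := by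
  obtain ⟨H⟩ := hF
  have H_zero (a : A) : H (0, a) = p (G₀ a) := (H.apply_zero a).trans (hG₀ a).symm
  refine ⟨(hp.liftHomotopy H G₀ H_zero).comp (.prodMk (.const A 1) (.id A)), fun a ↦ ?_⟩
  exact (congr_fun (hp.liftHomotopy_lifts H G₀ H_zero) (1, a)).trans (H.apply_one a)

lemma homotopic_zero_sub_of_homotopic {X G : Type*} [TopologicalSpace X] [TopologicalSpace G]
    [AddGroup G] [IsTopologicalAddGroup G] {g h : C(X, G)} (hgh : g.Homotopic h) :
    (0 : C(X, G)).Homotopic (g - h) := by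
  let subMap : C(G × G, G) := ⟨fun p ↦ p.1 - p.2, by fun_prop⟩
  have hsub : (subMap.comp (h.prodMk h)).Homotopic (subMap.comp (g.prodMk h)) :=
    (ContinuousMap.Homotopic.refl subMap).comp (hgh.symm.prodMk (.refl h))
  convert! hsub using 1
  ext x
  exact (sub_self (h x)).symm

variable {E : Type*} [AddCommGroup E] [TopologicalSpace E] [IsTopologicalAddGroup E]
  (Λ : AddSubgroup E) [DiscreteTopology Λ]

lemma isCoveringMap_quotientAddGroup_mk : IsCoveringMap (QuotientAddGroup.mk : E → E ⧸ Λ) :=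
  (Λ.isAddQuotientCoveringMap_of_comm DiscreteTopology.isDiscrete).isCoveringMap

variable {Λ}

lemma exists_lift_sub_of_homotopic {X : Type*} [TopologicalSpace X] {g h : C(X, E ⧸ Λ)}
    (hgh : g.Homotopic h) : ∃ D : C(X, E), ∀ x, (D x : E ⧸ Λ) = g x - h x :=
  exists_lift_of_homotopic (isCoveringMap_quotientAddGroup_mk Λ)
    (homotopic_zero_sub_of_homotopic hgh) 0 fun _ ↦ rfl

end Lifting

section Torus

lemma compactSpace_quotient_span_int {ι E : Type*} [Finite ι] [NormedAddCommGroup E]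
    [NormedSpace ℝ E] (b : Module.Basis ι ℝ E) :
    CompactSpace (E ⧸ (Submodule.span ℤ (Set.range b)).toAddSubgroup) := by
  have := Fintype.ofFinite ι
  have := b.finiteDimensional_of_finite
  have := FiniteDimensional.proper_real E
  refine ⟨((ZSpan.fundamentalDomain_isBounded b).isCompact_closure.image
    continuous_quotient_mk').of_isClosed_subset isClosed_univ ?_⟩
  rintro ⟨x⟩ -
  refine ⟨ZSpan.fract b x, subset_closure (ZSpan.fract_mem_fundamentalDomain b x), ?_⟩
  exact QuotientAddGroup.eq.mpr <| (ZSpan.fract_eq_fract b _ _).mp (ZSpan.fract_fract b x)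

lemma intLattice_eq_span_basisFun (n : ℕ) :
    intLattice n = (Submodule.span ℤ (Set.range (Pi.basisFun ℝ (Fin n)))).toAddSubgroup := by
  ext x
  rw [Submodule.mem_toAddSubgroup, Module.Basis.mem_span_iff_repr_mem]
  exact forall_congr' fun i ↦ exists_congr fun m ↦ eq_comm

instance (n : ℕ) : DiscreteTopology (intLattice n) := by
  rw [intLattice_eq_span_basisFun]
  infer_instance

instance (n : ℕ) : CompactSpace (Torus n) := by
  unfold Torus
  rw [intLattice_eq_span_basisFun]
  exact compactSpace_quotient_span_int _

instance (n : ℕ) : ConnectedSpace (Torus n) :=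
  inferInstanceAs <| ConnectedSpace (Quotient _)

end Torus

theorem translation_eq_of_semiconjugacies_general {E X : Type*} [AddCommGroup E] [Module ℝ E]
    [TopologicalSpace E] [IsTopologicalAddGroup E] [ContinuousSMul ℝ E] [T2Space E]
    {Λ : AddSubgroup E} [DiscreteTopology Λ]
    [TopologicalSpace X] [CompactSpace X] [ConnectedSpace X]
    (f : C(X, X)) {g h : C(X, E ⧸ Λ)} (hgh : g.Homotopic h) {α β : E ⧸ Λ}
    (hgf : ∀ x, g (f x) = g x + α) (hhf : ∀ x, h (f x) = h x + β) : α = β := by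
  obtain ⟨D, hD⟩ := exists_lift_sub_of_homotopic hgh
  have mk_increment (x : X) : ((D (f x) - D x : E) : E ⧸ Λ) = α - β := by
    rw [QuotientAddGroup.mk_sub, hD, hD, hgf, hhf]
    abel
  have increment_const (x y : X) : D (f x) - D x = D (f y) - D y :=
    (isCoveringMap_quotientAddGroup_mk Λ).const_of_comp (g := fun x ↦ D (f x) - D x)
      (by fun_prop) (fun x y ↦ (mk_increment x).trans (mk_increment y).symm) x y
  obtain ⟨x₀⟩ := ‹ConnectedSpace X›.toNonempty
  have increment_eq_zero : D (f x₀) - D x₀ = 0 :=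
    eq_zero_of_semiconj_add_right ((isCompact_range D.continuous).isVonNBounded ℝ)
      fun x ↦ sub_eq_iff_eq_add'.mp (increment_const x x₀)
  rw [← sub_eq_zero, ← mk_increment x₀, increment_eq_zero, QuotientAddGroup.mk_zero]

/-- **Uniqueness of the translation to which maps homotopic to the identity
semi-conjugate a homeomorphism.**  Let `f` be a homeomorphism of `𝕋ⁿ` and
`g, h : 𝕋ⁿ → 𝕋ⁿ` continuous maps homotopic to the identity satisfying
`g ∘ f = g + α` and `h ∘ f = h + β`.  Then `α = β`. -/
theorem translation_eq_of_semiconjugacies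
    (n : ℕ) (f : Torus n ≃ₜ Torus n)
    (g h : C(Torus n, Torus n))
    (hg : g.Homotopic (ContinuousMap.id (Torus n)))
    (hh : h.Homotopic (ContinuousMap.id (Torus n)))
    (α β : Torus n)
    (hgf : ∀ x : Torus n, g (f x) = g x + α)
    (hhf : ∀ x : Torus n, h (f x) = h x + β) :
    α = β :=
  translation_eq_of_semiconjugacies_general (f : C(Torus n, Torus n)) (hg.trans hh.symm) hgf hhf
end
end

section
/- Let U ⊆ ℝⁿ, let c : U → ℝⁿ, and for each a ∈ U let u_a : ℝⁿ → ℝ be a differentiable ℤⁿ-periodic function; set η_a(q) = c(a) + ∇u_a(q). Let 𝒰 ⊆ ℝⁿ × ℝⁿ contain the graph {(q, η_a(q)) : q ∈ ℝⁿ} of every η_a, and let H : 𝒰 → ℝ be strictly convex in the fiber: whenever (q,p), (q,p') ∈ 𝒰 with p ≠ p', λ ∈ (0,1), and (q, λp + (1−λ)p') ∈ 𝒰, one has H(q, λp + (1−λ)p') < λH(q,p) + (1−λ)H(q,p'). Let A : ℝⁿ → ℝ satisfy H(q, η_a(q)) = A(c(a)) for all q ∈ ℝⁿ and a ∈ U.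 Suppose a₁, a₂, a₃ ∈ U and λ ∈ (0,1) are such that c(a₃) = λ c(a₁) + (1−λ) c(a₂), the graphs of η_{a₁} and η_{a₂} are disjoint (η_{a₁}(q) ≠ η_{a₂}(q) for all q), and (q, λη_{a₁}(q) + (1−λ)η_{a₂}(q)) ∈ 𝒰 for all q. Then A(c(a₃)) < λ A(c(a₁)) + (1−λ) A(c(a₂)). -/
/-!
Put `v = λ u₁ + (1 - λ) u₂ - u₃`. Being continuous and periodic, `v` attains its maximum, and the
gradient vanishes there. Since the constant parts `c` satisfy the same linear relation, at this
point `q` the momentum `η₃ q` is the convex combination `λ η₁ q + (1 - λ) η₂ q`. Strict convexity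
of `H` in the fiber over this single `q` then compares the three constant values of `H`.
-/

section Periodic

open Module Function

theorem periodic_of_mem_span_int {E β : Type*} [AddCommGroup E] {f : E → β} {s : Set E}
    (hf : ∀ v ∈ s, Periodic f v) {v : E} (hv : v ∈ Submodule.span ℤ s) : Periodic f v := by
  induction hv using Submodule.span_induction with
  | mem v hv => exact hf v hv
  | zero => exact fun x => congrArg f (add_zero x)
  | add v w _ _ hv hw => exact hv.add_period hw
  | smul m v _ hv => exact hv.zsmul m

variable {ι E : Type*} [Finite ι] [NormedAddCommGroup E] [NormedSpace ℝ E] (b : Basis ι ℝ E)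

theorem exists_forall_le_of_continuous_of_periodic {β : Type*} [LinearOrder β]
    [TopologicalSpace β] [ClosedIciTopology β] {f : E → β} (hf : Continuous f)
    (hper : ∀ i, Periodic f (b i)) : ∃ q, ∀ x, f x ≤ f q := by
  have := Fintype.ofFinite ι
  have := b.finiteDimensional_of_finite
  have := FiniteDimensional.proper_real E
  let cell := closure (ZSpan.fundamentalDomain b)
  have fract_mem (x : E) : ZSpan.fract b x ∈ cell :=
    subset_closure (ZSpan.fract_mem_fundamentalDomain b x)
  have f_fract (x : E) : f (ZSpan.fract b x) = f x :=
    (periodic_of_mem_span_int (Set.forall_mem_range.2 hper) (ZSpan.floor b x).2).sub_eq x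
  have hcell : IsCompact cell := (ZSpan.fundamentalDomain_isBounded b).isCompact_closure
  obtain ⟨q, -, hq⟩ := hcell.exists_isMaxOn ⟨_, fract_mem 0⟩ hf.continuousOn
  exact ⟨q, fun x => f_fract x ▸ hq (fract_mem x)⟩

theorem exists_fderiv_eq_zero_of_periodic {f : E → ℝ} (hf : Differentiable ℝ f)
    (hper : ∀ i, Periodic f (b i)) : ∃ q, fderiv ℝ f q = 0 := by
  obtain ⟨q, hq⟩ := exists_forall_le_of_continuous_of_periodic b hf.continuous hper
  exact ⟨q, IsLocalMax.fderiv_eq_zero (.of_forall hq)⟩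

theorem exists_fderiv_eq_smul_add_smul_of_periodic {u₁ u₂ u₃ : E → ℝ}
    (h₁ : Differentiable ℝ u₁) (h₂ : Differentiable ℝ u₂) (h₃ : Differentiable ℝ u₃)
    (per₁ : ∀ i, Periodic u₁ (b i)) (per₂ : ∀ i, Periodic u₂ (b i))
    (per₃ : ∀ i, Periodic u₃ (b i)) (s t : ℝ) :
    ∃ q, fderiv ℝ u₃ q = s • fderiv ℝ u₁ q + t • fderiv ℝ u₂ q := by
  obtain ⟨q, hq⟩ := exists_fderiv_eq_zero_of_periodic b
    (((h₁.const_smul s).add (h₂.const_smul t)).sub h₃)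
    fun i => (((per₁ i).smul s).add ((per₂ i).smul t)).sub (per₃ i)
  have hv : fderiv ℝ (s • u₁ + t • u₂ - u₃) q =
      s • fderiv ℝ u₁ q + t • fderiv ℝ u₂ q - fderiv ℝ u₃ q :=
    ((((h₁ q).hasFDerivAt.const_smul s).add ((h₂ q).hasFDerivAt.const_smul t)).sub
      (h₃ q).hasFDerivAt).fderiv
  exact ⟨q, (sub_eq_zero.1 (hv.symm.trans hq)).symm⟩

theorem periodic_basisFun_of_forall_int {ι β : Type*} [Finite ι] {f : (ι → ℝ) → β}
    (hf : ∀ (q : ι → ℝ) (m : ι → ℤ), f (q + fun i => (m i : ℝ)) = f q) (i : ι) :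
    Periodic f (Pi.basisFun ℝ ι i) := by
  classical
  have cast_single : (fun j => ((Pi.single i 1 : ι → ℤ) j : ℝ)) = Pi.single i 1 := by
    ext j
    rw [Pi.apply_single (fun _ (m : ℤ) => (m : ℝ)) fun _ => Int.cast_zero, Int.cast_one]
  intro q
  rw [Pi.basisFun_apply, ← cast_single, hf]

end Periodic

/-- Strict convexity of `H` in its second variable `p`, over a domain `𝒰` whose fibers need not be
convex: the inequality is required only when the convex combination stays in `𝒰`. -/
def StrictConvexInFiber {Q P : Type*} [AddCommGroup P] [Module ℝ P] (𝒰 : Set (Q × P))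
    (H : Q × P → ℝ) : Prop :=
  ∀ (q : Q) (p p' : P), (q, p) ∈ 𝒰 → (q, p') ∈ 𝒰 → p ≠ p' →
    ∀ l : ℝ, 0 < l → l < 1 → (q, l • p + (1 - l) • p') ∈ 𝒰 →
      H (q, l • p + (1 - l) • p') < l * H (q, p) + (1 - l) * H (q, p')

/-- The coordinates of a covector in the basis dual to `b`. For the standard basis of `ℝⁿ` they turn
the differential of a function into its gradient. -/
noncomputable def covectorCoords {ι E : Type*} [NormedAddCommGroup E] [NormedSpace ℝ E]
    (b : Module.Basis ι ℝ E) : StrongDual ℝ E →ₗ[ℝ] ι → ℝ where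
  toFun φ i := φ (b i)
  map_add' _ _ := rfl
  map_smul' _ _ := rfl

theorem covectorCoords_basisFun_apply {ι : Type*} [Fintype ι] [DecidableEq ι]
    (φ : StrongDual ℝ (ι → ℝ)) (i : ι) :
    covectorCoords (Pi.basisFun ℝ ι) φ i = φ (Pi.single i 1) :=
  congrArg φ (Pi.basisFun_apply ℝ ι i)

/-- `D` is the identification of covectors with momenta: the identity when momenta are covectors,
the inverse Riesz map for gradients in a Euclidean space, `covectorCoords` for coordinates. -/
theorem A_function_strictly_convex_general {ι E P α : Type*} [Finite ι]
    [NormedAddCommGroup E] [NormedSpace ℝ E] [AddCommGroup P] [Module ℝ P]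
    (b : Module.Basis ι ℝ E) (D : StrongDual ℝ E →ₗ[ℝ] P) (c : α → P) (u : α → E → ℝ)
    (hu_diff : ∀ a, Differentiable ℝ (u a)) (hu_per : ∀ a i, Function.Periodic (u a) (b i))
    (η : α → E → P) (hη : ∀ a q, η a q = c a + D (fderiv ℝ (u a) q))
    (𝒰 : Set (E × P)) (hgraph : ∀ a q, (q, η a q) ∈ 𝒰)
    (H : E × P → ℝ) (hconv : StrictConvexInFiber 𝒰 H)
    (A : P → ℝ) (hHJ : ∀ a q, H (q, η a q) = A (c a))
    (a₁ a₂ a₃ : α) (l : ℝ) (hl0 : 0 < l) (hl1 : l < 1)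
    (hc3 : c a₃ = l • c a₁ + (1 - l) • c a₂)
    (hdisj : ∀ q, η a₁ q ≠ η a₂ q)
    (hmem : ∀ q, (q, l • η a₁ q + (1 - l) • η a₂ q) ∈ 𝒰) :
    A (c a₃) < l * A (c a₁) + (1 - l) * A (c a₂) := by
  obtain ⟨q, hq⟩ := exists_fderiv_eq_smul_add_smul_of_periodic b (hu_diff a₁) (hu_diff a₂)
    (hu_diff a₃) (hu_per a₁) (hu_per a₂) (hu_per a₃) l (1 - l)
  have hη₃ : η a₃ q = l • η a₁ q + (1 - l) • η a₂ q := by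
    simp only [hη, hc3, hq, map_add, map_smul, smul_add]
    abel
  calc A (c a₃) = H (q, l • η a₁ q + (1 - l) • η a₂ q) := by rw [← hη₃, hHJ]
    _ < l * H (q, η a₁ q) + (1 - l) * H (q, η a₂ q) :=
      hconv q _ _ (hgraph a₁ q) (hgraph a₂ q) (hdisj q) l hl0 hl1 (hmem q)
    _ = l * A (c a₁) + (1 - l) * A (c a₂) := by rw [hHJ, hHJ]

/-- **Strict convexity of the `A`-function.**
Let `c : U → ℝⁿ`, and for each `a ∈ U` let `u a : ℝⁿ → ℝ` be a differentiable
`ℤⁿ`-periodic function; set `η a q = c a + ∇(u a) q`.  Let `𝒰 ⊆ ℝⁿ × ℝⁿ` contain the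
graph of every `η a`, let `H : 𝒰 → ℝ` be strictly convex in the fiber, and let `A`
satisfy the Hamilton–Jacobi identity `H (q, η a q) = A (c a)` for all `q` and `a ∈ U`.
If `a₁, a₂, a₃ ∈ U` and `λ ∈ (0,1)` satisfy `c a₃ = λ c a₁ + (1-λ) c a₂`, the graphs of
`η a₁` and `η a₂` are disjoint, and `(q, λ η a₁ q + (1-λ) η a₂ q) ∈ 𝒰` for all `q`,
then `A (c a₃) < λ A (c a₁) + (1-λ) A (c a₂)`. -/
theorem A_function_strictly_convex
    (n : ℕ) (U : Set (Fin n → ℝ))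
    (c : (Fin n → ℝ) → (Fin n → ℝ))
    (u : (Fin n → ℝ) → (Fin n → ℝ) → ℝ)
    (hu_diff : ∀ a ∈ U, Differentiable ℝ (u a))
    (hu_per : ∀ a ∈ U, ∀ (q : Fin n → ℝ) (m : Fin n → ℤ),
      u a (q + fun i => (m i : ℝ)) = u a q)
    (η : (Fin n → ℝ) → (Fin n → ℝ) → (Fin n → ℝ))
    (hη : ∀ a ∈ U, ∀ (q : Fin n → ℝ) (k : Fin n),
      η a q k = c a k + fderiv ℝ (u a) q (Pi.single k 1))
    (𝒰 : Set ((Fin n → ℝ) × (Fin n → ℝ)))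
    (hgraph : ∀ a ∈ U, ∀ q : Fin n → ℝ, (q, η a q) ∈ 𝒰)
    (H : (Fin n → ℝ) × (Fin n → ℝ) → ℝ)
    (hconv : ∀ (q p p' : Fin n → ℝ), (q, p) ∈ 𝒰 → (q, p') ∈ 𝒰 → p ≠ p' →
      ∀ l : ℝ, 0 < l → l < 1 → (q, l • p + (1 - l) • p') ∈ 𝒰 →
        H (q, l • p + (1 - l) • p') < l * H (q, p) + (1 - l) * H (q, p'))
    (A : (Fin n → ℝ) → ℝ)
    (hHJ : ∀ a ∈ U, ∀ q : Fin n → ℝ, H (q, η a q) = A (c a))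
    (a₁ a₂ a₃ : Fin n → ℝ) (ha₁ : a₁ ∈ U) (ha₂ : a₂ ∈ U) (ha₃ : a₃ ∈ U)
    (l : ℝ) (hl0 : 0 < l) (hl1 : l < 1)
    (hc3 : c a₃ = l • c a₁ + (1 - l) • c a₂)
    (hdisj : ∀ q : Fin n → ℝ, η a₁ q ≠ η a₂ q)
    (hmem : ∀ q : Fin n → ℝ, (q, l • η a₁ q + (1 - l) • η a₂ q) ∈ 𝒰) :
    A (c a₃) < l * A (c a₁) + (1 - l) * A (c a₂) := by
  have hη' (a : U) (q : Fin n → ℝ) :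
      η a q = c a + covectorCoords (Pi.basisFun ℝ (Fin n)) (fderiv ℝ (u a) q) := by
    ext k
    rw [hη a a.2, Pi.add_apply, covectorCoords_basisFun_apply]
  exact A_function_strictly_convex_general (α := U) (Pi.basisFun ℝ (Fin n)) (covectorCoords _)
    (fun a => c a) (fun a => u a) (fun a => hu_diff a a.2)
    (fun a => periodic_basisFun_of_forall_int (hu_per a a.2)) (fun a => η a) hη' 𝒰
    (fun a => hgraph a a.2) H hconv A (fun a => hHJ a a.2) ⟨a₁, ha₁⟩ ⟨a₂, ha₂⟩ ⟨a₃, ha₃⟩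
    l hl0 hl1 hc3 hdisj hmem
end

section
/- Let H₁, …, Hₙ : ℝⁿ × ℝⁿ → ℝ be C¹ functions of (q,p) and let p : ℝⁿ → ℝⁿ be a C¹ map such that for each j the function q ↦ H_j(q, p(q)) is constant. For q ∈ ℝⁿ define the n×n matrices M(q) with entries M(q)_{jk} = ∂H_j/∂p_k(q, p(q)), Dp(q) with entries (Dp(q))_{jk} = ∂p_j/∂q_k(q), and P(q) with entries P(q)_{jk} = {H_j, H_k}(q, p(q)). Then M(q) · (Dp(q) − Dp(q)ᵀ) · M(q)ᵀ = −P(q) for every q ∈ ℝⁿ. -/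
open Matrix

noncomputable section

/-- Partial derivative `∂H/∂qᵢ` of a function `H(q,p)` on `ℝⁿ × ℝⁿ`. -/
def pdq (n : ℕ) (H : (Fin n → ℝ) × (Fin n → ℝ) → ℝ)
    (x : (Fin n → ℝ) × (Fin n → ℝ)) (i : Fin n) : ℝ :=
  fderiv ℝ H x (Pi.single i 1, 0)

/-- Partial derivative `∂H/∂pᵢ` of a function `H(q,p)` on `ℝⁿ × ℝⁿ`. -/
def pdp (n : ℕ) (H : (Fin n → ℝ) × (Fin n → ℝ) → ℝ)
    (x : (Fin n → ℝ) × (Fin n → ℝ)) (i : Fin n) : ℝ :=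
  fderiv ℝ H x (0, Pi.single i 1)

/-- The Poisson bracket `{F,G} = Σᵢ (∂F/∂qᵢ ∂G/∂pᵢ − ∂F/∂pᵢ ∂G/∂qᵢ)`. -/
def poissonBracket (n : ℕ) (F G : (Fin n → ℝ) × (Fin n → ℝ) → ℝ)
    (x : (Fin n → ℝ) × (Fin n → ℝ)) : ℝ :=
  ∑ i, (pdq n F x i * pdp n G x i - pdp n F x i * pdq n G x i)

/-!
Differentiating `H_j (q, p q) = const` gives `∂H_j/∂q = -(∂H_j/∂p) · Dp`. Substituting this for both
`q`-gradients turns the bracket `∂F/∂q · ∂G/∂p - ∂F/∂p · ∂G/∂q` into the bilinear form of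
`Dpᵀ - Dp` evaluated at the two `p`-gradients.
-/

section Graph

variable {𝕜 E F G : Type*} [NontriviallyNormedField 𝕜]
  [NormedAddCommGroup E] [NormedSpace 𝕜 E] [NormedAddCommGroup F] [NormedSpace 𝕜 F]
  [NormedAddCommGroup G] [NormedSpace 𝕜 G]

theorem fderiv_comp_graph_apply {f : E × F → G} {g : E → F} {x : E}
    (hf : DifferentiableAt 𝕜 f (x, g x)) (hg : DifferentiableAt 𝕜 g x) (v : E) :
    fderiv 𝕜 (fun y => f (y, g y)) x v =
      fderiv 𝕜 f (x, g x) (v, 0) + fderiv 𝕜 f (x, g x) (0, fderiv 𝕜 g x v) := by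
  have hgraph : HasFDerivAt (fun y => (y, g y)) ((.id 𝕜 E : E →L[𝕜] E).prod (fderiv 𝕜 g x)) x :=
    (hasFDerivAt_id x).prodMk hg.hasFDerivAt
  have hcomp := (hf.hasFDerivAt.comp x hgraph).fderiv
  rw [← map_add, Prod.mk_add_mk, add_zero, zero_add]
  exact DFunLike.congr_fun hcomp v

end Graph

section PoissonBracket

variable {n : ℕ}

theorem pdp_dotProduct (F : (Fin n → ℝ) × (Fin n → ℝ) → ℝ) (x : (Fin n → ℝ) × (Fin n → ℝ))
    (v : Fin n → ℝ) : pdp n F x ⬝ᵥ v = fderiv ℝ F x (0, v) :=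
  DFunLike.congr_fun ((dotProductEquiv ℝ (Fin n)).apply_symm_apply
    (fderiv ℝ F x ∘L .inr ℝ (Fin n → ℝ) (Fin n → ℝ)).toLinearMap) v

theorem poissonBracket_eq_dotProduct_sub_dotProduct (F G : (Fin n → ℝ) × (Fin n → ℝ) → ℝ)
    (x : (Fin n → ℝ) × (Fin n → ℝ)) :
    poissonBracket n F G x = pdq n F x ⬝ᵥ pdp n G x - pdp n F x ⬝ᵥ pdq n G x :=
  Finset.sum_sub_distrib _ _

variable {F G : (Fin n → ℝ) × (Fin n → ℝ) → ℝ} {p : (Fin n → ℝ) → (Fin n → ℝ)} {q : Fin n → ℝ}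

theorem pdq_eq_neg_pdp_vecMul (hF : DifferentiableAt ℝ F (q, p q)) (hp : DifferentiableAt ℝ p q)
    (hFp : fderiv ℝ (fun x => F (x, p x)) q = 0) :
    pdq n F (q, p q) = -(pdp n F (q, p q) ᵥ* (fderiv ℝ p q).toLinearMap.toMatrix') := by
  ext i
  have h := fderiv_comp_graph_apply hF hp (Pi.single i 1)
  rw [hFp, ← pdp_dotProduct] at h
  exact eq_neg_of_add_eq_zero_left h.symm

theorem poissonBracket_eq_neg_dotProduct_mulVec
    (hF : DifferentiableAt ℝ F (q, p q)) (hG : DifferentiableAt ℝ G (q, p q))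
    (hp : DifferentiableAt ℝ p q) (hFp : fderiv ℝ (fun x => F (x, p x)) q = 0)
    (hGp : fderiv ℝ (fun x => G (x, p x)) q = 0) :
    let J := (fderiv ℝ p q).toLinearMap.toMatrix'
    poissonBracket n F G (q, p q) = -(pdp n F (q, p q) ⬝ᵥ (J - Jᵀ) *ᵥ pdp n G (q, p q)) := by
  intro J
  set a := pdp n F (q, p q)
  set b := pdp n G (q, p q)
  calc
    poissonBracket n F G (q, p q) = -(a ᵥ* J) ⬝ᵥ b - a ⬝ᵥ -(b ᵥ* J) := by
      rw [poissonBracket_eq_dotProduct_sub_dotProduct, pdq_eq_neg_pdp_vecMul hF hp hFp,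
        pdq_eq_neg_pdp_vecMul hG hp hGp]
    _ = -(a ⬝ᵥ J *ᵥ b - a ⬝ᵥ Jᵀ *ᵥ b) := by
      rw [neg_dotProduct, dotProduct_neg, ← dotProduct_mulVec, mulVec_transpose]
      ring
    _ = -(a ⬝ᵥ (J - Jᵀ) *ᵥ b) := by rw [sub_mulVec, dotProduct_sub]

end PoissonBracket

theorem matrix_identity_of_constant_integrals_general {ι : Type*} {n : ℕ}
    {H : ι → (Fin n → ℝ) × (Fin n → ℝ) → ℝ} {p : (Fin n → ℝ) → (Fin n → ℝ)} {q : Fin n → ℝ}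
    (hH : ∀ j, DifferentiableAt ℝ (H j) (q, p q)) (hp : DifferentiableAt ℝ p q)
    (hHp : ∀ j, fderiv ℝ (fun x => H j (x, p x)) q = 0) :
    (Matrix.of fun j k => pdp n (H j) (q, p q) k) *
        ((Matrix.of fun j k : Fin n => fderiv ℝ p q (Pi.single k 1) j) -
          (Matrix.of fun j k : Fin n => fderiv ℝ p q (Pi.single k 1) j)ᵀ) *
        (Matrix.of fun j k => pdp n (H j) (q, p q) k)ᵀ
      = -(Matrix.of fun j k => poissonBracket n (H j) (H k) (q, p q)) := by
  ext j k
  let J := (fderiv ℝ p q).toLinearMap.toMatrix'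
  calc
    _ = pdp n (H j) (q, p q) ⬝ᵥ (J - Jᵀ) *ᵥ pdp n (H k) (q, p q) := by rw [Matrix.mul_assoc]; rfl
    _ = -poissonBracket n (H j) (H k) (q, p q) := by
      rw [poissonBracket_eq_neg_dotProduct_mulVec (hH j) (hH k) hp (hHp j) (hHp k), neg_neg]

/-- **The key matrix identity for commuting integrals along an invariant graph.**
Let `H₁, …, Hₙ` be `C¹` functions of `(q,p)` and `p : ℝⁿ → ℝⁿ` a `C¹` map such that
each `q ↦ H_j (q, p q)` is constant.  With `M(q)_{jk} = ∂H_j/∂p_k (q, p q)`,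
`Dp(q)_{jk} = ∂p_j/∂q_k (q)` and `P(q)_{jk} = {H_j, H_k} (q, p q)`, one has
`M(q) (Dp(q) − Dp(q)ᵀ) M(q)ᵀ = −P(q)` for every `q`. -/
theorem matrix_identity_of_constant_integrals
    (n : ℕ) (H : Fin n → (Fin n → ℝ) × (Fin n → ℝ) → ℝ)
    (hH : ∀ j, ContDiff ℝ 1 (H j))
    (p : (Fin n → ℝ) → (Fin n → ℝ)) (hp : ContDiff ℝ 1 p)
    (hconst : ∀ (j : Fin n) (q q' : Fin n → ℝ), H j (q, p q) = H j (q', p q')) :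
    ∀ q : Fin n → ℝ,
      (Matrix.of fun j k => pdp n (H j) (q, p q) k) *
        ((Matrix.of fun j k : Fin n => fderiv ℝ p q (Pi.single k 1) j) -
          (Matrix.of fun j k : Fin n => fderiv ℝ p q (Pi.single k 1) j)ᵀ) *
        (Matrix.of fun j k => pdp n (H j) (q, p q) k)ᵀ
      = -(Matrix.of fun j k => poissonBracket n (H j) (H k) (q, p q)) := by
  intro q
  have hcrit (j : Fin n) : fderiv ℝ (fun x => H j (x, p x)) q = 0 := by
    rw [funext fun x => hconst j x q, fderiv_fun_const, Pi.zero_apply]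
  exact matrix_identity_of_constant_integrals_general
    (fun j => (hH j).differentiable one_ne_zero _) (hp.differentiable one_ne_zero q) hcrit
end
end

section
/- Let p_i : ℝⁿ → ℝⁿ be a sequence of C¹, ℤⁿ-periodic maps converging uniformly to a map p : ℝⁿ → ℝⁿ, and suppose sup_q ‖Dp_i(q) − Dp_i(q)ᵀ‖ → 0 as i → ∞. Then the limit 1-form Σ_j p^{(j)} dq_j is closed in the distribution sense: for every C¹ ℤⁿ-periodic function ψ : ℝⁿ → ℝ and all indices j, k, ∫_{[0,1]ⁿ} ( p^{(j)}(q) · ∂ψ/∂q_k(q) − p^{(k)}(q) · ∂ψ/∂q_j(q) ) dq = 0. -/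
open Filter

/-! Integrating a periodic field `v` by parts against a periodic test function `ψ` over the unit
cube produces no boundary terms, so the pairing of `v` with the derivatives of `ψ` equals, up to
sign, the pairing of the antisymmetric part of `Dv` with `ψ` itself. Along the sequence the former
converges to the pairing of the limit field and the latter converges to `0`. Both passages to the
limit only need `L¹` convergence on the cube. -/

open MeasureTheory Set Topology
open scoped ENNReal

section LpConvergence

variable {α ι : Type*} [MeasurableSpace α] {μ : Measure α} {l : Filter ι}

theorem tendsto_eLpNorm_sub_of_tendstoUniformly {E : Type*} [NormedAddCommGroup E]
    [IsFiniteMeasure μ] {F : ι → α → E} {f : α → E} (p : ℝ≥0∞) (h : TendstoUniformly F f l) :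
    Tendsto (fun i => eLpNorm (F i - f) p μ) l (𝓝 0) := by
  set c : ℝ≥0∞ := μ univ ^ p.toReal⁻¹
  have hbound : Tendsto (fun ε : ℝ => c * ENNReal.ofReal ε) (𝓝[>] 0) (𝓝 0) := by
    have hc : c ≠ ∞ := by finiteness
    have hofReal : Tendsto ENNReal.ofReal (𝓝[>] 0) (𝓝 0) :=
      (ENNReal.continuous_ofReal.tendsto' 0 0 ENNReal.ofReal_zero).mono_left nhdsWithin_le_nhds
    simpa only [mul_zero] using ENNReal.Tendsto.const_mul hofReal (.inr hc)
  refine ENNReal.tendsto_nhds_zero.2 fun δ hδ => ?_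
  obtain ⟨ε, hεδ, hε⟩ :=
    ((ENNReal.tendsto_nhds_zero.1 hbound δ hδ).and self_mem_nhdsWithin).exists
  filter_upwards [Metric.tendstoUniformly_iff.1 h ε hε] with i hi
  refine (eLpNorm_le_of_ae_bound (ae_of_all μ fun x => ?_)).trans hεδ
  rw [Pi.sub_apply, ← dist_eq_norm, dist_comm]
  exact (hi x).le

theorem tendsto_integral_mul_of_tendsto_eLpNorm_one {𝕜 : Type*} [RCLike 𝕜]
    {F : ι → α → 𝕜} {f φ : α → 𝕜} (hF : ∀ i, Integrable (F i) μ) (hf : Integrable f μ)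
    (hφ : MemLp φ ∞ μ) (h : Tendsto (fun i => eLpNorm (F i - f) 1 μ) l (𝓝 0)) :
    Tendsto (fun i => ∫ x, F i x * φ x ∂μ) l (𝓝 (∫ x, f x * φ x ∂μ)) := by
  have hmul : ∀ i, eLpNorm (F i * φ - f * φ) 1 μ ≤ eLpNorm (F i - f) 1 μ * eLpNorm φ ∞ μ := by
    intro i
    rw [← sub_mul, ← smul_eq_mul]
    exact eLpNorm_smul_le_eLpNorm_mul_eLpNorm_top 1 φ ((hF i).sub hf).aestronglyMeasurable
  have hzero : Tendsto (fun i => eLpNorm (F i - f) 1 μ * eLpNorm φ ∞ μ) l (𝓝 0) := by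
    simpa using ENNReal.Tendsto.mul_const h (.inr hφ.eLpNorm_ne_top)
  exact tendsto_integral_of_L1' (f * φ) (hf.mul_of_top_left hφ).aestronglyMeasurable
    (.of_forall fun i => (hF i).mul_of_top_left hφ)
    (tendsto_of_tendsto_of_tendsto_of_le_of_le tendsto_const_nhds hzero (fun _ => zero_le) hmul)

end LpConvergence

theorem tendstoUniformly_zero_of_forall_norm_le {ι α E : Type*} [Preorder ι]
    [SeminormedAddCommGroup E] {F : ι → α → E}
    (h : ∀ ε : ℝ, 0 < ε → ∃ N, ∀ i ≥ N, ∀ x, ‖F i x‖ ≤ ε) :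
    TendstoUniformly F 0 atTop := by
  refine Metric.tendstoUniformly_iff.2 fun ε hε => ?_
  obtain ⟨N, hN⟩ := h (ε / 2) (half_pos hε)
  filter_upwards [eventually_ge_atTop N] with i hi x
  rw [Pi.zero_apply, dist_zero_left]
  exact (hN i hi x).trans_lt (half_lt_self hε)

theorem memLp_top_restrict_of_continuousOn {X E : Type*} [TopologicalSpace X]
    [MeasurableSpace X] [OpensMeasurableSpace X] [TopologicalSpace.PseudoMetrizableSpace X]
    [NormedAddCommGroup E] {μ : Measure X} {s : Set X} {f : X → E}
    (hs : IsCompact s) (hsm : MeasurableSet s) (hf : ContinuousOn f s) :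
    MemLp f ∞ (μ.restrict s) := by
  obtain ⟨C, hC⟩ := hs.exists_bound_of_continuousOn hf
  exact memLp_top_of_bound (hf.aestronglyMeasurable_of_isCompact hs hsm) C
    (ae_restrict_of_forall_mem hsm hC)

/-- The closed unit cube `[0,1]ⁿ`, up to a null set a fundamental domain of `ℤⁿ` acting on `ℝⁿ` by
translations. -/
abbrev unitCube (n : ℕ) : Set (Fin n → ℝ) :=
  univ.pi fun _ => Icc 0 1

theorem isCompact_unitCube (n : ℕ) : IsCompact (unitCube n) :=
  isCompact_univ_pi fun _ => isCompact_Icc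

theorem measurableSet_unitCube (n : ℕ) : MeasurableSet (unitCube n) :=
  (isCompact_unitCube n).measurableSet

instance isFiniteMeasure_restrict_unitCube (n : ℕ) :
    IsFiniteMeasure (volume.restrict (unitCube n)) :=
  isFiniteMeasure_restrict.2 (isCompact_unitCube n).measure_ne_top

theorem memLp_top_unitCube_of_continuous {n : ℕ} {E : Type*} [NormedAddCommGroup E]
    {f : (Fin n → ℝ) → E} (hf : Continuous f) : MemLp f ∞ (volume.restrict (unitCube n)) :=
  memLp_top_restrict_of_continuousOn (isCompact_unitCube n) (measurableSet_unitCube n)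
    hf.continuousOn

theorem integrableOn_unitCube_of_continuous {n : ℕ} {E : Type*} [NormedAddCommGroup E]
    {f : (Fin n → ℝ) → E} (hf : Continuous f) : IntegrableOn f (unitCube n) :=
  hf.continuousOn.integrableOn_compact (isCompact_unitCube n)

section Periodic

variable {n : ℕ} {E : Type*}

theorem periodic_single_of_forall_add_int {f : (Fin n → ℝ) → E}
    (hf : ∀ (q : Fin n → ℝ) (m : Fin n → ℤ), f (q + fun j => (m j : ℝ)) = f q) (k : Fin n) :
    Function.Periodic f (Pi.single k 1) := by
  intro q
  have hcast : (fun j => ((Pi.single k 1 : Fin n → ℤ) j : ℝ)) = Pi.single k 1 := by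
    ext j
    simp [Pi.single_apply]
  rw [← hcast, hf]

theorem apply_insertNth_one_of_periodic {k : Fin (n + 1)} {g : (Fin (n + 1) → ℝ) → E}
    (hg : Function.Periodic g (Pi.single k 1)) (x : Fin n → ℝ) :
    g (k.insertNth 1 x) = g (k.insertNth 0 x) := by
  rw [← hg (k.insertNth 0 x)]
  congr 1
  ext i
  cases i using Fin.succAboveCases k <;> simp

variable [NormedAddCommGroup E] [NormedSpace ℝ E]

theorem setIntegral_unitCube_fderiv_single_eq_zero {g : (Fin n → ℝ) → E} {k : Fin n}
    (hg : Differentiable ℝ g)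
    (hint : IntegrableOn (fun q => fderiv ℝ g q (Pi.single k 1)) (unitCube n))
    (hper : Function.Periodic g (Pi.single k 1)) :
    ∫ q in unitCube n, fderiv ℝ g q (Pi.single k 1) = 0 := by
  obtain _ | n := n
  · exact k.elim0
  let V : Fin (n + 1) → (Fin (n + 1) → ℝ) → E := Pi.single k g
  let V' : Fin (n + 1) → (Fin (n + 1) → ℝ) → (Fin (n + 1) → ℝ) →L[ℝ] E :=
    Pi.single k (fderiv ℝ g)
  have hderiv : ∀ i q, HasFDerivAt (V i) (V' i q) q := by
    intro i q
    obtain rfl | hik := eq_or_ne i k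
    · simpa [V, V'] using (hg q).hasFDerivAt
    · simpa only [V, V', Pi.single_eq_of_ne hik, Pi.zero_apply] using hasFDerivAt_zero q
  have hdiv : ∀ q, ∑ i, V' i q (Pi.single i 1) = fderiv ℝ g q (Pi.single k 1) := by
    intro q
    rw [Finset.sum_eq_single k (fun i _ hik => by simp [V', hik]) (by simp)]
    simp [V']
  have hfaces : ∀ (i : Fin (n + 1)) (x : Fin n → ℝ),
      V i (i.insertNth 1 x) = V i (i.insertNth 0 x) := by
    intro i x
    obtain rfl | hik := eq_or_ne i k
    · simpa [V] using apply_insertNth_one_of_periodic hper x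
    · simp [V, hik]
  have hcube : unitCube (n + 1) = Icc 0 1 := pi_univ_Icc _ _
  rw [hcube] at hint ⊢
  simp only [← hdiv] at hint ⊢
  rw [integral_divergence_of_hasFDerivAt_off_countable' 0 1 zero_le_one V V' ∅ countable_empty
    (fun i q _ => (hderiv i q).continuousAt.continuousWithinAt) (fun q _ i => hderiv i q) hint]
  simp [hfaces]

end Periodic

theorem setIntegral_unitCube_mul_fderiv_single_eq_neg {n : ℕ} {A : Type*} [NormedRing A]
    [NormedAlgebra ℝ A] {f g : (Fin n → ℝ) → A} {k : Fin n}
    (hf : Differentiable ℝ f) (hg : Differentiable ℝ g)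
    (hfg' : IntegrableOn (fun q => f q * fderiv ℝ g q (Pi.single k 1)) (unitCube n))
    (hf'g : IntegrableOn (fun q => fderiv ℝ f q (Pi.single k 1) * g q) (unitCube n))
    (hfper : Function.Periodic f (Pi.single k 1)) (hgper : Function.Periodic g (Pi.single k 1)) :
    ∫ q in unitCube n, f q * fderiv ℝ g q (Pi.single k 1) =
      -∫ q in unitCube n, fderiv ℝ f q (Pi.single k 1) * g q := by
  have hleibniz : ∀ q, fderiv ℝ (f * g) q (Pi.single k 1) =
      f q * fderiv ℝ g q (Pi.single k 1) + fderiv ℝ f q (Pi.single k 1) * g q := by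
    intro q
    simp [fderiv_mul' (hf q) (hg q)]
  have hzero : ∫ q in unitCube n, fderiv ℝ (f * g) q (Pi.single k 1) = 0 := by
    refine setIntegral_unitCube_fderiv_single_eq_zero (hf.mul hg) ?_ (hfper.mul hgper)
    simp only [hleibniz]
    exact hfg'.add hf'g
  simp only [hleibniz] at hzero
  rwa [integral_add hfg' hf'g, ← eq_neg_iff_add_eq_zero] at hzero

section TestFunction

variable {n : ℕ} {ψ : (Fin n → ℝ) → ℝ}

theorem setIntegral_unitCube_apply_mul_fderiv_single {v : (Fin n → ℝ) → Fin n → ℝ}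
    (hv : Differentiable ℝ v) (hv' : IntegrableOn (fderiv ℝ v) (unitCube n))
    (hψ : ContDiff ℝ 1 ψ) {k : Fin n} (hvper : Function.Periodic v (Pi.single k 1))
    (hψper : Function.Periodic ψ (Pi.single k 1)) (j : Fin n) :
    ∫ q in unitCube n, v q j * fderiv ℝ ψ q (Pi.single k 1) =
      -∫ q in unitCube n, fderiv ℝ v q (Pi.single k 1) j * ψ q := by
  have hpartial : ∀ q, fderiv ℝ (fun q => v q j) q (Pi.single k 1) =
      fderiv ℝ v q (Pi.single k 1) j := fun q => by rw [fderiv_apply (hv q)]; rfl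
  have hvj : Differentiable ℝ fun q => v q j := differentiable_pi.1 hv j
  have hψ' : Continuous fun q => fderiv ℝ ψ q (Pi.single k 1) :=
    (hψ.continuous_fderiv one_ne_zero).clm_apply continuous_const
  simp only [← hpartial]
  refine setIntegral_unitCube_mul_fderiv_single_eq_neg hvj (hψ.differentiable one_ne_zero)
    (integrableOn_unitCube_of_continuous (hvj.continuous.mul hψ')) ?_
    (hvper.comp fun w => w j) hψper
  simp only [hpartial]
  exact ((hv'.apply_continuousLinearMap (Pi.single k 1)).eval j).mul_of_top_left
    (memLp_top_unitCube_of_continuous hψ.continuous)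

theorem setIntegral_unitCube_apply_mul_fderiv_single_sub {v : (Fin n → ℝ) → Fin n → ℝ}
    (hv : Differentiable ℝ v) (hv' : IntegrableOn (fderiv ℝ v) (unitCube n))
    (hψ : ContDiff ℝ 1 ψ) {j k : Fin n}
    (hvk : Function.Periodic v (Pi.single k 1)) (hvj : Function.Periodic v (Pi.single j 1))
    (hψk : Function.Periodic ψ (Pi.single k 1)) (hψj : Function.Periodic ψ (Pi.single j 1)) :
    (∫ q in unitCube n, v q j * fderiv ℝ ψ q (Pi.single k 1)) -
        ∫ q in unitCube n, v q k * fderiv ℝ ψ q (Pi.single j 1) =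
      -∫ q in unitCube n,
        (fderiv ℝ v q (Pi.single k 1) j - fderiv ℝ v q (Pi.single j 1) k) * ψ q := by
  have hmul : ∀ a b, IntegrableOn (fun q => fderiv ℝ v q (Pi.single b 1) a * ψ q) (unitCube n) :=
    fun a b => ((hv'.apply_continuousLinearMap (Pi.single b 1)).eval a).mul_of_top_left
      (memLp_top_unitCube_of_continuous hψ.continuous)
  simp only [sub_mul]
  rw [integral_sub (hmul j k) (hmul k j),
    setIntegral_unitCube_apply_mul_fderiv_single hv hv' hψ hvk hψk,
    setIntegral_unitCube_apply_mul_fderiv_single hv hv' hψ hvj hψj]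
  ring

end TestFunction

theorem limit_one_form_closed_in_distribution_sense_general {n : ℕ} {ι : Type*} {l : Filter ι}
    [l.NeBot] {p : ι → (Fin n → ℝ) → Fin n → ℝ} {plim : (Fin n → ℝ) → Fin n → ℝ} {j k : Fin n}
    (hdiff : ∀ i, Differentiable ℝ (p i))
    (hint : ∀ i, IntegrableOn (fderiv ℝ (p i)) (unitCube n))
    (hper : ∀ i m, Function.Periodic (p i) (Pi.single m 1))
    (hplim : IntegrableOn plim (unitCube n))
    (hconv : Tendsto (fun i => eLpNorm (p i - plim) 1 (volume.restrict (unitCube n))) l (𝓝 0))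
    (hsym : Tendsto (fun i => eLpNorm (fun q =>
        fderiv ℝ (p i) q (Pi.single k 1) j - fderiv ℝ (p i) q (Pi.single j 1) k)
      1 (volume.restrict (unitCube n))) l (𝓝 0))
    {ψ : (Fin n → ℝ) → ℝ} (hψ : ContDiff ℝ 1 ψ)
    (hψper : ∀ m, Function.Periodic ψ (Pi.single m 1)) :
    ∫ q in unitCube n, (plim q j * fderiv ℝ ψ q (Pi.single k 1) -
      plim q k * fderiv ℝ ψ q (Pi.single j 1)) = 0 := by
  have hψ_top := memLp_top_unitCube_of_continuous hψ.continuous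
  have hψ'_top : ∀ b, MemLp (fun q => fderiv ℝ ψ q (Pi.single b 1)) ∞
      (volume.restrict (unitCube n)) := fun b =>
    memLp_top_unitCube_of_continuous
      ((hψ.continuous_fderiv one_ne_zero).clm_apply continuous_const)
  have hp := fun i => integrableOn_unitCube_of_continuous (hdiff i).continuous
  have hDp : ∀ i a b, IntegrableOn (fun q => fderiv ℝ (p i) q (Pi.single b 1) a) (unitCube n) :=
    fun i a b => ((hint i).apply_continuousLinearMap (Pi.single b 1)).eval a
  have hpair : ∀ a b, Tendsto (fun i => ∫ q in unitCube n, p i q a * fderiv ℝ ψ q (Pi.single b 1))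
      l (𝓝 (∫ q in unitCube n, plim q a * fderiv ℝ ψ q (Pi.single b 1))) := fun a b =>
    tendsto_integral_mul_of_tendsto_eLpNorm_one (fun i => (hp i).eval a) (hplim.eval a) (hψ'_top b)
      (tendsto_of_tendsto_of_tendsto_of_le_of_le tendsto_const_nhds hconv (fun _ => zero_le)
        fun i => eLpNorm_mono fun q => norm_le_pi_norm (p i q - plim q) a)
  have hcurl : Tendsto (fun i => ∫ q in unitCube n,
      (fderiv ℝ (p i) q (Pi.single k 1) j - fderiv ℝ (p i) q (Pi.single j 1) k) * ψ q)
      l (𝓝 0) := by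
    simpa using tendsto_integral_mul_of_tendsto_eLpNorm_one (f := 0)
      (fun i => (hDp i j k).sub (hDp i k j)) (integrable_zero _ _ _) hψ_top (by simpa using! hsym)
  have hparts := fun i => setIntegral_unitCube_apply_mul_fderiv_single_sub (hdiff i) (hint i) hψ
    (hper i k) (hper i j) (hψper k) (hψper j)
  have hlim_int : ∀ a b, IntegrableOn (fun q => plim q a * fderiv ℝ ψ q (Pi.single b 1))
      (unitCube n) := fun a b => (hplim.eval a).mul_of_top_left (hψ'_top b)
  rw [integral_sub (hlim_int j k) (hlim_int k j)]
  refine tendsto_nhds_unique ((hpair j k).sub (hpair k j)) ?_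
  simpa only [hparts, neg_zero] using hcurl.neg

/-- **Closedness in the distribution sense of the limit one-form.**
Let `pᵢ : ℝⁿ → ℝⁿ` be `C¹`, `ℤⁿ`-periodic maps converging uniformly to `p`, with
`sup_q ‖Dpᵢ(q) − Dpᵢ(q)ᵀ‖ → 0` (entrywise).  Then the limit `1`-form `Σⱼ p⁽ʲ⁾ dqⱼ` is
closed in the distribution sense: for every `C¹` `ℤⁿ`-periodic test function `ψ` and all
indices `j, k`, `∫_{[0,1]ⁿ} (p⁽ʲ⁾ ∂ψ/∂q_k − p⁽ᵏ⁾ ∂ψ/∂q_j) dq = 0`. -/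
theorem limit_one_form_closed_in_distribution_sense
    (n : ℕ) (p : ℕ → (Fin n → ℝ) → (Fin n → ℝ))
    (plim : (Fin n → ℝ) → (Fin n → ℝ))
    (hC1 : ∀ i, ContDiff ℝ 1 (p i))
    (hper : ∀ (i : ℕ) (q : Fin n → ℝ) (m : Fin n → ℤ),
      p i (q + fun j => (m j : ℝ)) = p i q)
    (hconv : TendstoUniformly p plim atTop)
    (hsym : ∀ ε : ℝ, 0 < ε → ∃ N : ℕ, ∀ i ≥ N, ∀ (q : Fin n → ℝ) (j k : Fin n),
      |fderiv ℝ (p i) q (Pi.single k 1) j - fderiv ℝ (p i) q (Pi.single j 1) k| ≤ ε)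
    (ψ : (Fin n → ℝ) → ℝ) (hψ : ContDiff ℝ 1 ψ)
    (hψper : ∀ (q : Fin n → ℝ) (m : Fin n → ℤ), ψ (q + fun j => (m j : ℝ)) = ψ q)
    (j k : Fin n) :
    ∫ q in Set.univ.pi fun _ : Fin n => Set.Icc (0:ℝ) 1,
      (plim q j * fderiv ℝ ψ q (Pi.single k 1) -
        plim q k * fderiv ℝ ψ q (Pi.single j 1)) = 0 := by
  have hplim : Continuous plim := hconv.continuous (.of_forall fun i => (hC1 i).continuous)
  have hcurl : TendstoUniformly (fun i q =>
      fderiv ℝ (p i) q (Pi.single k 1) j - fderiv ℝ (p i) q (Pi.single j 1) k) 0 atTop :=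
    tendstoUniformly_zero_of_forall_norm_le fun ε hε =>
      (hsym ε hε).imp fun N hN i hi q => hN i hi q j k
  exact limit_one_form_closed_in_distribution_sense_general
    (fun i => (hC1 i).differentiable one_ne_zero)
    (fun i => integrableOn_unitCube_of_continuous ((hC1 i).continuous_fderiv one_ne_zero))
    (fun i => periodic_single_of_forall_add_int (hper i))
    (integrableOn_unitCube_of_continuous hplim)
    (tendsto_eLpNorm_sub_of_tendstoUniformly 1 hconv)
    (by simpa only [sub_zero] using tendsto_eLpNorm_sub_of_tendstoUniformly 1 hcurl)
    hψ (periodic_single_of_forall_add_int hψper)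
end

section
/- Let U ⊆ ℝⁿ be open, H : ℝⁿ × ℝⁿ → ℝ a C¹ function of (q,p), c : U → ℝⁿ differentiable, A : ℝⁿ → ℝ differentiable, and S : ℝⁿ × U → ℝ a C¹ function whose mixed second partial derivatives ∂²S/∂a_j∂q_k and ∂²S/∂q_k∂a_j exist, are continuous, and are equal. Assume the Hamilton–Jacobi equation H(q, c(a) + ∂S/∂q(q,a)) = A(c(a)) holds for all q ∈ ℝⁿ and a ∈ U. Fix a ∈ U and let γ : ℝ → ℝⁿ be a C¹ curve with γ'(t) = ∂H/∂p(γ(t), c(a) + ∂S/∂q(γ(t),a)) for all t ∈ ℝ. Then for every t ∈ ℝ and every j ∈ {1,…,n}: Σ_k ∂c_k/∂a_j(a) · ( γ_k(t) − γ_k(0) − t · ∂A/∂x_k(c(a)) ) + ∂S/∂a_j(γ(t), a) − ∂S/∂a_j(γ(0), a) = 0. -/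
noncomputable section

/-- The partial gradient `∂S/∂q (q,a)` of a function `S(q,a)` on `ℝⁿ × ℝⁿ`. -/
def partialQ (n : ℕ) (S : (Fin n → ℝ) × (Fin n → ℝ) → ℝ)
    (x : (Fin n → ℝ) × (Fin n → ℝ)) : Fin n → ℝ :=
  fun k => fderiv ℝ S x (Pi.single k 1, 0)

/-- The partial gradient `∂S/∂a (q,a)` of a function `S(q,a)` on `ℝⁿ × ℝⁿ`. -/
def partialA (n : ℕ) (S : (Fin n → ℝ) × (Fin n → ℝ) → ℝ)
    (x : (Fin n → ℝ) × (Fin n → ℝ)) : Fin n → ℝ :=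
  fun j => fderiv ℝ S x (0, Pi.single j 1)

/-
The generating function `Φ(q, a) = c(a) · q + S(q, a)` has momentum `∂Φ/∂q = c + ∂S/∂q`, and
`H (q, ∂Φ/∂q)` does not depend on `q`. Differentiating the Hamilton–Jacobi equation in the direction
`v` of `a`-space gives `∂H/∂p · (∂_v c + ∂_v ∂S/∂q) = dA(∂_v c)`. Since
`∂_v ∂S/∂q = ∂/∂q (∂_v S)`, the left side along an orbit is the time derivative of the conjugate
coordinate `∂_v Φ = ∂_v c · q + ∂_v S`, which therefore moves at the constant speed `dA(∂_v c)`.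
-/

open Filter Set Topology Asymptotics
open Function (update)
open scoped Matrix

section MeanValue

variable {𝕜 F : Type*} [RCLike 𝕜] [NormedAddCommGroup F] [NormedSpace 𝕜 F]

theorem norm_sub_sub_smul_le_of_hasDerivWithinAt {f f' : 𝕜 → F} {J : Set 𝕜} {m : F} {C : ℝ}
    (hJ : Convex ℝ J) (hf : ∀ t ∈ J, HasDerivWithinAt f (f' t) J t)
    (hC : ∀ t ∈ J, ‖f' t - m‖ ≤ C) {s t : 𝕜} (hs : s ∈ J) (ht : t ∈ J) :
    ‖f t - f s - (t - s) • m‖ ≤ C * ‖t - s‖ := by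
  have hsub : ∀ t ∈ J, HasDerivWithinAt (fun t => f t - t • m) (f' t - m) J t := fun t ht => by
    simpa using (hf t ht).fun_sub ((hasDerivWithinAt_id t J).smul_const m)
  convert hJ.norm_image_sub_le_of_norm_hasDerivWithin_le hsub hC hs ht using 2
  rw [sub_smul]
  abel

theorem sub_eq_smul_of_hasDerivWithinAt_const {f : 𝕜 → F} {J : Set 𝕜} {m : F}
    (hJ : Convex ℝ J) (hf : ∀ t ∈ J, HasDerivWithinAt f m J t) {s t : 𝕜} (hs : s ∈ J)
    (ht : t ∈ J) : f t - f s = (t - s) • m := by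
  have hle := norm_sub_sub_smul_le_of_hasDerivWithinAt (m := m) (C := 0) hJ hf (by simp) hs ht
  rw [zero_mul] at hle
  exact sub_eq_zero.1 (norm_le_zero_iff.1 hle)

end MeanValue

section ContinuousPartials

theorem hasDerivAt_update_of_hasLineDerivAt {𝕜 ι F : Type*} [NontriviallyNormedField 𝕜]
    [DecidableEq ι] [NormedAddCommGroup F] [NormedSpace 𝕜 F] {f : (ι → 𝕜) → F} {f' : F}
    {x : ι → 𝕜} {i : ι} {b : 𝕜}
    (hf : HasLineDerivAt 𝕜 f f' (update x i b) (Pi.single i 1)) :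
    HasDerivAt (fun s => f (update x i s)) f' b := by
  have hline : ∀ s, update x i b + (s - b) • Pi.single i (1 : 𝕜) = update x i s := fun s => by
    ext j
    obtain rfl | hj := eq_or_ne j i <;> simp [*]
  have hzero : HasDerivAt (fun r : 𝕜 => f (update x i b + r • Pi.single i 1)) f' (b - b) := by
    rwa [sub_self]
  simpa only [hline] using hzero.comp_sub_const b b

variable {𝕜 ι F : Type*} [RCLike 𝕜] [Fintype ι] [DecidableEq ι] [NormedAddCommGroup F]
  [NormedSpace 𝕜 F] {f : (ι → 𝕜) → F} {f' : (ι → 𝕜) → ι → F}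

/- Pass from `z` to `y` by changing one coordinate at a time: every intermediate point stays in the
box, and each single change is controlled by the one-dimensional mean value inequality. -/
theorem norm_sub_sub_sum_smul_le_of_hasLineDerivAt {B : ι → Set 𝕜} {L : ι → F} {C : ℝ}
    (hB : ∀ i, Convex ℝ (B i))
    (hf : ∀ y ∈ univ.pi B, ∀ i, HasLineDerivAt 𝕜 f (f' y i) y (Pi.single i 1))
    (hC : ∀ y ∈ univ.pi B, ∀ i, ‖f' y i - L i‖ ≤ C) {y z : ι → 𝕜}
    (hy : y ∈ univ.pi B) (hz : z ∈ univ.pi B) :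
    ‖f y - f z - ∑ i, (y i - z i) • L i‖ ≤ C * ∑ i, ‖y i - z i‖ := by
  suffices hpartial : ∀ s : Finset ι,
      ‖f (s.piecewise y z) - f z - ∑ i ∈ s, (y i - z i) • L i‖ ≤ C * ∑ i ∈ s, ‖y i - z i‖ by
    simpa using hpartial Finset.univ
  intro s
  induction s using Finset.induction with
  | empty => simp
  | insert i s hi ih =>
    set w := s.piecewise y z
    have hwB : w ∈ univ.pi B := s.piecewise_mem_set_pi hy hz
    have hbox : ∀ b ∈ B i, update w i b ∈ univ.pi B := fun b hb =>
      (update_mem_pi_iff_of_mem hwB).2 fun _ => hb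
    have hwi : update w i (z i) = w := by
      rw [← Finset.piecewise_eq_of_notMem s y z hi, Function.update_eq_self]
    have hstep : ‖f (update w i (y i)) - f w - (y i - z i) • L i‖ ≤ C * ‖y i - z i‖ := by
      simpa only [hwi] using norm_sub_sub_smul_le_of_hasDerivWithinAt (hB i)
        (fun b hb =>
          (hasDerivAt_update_of_hasLineDerivAt (hf _ (hbox b hb) i)).hasDerivWithinAt)
        (fun b hb => hC _ (hbox b hb) i) (hz i (mem_univ i)) (hy i (mem_univ i))
    rw [Finset.piecewise_insert, Finset.sum_insert hi, Finset.sum_insert hi, mul_add]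
    calc ‖f (update w i (y i)) - f z - ((y i - z i) • L i + ∑ j ∈ s, (y j - z j) • L j)‖
        = ‖(f (update w i (y i)) - f w - (y i - z i) • L i)
            + (f w - f z - ∑ j ∈ s, (y j - z j) • L j)‖ := by congr 1; abel
      _ ≤ C * ‖y i - z i‖ + C * ∑ j ∈ s, ‖y j - z j‖ := norm_add_le_of_le hstep ih

theorem hasStrictFDerivAt_of_continuousAt_hasLineDerivAt {x : ι → 𝕜}
    (hf : ∀ᶠ y in 𝓝 x, ∀ i, HasLineDerivAt 𝕜 f (f' y i) y (Pi.single i 1))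
    (hf' : ContinuousAt f' x) :
    HasStrictFDerivAt f
      (∑ i, (ContinuousLinearMap.proj i : (ι → 𝕜) →L[𝕜] 𝕜).smulRight (f' x i)) x := by
  rw [hasStrictFDerivAt_iff_isLittleO, isLittleO_iff]
  intro ε hε
  set η := ε / (Fintype.card ι + 1) with hη
  have hηpos : 0 < η := by positivity
  have hclose : ∀ᶠ y in 𝓝 x, ∀ i, ‖f' y i - f' x i‖ ≤ η := by
    filter_upwards [hf'.eventually (Metric.closedBall_mem_nhds _ hηpos)] with y hy i
    exact (norm_le_pi_norm (f' y - f' x) i).trans (mem_closedBall_iff_norm.1 hy)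
  obtain ⟨δ, hδ, hball⟩ := Metric.eventually_nhds_iff_ball.1 (hf.and hclose)
  rw [ball_pi x hδ] at hball
  have hbox : univ.pi (fun i => Metric.ball (x i) δ) ∈ 𝓝 x := by
    rw [← ball_pi x hδ]
    exact Metric.ball_mem_nhds x hδ
  filter_upwards [prod_mem_nhds hbox hbox] with ⟨y, z⟩ ⟨hy, hz⟩
  have hsum : ∑ i, ‖y i - z i‖ ≤ Fintype.card ι * ‖y - z‖ := by
    simpa using Finset.sum_le_card_nsmul Finset.univ _ _ fun i _ => norm_le_pi_norm (y - z) i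
  calc _ = ‖f y - f z - ∑ i, (y i - z i) • f' x i‖ := by simp
    _ ≤ η * ∑ i, ‖y i - z i‖ :=
      norm_sub_sub_sum_smul_le_of_hasLineDerivAt (fun i => convex_ball _ _)
        (fun u hu => (hball u hu).1) (fun u hu => (hball u hu).2) hy hz
    _ ≤ η * ((Fintype.card ι + 1) * ‖y - z‖) := by gcongr; linarith [norm_nonneg (y - z)]
    _ = ε * ‖y - z‖ := by rw [hη]; field_simp

end ContinuousPartials

section HamiltonJacobi

theorem deriv_momentum_eq_deriv_energy_of_hamilton_jacobi {E P Λ G : Type*}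
    [NormedAddCommGroup E] [NormedSpace ℝ E] [NormedAddCommGroup P] [NormedSpace ℝ P]
    [NormedAddCommGroup Λ] [NormedSpace ℝ Λ] [NormedAddCommGroup G] [NormedSpace ℝ G]
    {H : E × P → G} {H' : E × P →L[ℝ] G} {A : P → G} {A' : P →L[ℝ] G}
    {c p : Λ → P} {c' p' : P} {q : E} {a v : Λ}
    (hH : HasFDerivAt H H' (q, c a + p a)) (hA : HasFDerivAt A A' (c a))
    (hc : HasLineDerivAt ℝ c c' a v) (hp : HasLineDerivAt ℝ p p' a v)
    (hHJ : ∀ᶠ b in 𝓝 a, H (q, c b + p b) = A (c b)) :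
    H' (0, c' + p') = A' c' := by
  have hleft : HasLineDerivAt ℝ (fun b => H (q, c b + p b)) (H' (0, c' + p')) a v :=
    hH.comp_hasDerivAt_of_eq 0 ((hasDerivAt_const 0 q).prodMk (hc.add hp)) (by simp)
  have hright : HasLineDerivAt ℝ (fun b => A (c b)) (A' c') a v :=
    hA.comp_hasDerivAt_of_eq 0 hc (by simp)
  exact hleft.unique (hright.congr_of_eventuallyEq hHJ)

variable {ι : Type*} [Fintype ι]

theorem hasDerivWithinAt_dotProduct_add_comp {γ : ℝ → ι → ℝ} {γ' ξ p' : ι → ℝ}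
    {w : (ι → ℝ) → ℝ} {J : Set ℝ} {t : ℝ} (hγ : HasDerivWithinAt γ γ' J t)
    (hw : HasFDerivAt w
      (∑ i, (ContinuousLinearMap.proj i : (ι → ℝ) →L[ℝ] ℝ).smulRight (p' i)) (γ t)) :
    HasDerivWithinAt (fun s => ξ ⬝ᵥ γ s + w (γ s)) ((ξ + p') ⬝ᵥ γ') J t := by
  have hlinear : HasDerivWithinAt (fun s => ξ ⬝ᵥ γ s) (ξ ⬝ᵥ γ') J t :=
    HasDerivWithinAt.fun_sum fun i _ => (hasDerivWithinAt_pi.1 hγ i).const_mul (ξ i)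
  have hcomp : HasDerivWithinAt (fun s => w (γ s)) (p' ⬝ᵥ γ') J t := by
    refine (hw.comp_hasDerivWithinAt t hγ).congr_deriv ?_
    simp [dotProduct, mul_comm]
  rw [add_dotProduct]
  exact hlinear.add hcomp

variable [DecidableEq ι]

theorem dotProduct_map_single {R : Type*} [CommSemiring R] (φ : (ι → R) →ₗ[R] R) (v : ι → R) :
    v ⬝ᵥ (fun i => φ (Pi.single i 1)) = φ v := by
  rw [dotProduct_comm]
  exact DFunLike.congr_fun ((dotProductEquiv R ι).apply_symm_apply φ) v

/- Here `p` plays the role of `∂S/∂q` and `w` that of `∂_v S`; equality of the mixed second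
derivatives becomes the requirement that `∂_v p` and `∂w/∂q` are the same field `p'`. -/
theorem hamilton_jacobi_orbit_identity_general {Λ : Type*} [NormedAddCommGroup Λ]
    [NormedSpace ℝ Λ] {H : (ι → ℝ) × (ι → ℝ) → ℝ} {A : (ι → ℝ) → ℝ} {A' : (ι → ℝ) →L[ℝ] ℝ}
    {c : Λ → ι → ℝ} {c' : ι → ℝ} {p : (ι → ℝ) → Λ → ι → ℝ} {w : (ι → ℝ) → ℝ}
    {p' : (ι → ℝ) → ι → ℝ} {a v : Λ} {γ : ℝ → ι → ℝ} {J : Set ℝ} (hJ : Convex ℝ J)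
    (hH : ∀ t ∈ J, DifferentiableAt ℝ H (γ t, c a + p (γ t) a))
    (hA : HasFDerivAt A A' (c a)) (hc : HasLineDerivAt ℝ c c' a v)
    (hp : ∀ t ∈ J, HasLineDerivAt ℝ (p (γ t)) (p' (γ t)) a v)
    (hw : ∀ t ∈ J, ∀ᶠ q in 𝓝 (γ t), ∀ k, HasLineDerivAt ℝ w (p' q k) q (Pi.single k 1))
    (hp' : ∀ t ∈ J, ContinuousAt p' (γ t))
    (hHJ : ∀ t ∈ J, ∀ᶠ b in 𝓝 a, H (γ t, c b + p (γ t) b) = A (c b))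
    (hγ : ∀ t ∈ J, HasDerivWithinAt γ
      (fun i => fderiv ℝ H (γ t, c a + p (γ t) a) (0, Pi.single i 1)) J t)
    {s t : ℝ} (hs : s ∈ J) (ht : t ∈ J) :
    (∑ k, c' k * (γ t k - γ s k - (t - s) * A' (Pi.single k 1))) + w (γ t) - w (γ s) = 0 := by
  have hspeed : ∀ r ∈ J, HasDerivWithinAt (fun r => c' ⬝ᵥ γ r + w (γ r)) (A' c') J r := by
    intro r hr
    convert hasDerivWithinAt_dotProduct_add_comp (hγ r hr)
      (hasStrictFDerivAt_of_continuousAt_hasLineDerivAt (hw r hr) (hp' r hr)).hasFDerivAt using 1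
    rw [← deriv_momentum_eq_deriv_energy_of_hamilton_jacobi (hH r hr).hasFDerivAt hA hc
      (hp r hr) (hHJ r hr)]
    exact (dotProduct_map_single
      ((fderiv ℝ H (γ r, c a + p (γ r) a)).toLinearMap ∘ₗ LinearMap.inr ℝ _ _) _).symm
  have hlinear : (c' ⬝ᵥ γ t + w (γ t)) - (c' ⬝ᵥ γ s + w (γ s)) = (t - s) * A' c' :=
    sub_eq_smul_of_hasDerivWithinAt_const hJ hspeed hs ht
  have hsum : ∑ k, c' k * (γ t k - γ s k - (t - s) * A' (Pi.single k 1)) =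
      c' ⬝ᵥ γ t - c' ⬝ᵥ γ s - (t - s) * A' c' := by
    have hA' : c' ⬝ᵥ (fun k => A' (Pi.single k 1)) = A' c' :=
      dotProduct_map_single A'.toLinearMap c'
    rw [← hA', ← smul_eq_mul, ← dotProduct_smul, ← dotProduct_sub, ← dotProduct_sub]
    rfl
  linarith

end HamiltonJacobi

/-- **Differentiating the Hamilton–Jacobi equation along an orbit.**
Let `H(q,p)` be `C¹`, `c : U → ℝⁿ` and `A : ℝⁿ → ℝ` differentiable, and `S(q,a)` a `C¹`
function (on `ℝⁿ × U`, `U` open) whose mixed second partial derivatives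
`∂²S/∂a_j∂q_k = T(·)_{jk} = ∂²S/∂q_k∂a_j` exist, are continuous, and are equal.
Assume the Hamilton–Jacobi equation `H (q, c a + ∂S/∂q (q,a)) = A (c a)` on `ℝⁿ × U`.
Fix `a ∈ U` and a `C¹` curve `γ` with `γ' t = ∂H/∂p (γ t, c a + ∂S/∂q (γ t, a))`.
Then for every `t` and `j`:
`Σ_k ∂c_k/∂a_j (a) (γ_k t − γ_k 0 − t ∂A/∂x_k (c a)) + ∂S/∂a_j (γ t, a) − ∂S/∂a_j (γ 0, a) = 0`. -/
theorem hamilton_jacobi_orbit_identity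
    (n : ℕ) (U : Set (Fin n → ℝ)) (hU : IsOpen U)
    (H : (Fin n → ℝ) × (Fin n → ℝ) → ℝ) (hH : ContDiff ℝ 1 H)
    (c : (Fin n → ℝ) → (Fin n → ℝ)) (hc : ∀ a ∈ U, DifferentiableAt ℝ c a)
    (A : (Fin n → ℝ) → ℝ) (hA : Differentiable ℝ A)
    (S : (Fin n → ℝ) × (Fin n → ℝ) → ℝ)
    (hS : ContDiffOn ℝ 1 S (Set.univ ×ˢ U))
    (T : (Fin n → ℝ) × (Fin n → ℝ) → Fin n → Fin n → ℝ)
    (hT_aq : ∀ (q : Fin n → ℝ), ∀ a ∈ U, ∀ (j k : Fin n),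
      HasDerivAt (fun s : ℝ => partialQ n S (q, a + s • (Pi.single j 1 : Fin n → ℝ)) k)
        (T (q, a) j k) 0)
    (hT_qa : ∀ (q : Fin n → ℝ), ∀ a ∈ U, ∀ (j k : Fin n),
      HasDerivAt (fun s : ℝ => partialA n S (q + s • (Pi.single k 1 : Fin n → ℝ), a) j)
        (T (q, a) j k) 0)
    (hT_cont : ∀ j k : Fin n,
      ContinuousOn (fun x : (Fin n → ℝ) × (Fin n → ℝ) => T x j k) (Set.univ ×ˢ U))
    (hHJ : ∀ (q : Fin n → ℝ), ∀ a ∈ U, H (q, c a + partialQ n S (q, a)) = A (c a))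
    (a : Fin n → ℝ) (ha : a ∈ U)
    (γ : ℝ → Fin n → ℝ)
    (hγ : ∀ t : ℝ, HasDerivAt γ
      (fun i => fderiv ℝ H (γ t, c a + partialQ n S (γ t, a)) (0, Pi.single i 1)) t) :
    ∀ (t : ℝ) (j : Fin n),
      (∑ k, fderiv ℝ c a (Pi.single j 1) k *
          (γ t k - γ 0 k - t * fderiv ℝ A (c a) (Pi.single k 1))) +
        partialA n S (γ t, a) j - partialA n S (γ 0, a) j = 0 := by
  intro t j
  simpa only [sub_zero] using hamilton_jacobi_orbit_identity_general
    (p := fun q b => partialQ n S (q, b)) (w := fun q => partialA n S (q, a) j)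
    (p' := fun q => T (q, a) j) convex_univ
    (fun t _ => hH.differentiable one_ne_zero _) (hA (c a)).hasFDerivAt
    ((hc a ha).hasFDerivAt.hasLineDerivAt (Pi.single j 1))
    (fun t _ => hasDerivAt_pi.2 (hT_aq (γ t) a ha j))
    (fun t _ => .of_forall fun q => hT_qa q a ha j)
    (fun t _ => continuousAt_pi.2 fun k =>
      ((hT_cont j k).comp_continuous (.prodMk_left a) fun q => ⟨mem_univ q, ha⟩).continuousAt)
    (fun t _ => (hU.eventually_mem ha).mono (hHJ (γ t)))
    (fun t _ => (hγ t).hasDerivWithinAt) (mem_univ 0) (mem_univ t)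
end
end

section
/- Let p : ℝⁿ → ℝⁿ be continuous and ℤⁿ-periodic, and suppose that for every C¹ loop γ : [0,1] → ℝⁿ with γ(0) = γ(1) one has ∫₀¹ ⟨p(γ(t)), γ'(t)⟩ dt = 0 (i.e. the 1-form p dq on 𝕋ⁿ is closed in the distribution sense). Then there exist a unique c ∈ ℝⁿ and a C¹ ℤⁿ-periodic function u : ℝⁿ → ℝ such that p(q) = c + ∇u(q) for all q ∈ ℝⁿ; moreover c = ∫_{[0,1]ⁿ} p(q) dq. -/
/-!
A continuous one-form with zero integral along every `C¹` loop has a primitive `S`: integrate it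
along segments issuing from `0`, and observe that the triangle `0 → a → b → 0` becomes a `C¹` loop
once each side is traversed with vanishing speed at its ends. When the form is `ℤⁿ`-periodic, every
increment `S (q + m) - S q` is independent of `q`, so subtracting from `S` the linear form `c` with
the same increments along the standard basis leaves a periodic function `u`. Finally `c` is the
mean of `p`, because a partial derivative of a periodic function has zero integral over the cube.
-/

open Function MeasureTheory Set
open scoped unitInterval

section SmoothReparam

theorem smoothTransition_mem_unitInterval (t : ℝ) : Real.smoothTransition t ∈ I :=
  ⟨Real.smoothTransition.nonneg t, Real.smoothTransition.le_one t⟩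

/-- The path `γ` traversed at the speed prescribed by `Real.smoothTransition`, which vanishes at
both ends. Unlike a general `C¹` path, it stays `C¹` when prolonged by constants to all of `ℝ`
(by `Path.extend`), so such paths can be concatenated within the class of `C¹` paths. -/
noncomputable def smoothReparam {X : Type*} [TopologicalSpace X] {a b : X} (γ : Path a b) :
    Path a b :=
  γ.reparam (fun t ↦ ⟨Real.smoothTransition t, smoothTransition_mem_unitInterval t⟩)
    (by fun_prop) (by simp) (by simp)

theorem extend_smoothReparam {X : Type*} [TopologicalSpace X] {a b : X} (γ : Path a b) :
    (smoothReparam γ).extend = γ.extend ∘ Real.smoothTransition := by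
  ext t
  rw [comp_apply, ← Real.smoothTransition.projIcc,
    Path.extend_apply γ (smoothTransition_mem_unitInterval _)]
  rfl

theorem extend_trans_eq_add_sub {E : Type*} [NormedAddCommGroup E] {a b c : E}
    (γ₁ : Path a b) (γ₂ : Path b c) (t : ℝ) :
    (γ₁.trans γ₂).extend t = γ₁.extend (2 * t) + γ₂.extend (2 * t - 1) - b := by
  rcases le_total t (1 / 2) with ht | ht
  · rw [Path.extend_trans_of_le_half _ _ ht, γ₂.extend_of_le_zero (by linarith),
      add_sub_cancel_right]
  · rw [Path.extend_trans_of_half_le _ _ ht, γ₁.extend_of_one_le (by linarith),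
      add_sub_cancel_left]

variable {E F : Type*} [NormedAddCommGroup E] [NormedSpace ℝ E] [NormedAddCommGroup F]
  [NormedSpace ℝ F] {a b c : E} {ω : E → E →L[ℝ] F}

theorem contDiff_extend_smoothReparam {γ : Path a b} (hγ : ContDiffOn ℝ 1 γ.extend I) :
    ContDiff ℝ 1 (smoothReparam γ).extend := by
  rw [extend_smoothReparam]
  exact hγ.comp_contDiff Real.smoothTransition.contDiff smoothTransition_mem_unitInterval

theorem deriv_extend_smoothReparam {γ : Path a b} (hγ : ContDiffOn ℝ 1 γ.extend I) (t : ℝ) :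
    deriv (smoothReparam γ).extend t =
      deriv Real.smoothTransition t • derivWithin γ.extend I (Real.smoothTransition t) := by
  have hφ : HasDerivAt Real.smoothTransition (deriv Real.smoothTransition t) t :=
    (Real.smoothTransition.contDiff.differentiable one_ne_zero t).hasDerivAt
  have hγt := (hγ.differentiableOn one_ne_zero _
    (smoothTransition_mem_unitInterval t)).hasDerivWithinAt
  rw [extend_smoothReparam]
  exact (hγt.scomp_hasDerivAt t hφ smoothTransition_mem_unitInterval).deriv

theorem curveIntegral_smoothReparam (hω : Continuous ω) {γ : Path a b}
    (hγ : ContDiffOn ℝ 1 γ.extend I) :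
    ∫ᶜ x in smoothReparam γ, ω x = ∫ᶜ x in γ, ω x := by
  have hcont : ContinuousOn (curveIntegralFun ω γ) I := by
    simp only [funext (curveIntegralFun_def ω γ)]
    exact (hω.comp γ.continuous_extend).continuousOn.clm_apply
      (hγ.continuousOn_derivWithin uniqueDiffOn_Icc_zero_one le_rfl)
  have hφ : ContDiff ℝ 1 Real.smoothTransition := Real.smoothTransition.contDiff
  calc ∫ᶜ x in smoothReparam γ, ω x
      = ∫ t in 0..1, deriv Real.smoothTransition t •
          curveIntegralFun ω γ (Real.smoothTransition t) := by
        simp only [curveIntegral_eq_intervalIntegral_deriv, deriv_extend_smoothReparam hγ, map_smul]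
        simp only [extend_smoothReparam, comp_apply, curveIntegralFun_def]
    _ = ∫ t in Real.smoothTransition 0..Real.smoothTransition 1, curveIntegralFun ω γ t :=
        intervalIntegral.integral_deriv_smul_comp'' hφ.continuous.continuousOn
          (fun t _ ↦ (hφ.differentiable one_ne_zero t).hasDerivAt.hasDerivWithinAt)
          (hφ.continuous_deriv le_rfl).continuousOn
          (hcont.mono (image_subset_iff.2 fun t _ ↦ smoothTransition_mem_unitInterval t))
    _ = ∫ᶜ x in γ, ω x := by simp [curveIntegral_def]

theorem contDiff_extend_trans {γ₁ : Path a b} {γ₂ : Path b c} (h₁ : ContDiff ℝ 1 γ₁.extend)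
    (h₂ : ContDiff ℝ 1 γ₂.extend) : ContDiff ℝ 1 (γ₁.trans γ₂).extend := by
  rw [funext (extend_trans_eq_add_sub γ₁ γ₂)]
  fun_prop

end SmoothReparam

section Primitive

variable {E F : Type*} [NormedAddCommGroup E] [NormedSpace ℝ E] [NormedAddCommGroup F]
  [NormedSpace ℝ F] {a b c : E} {ω : E → E →L[ℝ] F}

theorem curveIntegral_triangle_eq_zero (hω : Continuous ω)
    (hloop : ∀ γ : Path a a, ContDiff ℝ 1 γ.extend → ∫ᶜ x in γ, ω x = 0)
    {γ₁ : Path a b} {γ₂ : Path b c} {γ₃ : Path c a} (h₁ : ContDiffOn ℝ 1 γ₁.extend I)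
    (h₂ : ContDiffOn ℝ 1 γ₂.extend I) (h₃ : ContDiffOn ℝ 1 γ₃.extend I) :
    ∫ᶜ x in γ₁, ω x + ∫ᶜ x in γ₂, ω x + ∫ᶜ x in γ₃, ω x = 0 := by
  have hint {x y : E} {γ : Path x y} (hγ : ContDiffOn ℝ 1 γ.extend I) :
      CurveIntegrable ω (smoothReparam γ) :=
    hω.continuousOn.curveIntegrable_of_contDiffOn
      (contDiff_extend_smoothReparam hγ).contDiffOn fun _ ↦ mem_univ _
  rw [← curveIntegral_smoothReparam hω h₁, ← curveIntegral_smoothReparam hω h₂,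
    ← curveIntegral_smoothReparam hω h₃, ← curveIntegral_trans (hint h₁) (hint h₂),
    ← curveIntegral_trans ((hint h₁).trans (hint h₂)) (hint h₃)]
  exact hloop _ <| contDiff_extend_trans
    (contDiff_extend_trans (contDiff_extend_smoothReparam h₁) (contDiff_extend_smoothReparam h₂))
    (contDiff_extend_smoothReparam h₃)

theorem contDiffOn_extend_segment (a b : E) : ContDiffOn ℝ 1 (Path.segment a b).extend I :=
  (ContinuousAffineMap.lineMap a b : ℝ →ᴬ[ℝ] E).contDiff.contDiffOn.congr fun _ ht ↦
    Path.eqOn_extend_segment a b ht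

theorem exists_hasFDerivAt_of_curveIntegral_loop_eq_zero [CompleteSpace F] (hω : Continuous ω)
    (hloop : ∀ γ : Path a a, ContDiff ℝ 1 γ.extend → ∫ᶜ x in γ, ω x = 0) :
    ∃ S : E → F, ∀ x, HasFDerivAt S (ω x) x := by
  refine ⟨fun y ↦ ∫ᶜ z in .segment a y, ω z, fun x ↦ ?_⟩
  have hsub (y : E) : ∫ᶜ z in .segment a y, ω z =
      ∫ᶜ z in .segment a x, ω z + ∫ᶜ z in .segment x y, ω z := by
    have htri := curveIntegral_triangle_eq_zero hω hloop (contDiffOn_extend_segment a x)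
      (contDiffOn_extend_segment x y) (contDiffOn_extend_segment y a)
    rw [← Path.segment_symm a y, curveIntegral_symm, add_neg_eq_zero] at htri
    exact htri.symm
  rw [funext hsub]
  exact (HasFDerivAt.curveIntegral_segment_source hω).const_add _

end Primitive

section Periodic

theorem periodic_of_periodic_fderiv {E F : Type*} [NormedAddCommGroup E] [NormedSpace ℝ E]
    [NormedAddCommGroup F] [NormedSpace ℝ F] {f : E → F} {v : E} (hf : Differentiable ℝ f)
    (hf' : Periodic (fderiv ℝ f) v) (hv : f v = f 0) : Periodic f v := by
  have hderiv (x : E) : HasFDerivAt (fun y ↦ f (y + v) - f y) (0 : E →L[ℝ] F) x := by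
    have hshift := (hasFDerivAt_comp_add_right v).2 (hf (x + v)).hasFDerivAt
    simpa only [hf' x, sub_self] using hshift.fun_sub (hf x).hasFDerivAt
  intro x
  have hconst := is_const_of_fderiv_eq_zero (fun y ↦ (hderiv y).differentiableAt)
    (fun y ↦ (hderiv y).fderiv) x 0
  simpa [hv, sub_eq_zero] using hconst

theorem exists_periodic_eq_const_add_fderiv {ι E F : Type*} [Finite ι] [NormedAddCommGroup E]
    [NormedSpace ℝ E] [NormedAddCommGroup F] [NormedSpace ℝ F] (e : Module.Basis ι ℝ E)
    {ω : E → E →L[ℝ] F} (hω : Continuous ω) (hper : ∀ i, Periodic ω (e i))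
    {S : E → F} (hS : ∀ x, HasFDerivAt S (ω x) x) :
    ∃ (L : E →L[ℝ] F) (u : E → F), ContDiff ℝ 1 u ∧ (∀ i, Periodic u (e i)) ∧
      ∀ x, ω x = L + fderiv ℝ u x := by
  let L : E →L[ℝ] F := e.constrL fun i ↦ S (e i) - S 0
  have hu (x : E) : HasFDerivAt (fun y ↦ S y - L y) (ω x - L) x := (hS x).fun_sub L.hasFDerivAt
  have hu' : fderiv ℝ (fun y ↦ S y - L y) = fun x ↦ ω x - L := funext fun x ↦ (hu x).fderiv
  have hdiff : Differentiable ℝ fun y ↦ S y - L y := fun x ↦ (hu x).differentiableAt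
  refine ⟨L, fun y ↦ S y - L y, contDiff_one_iff_fderiv.2 ⟨hdiff, ?_⟩, fun i ↦ ?_, fun x ↦ ?_⟩
  · rw [hu']
    exact hω.sub continuous_const
  · refine periodic_of_periodic_fderiv hdiff ?_ ?_
    · rw [hu']
      exact fun x ↦ congrArg (· - L) (hper i x)
    · simp [L]
  · rw [hu', add_sub_cancel]

theorem forall_periodic_single_iff {ι R α : Type*} [Finite ι] [DecidableEq ι]
    [AddCommGroupWithOne R] {f : (ι → R) → α} :
    (∀ k, Periodic f (Pi.single k 1)) ↔
      ∀ (q : ι → R) (m : ι → ℤ), f (q + fun i ↦ (m i : R)) = f q := by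
  constructor
  · intro h q m
    have := Fintype.ofFinite ι
    have hm : (fun i ↦ (m i : R)) = ∑ k, m k • Pi.single k (1 : R) := by
      ext i
      simp [Finset.sum_apply, Pi.single_apply]
    rw [hm]
    exact Finset.sum_induction _ (Periodic f) (fun _ _ ↦ Periodic.add_period)
      (periodic_with_period_zero f) (fun k _ ↦ (h k).zsmul (m k)) q
  · intro h k q
    convert h q (Pi.single k 1) using 3
    ext i
    rcases eq_or_ne i k with rfl | hik <;> simp [*]

end Periodic

section Mean

variable {n : ℕ} {F : Type*} [NormedAddCommGroup F] [NormedSpace ℝ F]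

theorem integral_Icc_fderiv_single {a b : Fin (n + 1) → ℝ} (hab : a ≤ b)
    {f : (Fin (n + 1) → ℝ) → F} (hf : ContDiff ℝ 1 f) (k : Fin (n + 1)) :
    ∫ x in Icc a b, fderiv ℝ f x (Pi.single k 1) =
      (∫ x in Icc (a ∘ k.succAbove) (b ∘ k.succAbove), f (k.insertNth (b k) x)) -
        ∫ x in Icc (a ∘ k.succAbove) (b ∘ k.succAbove), f (k.insertNth (a k) x) := by
  let g : Fin (n + 1) → (Fin (n + 1) → ℝ) → F := Pi.single k f
  have hg (i : Fin (n + 1)) : ContDiff ℝ 1 (g i) := by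
    rcases eq_or_ne i k with rfl | hik
    · simpa [g] using hf
    · have hgi : g i = fun _ ↦ 0 := Pi.single_eq_of_ne (M := fun _ ↦ (Fin (n + 1) → ℝ) → F) hik f
      exact hgi ▸ contDiff_const
  have hdiv (x : Fin (n + 1) → ℝ) :
      ∑ i, fderiv ℝ (g i) x (Pi.single i 1) = fderiv ℝ f x (Pi.single k 1) := by
    rw [Fintype.sum_eq_single k fun i hik ↦ by simp [g, hik]]
    simp [g]
  have hint : Continuous fun x ↦ fderiv ℝ f x (Pi.single k 1) :=
    (hf.continuous_fderiv one_ne_zero).clm_apply continuous_const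
  have h := integral_divergence_of_hasFDerivAt_off_countable' a b hab g (fun i ↦ fderiv ℝ (g i)) ∅
    countable_empty (fun i ↦ (hg i).continuous.continuousOn)
    (fun x _ i ↦ ((hg i).differentiable one_ne_zero x).hasFDerivAt)
    (by simpa only [hdiv] using hint.integrableOn_Icc)
  simp only [hdiv] at h
  rw [h, Fintype.sum_eq_single k fun i hik ↦ by simp [g, hik]]
  simp [g]

theorem integral_Icc_fderiv_single_eq_zero_of_periodic {f : (Fin n → ℝ) → F}
    (hf : ContDiff ℝ 1 f) {k : Fin n} (hper : Periodic f (Pi.single k 1)) (a : Fin n → ℝ) :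
    ∫ x in Icc a (a + 1), fderiv ℝ f x (Pi.single k 1) = 0 := by
  obtain _ | n := n
  · exact k.elim0
  have hface (x : Fin n → ℝ) : f (k.insertNth ((a + 1) k) x) = f (k.insertNth (a k) x) := by
    rw [← hper (k.insertNth (a k) x)]
    congr 1
    ext j
    refine Fin.succAboveCases k ?_ (fun j ↦ ?_) j <;> simp [Fin.succAbove_ne]
  rw [integral_Icc_fderiv_single (le_add_of_nonneg_right zero_le_one) hf]
  simp only [hface, sub_self]

theorem integral_unitCube_eq_of_eq_const_add_gradient {p : (Fin n → ℝ) → Fin n → ℝ}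
    {c : Fin n → ℝ} {u : (Fin n → ℝ) → ℝ} (hu : ContDiff ℝ 1 u)
    (hper : ∀ k, Periodic u (Pi.single k 1))
    (h : ∀ q k, p q k = c k + fderiv ℝ u q (Pi.single k 1)) :
    ∫ q in univ.pi fun _ : Fin n ↦ Icc (0 : ℝ) 1, p q = c := by
  have hcube : (univ.pi fun _ : Fin n ↦ Icc (0 : ℝ) 1) = Icc 0 1 := pi_univ_Icc 0 1
  ext k
  have hzero : ∫ q in Icc 0 1, fderiv ℝ u q (Pi.single k 1) = 0 := by
    simpa only [zero_add] using integral_Icc_fderiv_single_eq_zero_of_periodic hu (hper k) 0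
  have hpart (i : Fin n) : Continuous fun q ↦ fderiv ℝ u q (Pi.single i 1) :=
    (hu.continuous_fderiv one_ne_zero).clm_apply continuous_const
  have hcoord (i : Fin n) : Continuous fun q ↦ p q i := by
    simp only [h]
    exact continuous_const.add (hpart i)
  calc (∫ q in univ.pi fun _ : Fin n ↦ Icc (0 : ℝ) 1, p q) k
      = ∫ q in Icc 0 1, p q k := by
        rw [hcube]
        exact eval_integral (fun i ↦ (hcoord i).integrableOn_Icc) k
    _ = (∫ _ in Icc (0 : Fin n → ℝ) 1, c k) +
          ∫ q in Icc 0 1, fderiv ℝ u q (Pi.single k 1) := by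
        simp only [h]
        exact integral_add continuous_const.integrableOn_Icc (hpart k).integrableOn_Icc
    _ = c k := by
        rw [hzero]
        simp [Measure.real, Real.volume_Icc_pi]

end Mean

theorem exists_periodic_eq_const_add_gradient {ι : Type*} [Fintype ι] [DecidableEq ι]
    {p : (ι → ℝ) → ι → ℝ} (hcont : Continuous p) (hper : ∀ k, Periodic p (Pi.single k 1))
    (hclosed : ∀ γ : ℝ → ι → ℝ, ContDiff ℝ 1 γ → γ 0 = γ 1 →
      ∫ t in (0 : ℝ)..1, ∑ i, p (γ t) i * deriv γ t i = 0) :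
    ∃ (c : ι → ℝ) (u : (ι → ℝ) → ℝ), ContDiff ℝ 1 u ∧ (∀ k, Periodic u (Pi.single k 1)) ∧
      ∀ q k, p q k = c k + fderiv ℝ u q (Pi.single k 1) := by
  let D : (ι → ℝ) →L[ℝ] (ι → ℝ) →L[ℝ] ℝ := (dotProductBilin ℝ ℝ).toContinuousBilinearMap
  have hD (v w : ι → ℝ) : D v w = ∑ i, v i * w i := rfl
  have hloop (γ : Path (0 : ι → ℝ) 0) (hγ : ContDiff ℝ 1 γ.extend) :
      ∫ᶜ q in γ, D (p q) = 0 := by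
    simpa only [curveIntegral_eq_intervalIntegral_deriv, hD] using hclosed γ.extend hγ (by simp)
  have hω : Continuous fun q ↦ D (p q) := D.continuous.comp hcont
  obtain ⟨S, hS⟩ := exists_hasFDerivAt_of_curveIntegral_loop_eq_zero hω hloop
  obtain ⟨L, u, hu, hu_per, hL⟩ := exists_periodic_eq_const_add_fderiv (Pi.basisFun ℝ ι) hω
    (fun k ↦ by simpa using (hper k).comp D) hS
  refine ⟨fun k ↦ L (Pi.single k 1), u, hu, by simpa using hu_per, fun q k ↦ ?_⟩
  simpa [hD, Pi.single_apply] using DFunLike.congr_fun (hL q) (Pi.single k 1)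

/-- **A closed continuous one-form on the torus is `c + du`.**
Let `p : ℝⁿ → ℝⁿ` be continuous and `ℤⁿ`-periodic, and suppose that the integral of the
`1`-form `p dq` along every `C¹` loop vanishes (i.e. `p dq` is closed on `𝕋ⁿ` in the
distribution sense).  Then there are a unique `c ∈ ℝⁿ` and a `C¹` `ℤⁿ`-periodic function
`u` with `p = c + ∇u`; moreover `c = ∫_{[0,1]ⁿ} p (q) dq`. -/
theorem closed_one_form_eq_const_add_gradient
    (n : ℕ) (p : (Fin n → ℝ) → (Fin n → ℝ))
    (hcont : Continuous p)
    (hper : ∀ (q : Fin n → ℝ) (m : Fin n → ℤ), p (q + fun i => (m i : ℝ)) = p q)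
    (hclosed : ∀ γ : ℝ → (Fin n → ℝ), ContDiff ℝ 1 γ → γ 0 = γ 1 →
      ∫ t in (0:ℝ)..1, ∑ i, p (γ t) i * deriv γ t i = 0) :
    ∃ c : Fin n → ℝ,
      (∃ u : (Fin n → ℝ) → ℝ, ContDiff ℝ 1 u ∧
        (∀ (q : Fin n → ℝ) (m : Fin n → ℤ), u (q + fun i => (m i : ℝ)) = u q) ∧
        ∀ (q : Fin n → ℝ) (k : Fin n), p q k = c k + fderiv ℝ u q (Pi.single k 1)) ∧
      (∀ c' : Fin n → ℝ,
        (∃ u' : (Fin n → ℝ) → ℝ, ContDiff ℝ 1 u' ∧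
          (∀ (q : Fin n → ℝ) (m : Fin n → ℤ), u' (q + fun i => (m i : ℝ)) = u' q) ∧
          ∀ (q : Fin n → ℝ) (k : Fin n),
            p q k = c' k + fderiv ℝ u' q (Pi.single k 1)) → c' = c) ∧
      c = ∫ q in Set.univ.pi fun _ : Fin n => Set.Icc (0:ℝ) 1, p q := by
  obtain ⟨c, u, hu, hu_per, h⟩ := exists_periodic_eq_const_add_gradient hcont
    (forall_periodic_single_iff.2 hper) hclosed
  have hmean := integral_unitCube_eq_of_eq_const_add_gradient hu hu_per h
  refine ⟨c, ⟨u, hu, forall_periodic_single_iff.1 hu_per, h⟩, ?_, hmean.symm⟩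
  rintro c' ⟨u', hu', hu'_per, h'⟩
  have hmean' := integral_unitCube_eq_of_eq_const_add_gradient hu'
    (forall_periodic_single_iff.2 hu'_per) h'
  exact hmean'.symm.trans hmean
end
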